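/- arXiv:0902.3419 — 2 statements merged into one kernel-verified Lean document; each statement's English description precedes it below -/
import Mathlib

section
/- Under the stated assumptions, the normalized random variable (Y_N − μ log N)/(σ √(log N)) converges in distribution, as N → ∞, to the standard normal distribution 𝒩(0,1); that is, for every real x, P(Y_N ≤ μ log N + x σ √(log N)) → (1/√(2π)) ∫_{−∞}^{x} e^{−t²/2} dt as N → ∞. -/
open scoped BigOperators ENNReal
open Filter Asymptotics

noncomputable section

/-- `af P m n` is the number of ordered `m`-tuples `(n₁,…,n_m)` of elements of `P`
with product `n` (so `af P 0 n = 1` iff `n = 1`). -/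
def af (P : Set ℕ) (m n : ℕ) : ℕ :=
  Nat.card {t : Fin m → ℕ // (∀ i, t i ∈ P) ∧ ∏ i, t i = n}

/-- `aTot P n = a(n) = Σ_{m ≥ 0} a_m(n)`. -/
def aTot (P : Set ℕ) (n : ℕ) : ℝ := ∑' m : ℕ, (af P m n : ℝ)

/-- `Acum P N = A(N) = Σ_{1 ≤ n ≤ N} a(n)`. -/
def Acum (P : Set ℕ) (N : ℕ) : ℝ := ∑ n ∈ Finset.Icc 1 N, aTot P n

/-- The Dirichlet series `𝒫(x) = Σ_{n ∈ 𝒫} n^{-x}` at a real point. -/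
def Pval (P : Set ℕ) (x : ℝ) : ℝ := ∑' n : P, ((n : ℕ) : ℝ) ^ (-x)

/-- `𝒫'(x) = -Σ_{n ∈ 𝒫} n^{-x} log n`. -/
def Pderiv1 (P : Set ℕ) (x : ℝ) : ℝ := -∑' n : P, ((n : ℕ) : ℝ) ^ (-x) * Real.log (n : ℕ)

/-- `𝒫''(x) = Σ_{n ∈ 𝒫} n^{-x} (log n)^2`. -/
def Pderiv2 (P : Set ℕ) (x : ℝ) : ℝ := ∑' n : P, ((n : ℕ) : ℝ) ^ (-x) * (Real.log (n : ℕ)) ^ 2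

/-- The abscissa of convergence `κ` of the Dirichlet series of `P`, as an extended real
(`⊥` when `P` is finite). -/
def kappa (P : Set ℕ) : EReal :=
  sInf {x : EReal | ∃ r : ℝ, x = (r : EReal) ∧ Summable (fun n : P => ((n : ℕ) : ℝ) ^ (-r))}

open Classical in
/-- The (possibly infinite) value `𝒫(x) ∈ (0,∞]` of the Dirichlet series at an
extended-real point; at `x = -∞` every term `n^{-x}` is infinite. -/
def PvalE (P : Set ℕ) (x : EReal) : ℝ≥0∞ :=
  if x = ⊥ then ⊤ else ∑' n : P, ENNReal.ofReal (((n : ℕ) : ℝ) ^ (-x.toReal))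

/-!
Choose a random element `p` of `P` with probability `p^{-ρ}`. Splitting off the first factor turns
the counting function of ordered factorizations into a renewal equation: `h(y) = e^{-ρy} A(e^y)`
satisfies `h(y) = e^{-ρy} + 𝔼 h(y - log p)` for `y ≥ 0`. By the renewal theorem `h` is asymptotic to
a positive function which is periodic under every `log p`: a constant if the `log p` generate a
dense group, and a function of period `d` if they generate `dℤ`. The same splitting shows that
factorizations with at least `k` factors are counted by `e^{ρy} 𝔼 h(y - S_k)`, where `S_k` is a sum
of `k` independent copies of `log p`. Since the periodic limit does not see shifts by `S_k`, the
proportion of factorizations up to `N` with at least `k` factors is asymptotically the probability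
that `S_k ≤ log N`, and the central limit theorem for `S_k` concludes.
-/

section ConvolutionEquation

open MeasureTheory Topology

variable {lam : Measure ℝ} [IsProbabilityMeasure lam] {D e : ℝ → ℝ} {α C K x₀ : ℝ}

lemma tendsto_sub_const_atTop (x : ℝ) : Tendsto (fun y : ℝ => y - x) atTop atTop :=
  tendsto_atTop_add_const_right atTop (-x) tendsto_id

lemma integrable_comp_const_sub (hDm : Measurable D) (hDC : ∀ y, |D y| ≤ C) (y : ℝ) :
    Integrable (fun x => D (y - x)) lam :=
  .of_bound (hDm.comp (by fun_prop)).aestronglyMeasurable C (.of_forall fun _ => hDC _)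

/- Since `|t| = 2 * max t 0 - t`, and the positive part of `D - α` is negligible near infinity,
the averages of `D - α` and of `-|D - α|` have the same limit. -/
lemma tendsto_integral_abs_sub {ι : Type*} {l : Filter ι} [l.IsCountablyGenerated] {Y : ι → ℝ}
    (hDm : Measurable D) (hDC : ∀ y, |D y| ≤ C) (hDα : ∀ ε > 0, ∀ᶠ y in atTop, D y < α + ε)
    (hY : Tendsto Y l atTop) (hDY : Tendsto (fun i => ∫ x, D (Y i - x) ∂lam) l (𝓝 α)) :
    Tendsto (fun i => ∫ x, |D (Y i - x) - α| ∂lam) l (𝓝 0) := by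
  have hC : 0 ≤ C := (abs_nonneg _).trans (hDC 0)
  have hpos_le : ∀ y, |max (D y - α) 0| ≤ C + |α| := fun y => by
    rw [abs_of_nonneg (le_max_right _ _)]
    exact max_le (by linarith [(abs_le.1 (hDC y)).2, neg_abs_le α]) (by positivity)
  have hpos_tendsto : Tendsto (fun y => max (D y - α) 0) atTop (𝓝 0) := by
    refine Metric.tendsto_nhds.2 fun ε hε => ?_
    filter_upwards [hDα ε hε] with y hy
    rw [Real.dist_0_eq_abs, abs_of_nonneg (le_max_right _ _)]
    exact max_lt (by linarith) hε
  have hpos_meas : Measurable fun y => max (D y - α) 0 := by fun_prop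
  have hpos_int : Tendsto (fun i => ∫ x, max (D (Y i - x) - α) 0 ∂lam) l (𝓝 0) := by
    simpa using tendsto_integral_filter_of_dominated_convergence (μ := lam) (f := fun _ => 0)
      (fun _ => C + |α|)
      (.of_forall fun i => (hpos_meas.comp (by fun_prop)).aestronglyMeasurable)
      (.of_forall fun i => .of_forall fun x => hpos_le (Y i - x)) (integrable_const _)
      (.of_forall fun x => hpos_tendsto.comp ((tendsto_sub_const_atTop x).comp hY))
  have habs : ∀ i, ∫ x, |D (Y i - x) - α| ∂lam =
      2 * ∫ x, max (D (Y i - x) - α) 0 ∂lam - (∫ x, D (Y i - x) ∂lam - α) := fun i => by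
    have hD := integrable_comp_const_sub (lam := lam) hDm hDC (Y i)
    have hdev : Integrable (fun x => D (Y i - x) - α) lam := hD.sub (integrable_const α)
    have hpos := integrable_comp_const_sub (lam := lam) hpos_meas hpos_le (Y i)
    calc ∫ x, |D (Y i - x) - α| ∂lam
        = ∫ x, (2 * max (D (Y i - x) - α) 0 - (D (Y i - x) - α)) ∂lam := by
          congr 1 with x
          rcases le_total (D (Y i - x) - α) 0 with h | h
          · rw [abs_of_nonpos h, max_eq_right h]; ring
          · rw [abs_of_nonneg h, max_eq_left h]; ring
      _ = _ := by
          rw [integral_sub (hpos.const_mul 2) hdev, integral_const_mul,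
            integral_sub hD (integrable_const α)]
          simp
  simpa [habs] using (hpos_int.const_mul 2).sub (hDY.sub_const α)

lemma tendsto_comp_sub_atom {ι : Type*} {l : Filter ι} [l.IsCountablyGenerated] {Y : ι → ℝ}
    (hDm : Measurable D) (hDC : ∀ y, |D y| ≤ C) (hDα : ∀ ε > 0, ∀ᶠ y in atTop, D y < α + ε)
    (hY : Tendsto Y l atTop) (hDY : Tendsto (fun i => ∫ x, D (Y i - x) ∂lam) l (𝓝 α))
    (hx₀ : 0 < lam.real {x₀}) :
    Tendsto (fun i => D (Y i - x₀)) l (𝓝 α) := by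
  have hatom : ∀ i, |D (Y i - x₀) - α| ≤ (∫ x, |D (Y i - x) - α| ∂lam) / lam.real {x₀} :=
    fun i => by
    have hint := integrable_comp_const_sub (lam := lam) hDm hDC (Y i)
    rw [le_div_iff₀' hx₀]
    simpa [integral_singleton, Measure.real] using setIntegral_le_integral (s := {x₀})
      (hint.sub (integrable_const α)).abs (.of_forall fun x => abs_nonneg _)
  refine tendsto_iff_norm_sub_tendsto_zero.2 (squeeze_zero (fun _ => norm_nonneg _) hatom ?_)
  simpa using (tendsto_integral_abs_sub hDm hDC hDα hY hDY).div_const (lam.real {x₀})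

lemma tendsto_comp_sub_mul_atom {l : Filter ℝ} [l.IsCountablyGenerated]
    (hDm : Measurable D) (hDC : ∀ y, |D y| ≤ C) (he : Tendsto e atTop (𝓝 0))
    (hD : ∀ y, D y = e y + ∫ x, D (y - x) ∂lam) (hx₀ : 0 < lam.real {x₀})
    (hDα : ∀ ε > 0, ∀ᶠ y in atTop, D y < α + ε) (hl : l ≤ atTop) (hDl : Tendsto D l (𝓝 α))
    (j : ℕ) : Tendsto (fun y => D (y - j * x₀)) l (𝓝 α) := by
  induction j with
  | zero => simpa using hDl
  | succ j ih =>
    have hY : Tendsto (fun y => y - j * x₀) l atTop := (tendsto_sub_const_atTop _).mono_left hl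
    have havg : Tendsto (fun y => ∫ x, D (y - j * x₀ - x) ∂lam) l (𝓝 α) := by
      simpa using (ih.sub (he.comp hY)).congr fun y => by
        rw [hD (y - j * x₀), Function.comp_apply, add_sub_cancel_left]
    refine (tendsto_comp_sub_atom hDm hDC hDα hY havg hx₀).congr fun y => ?_
    rw [Nat.cast_succ, add_one_mul, sub_sub]

/- Along a filter realizing the upper limit `α`, every translate of `D` by a multiple of the atom
`x₀` also tends to `α`, so the partial sums approach `J * α`. -/
lemma limsup_nonpos_of_sum_le (hDm : Measurable D) (hDC : ∀ y, |D y| ≤ C)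
    (he : Tendsto e atTop (𝓝 0)) (hD : ∀ y, D y = e y + ∫ x, D (y - x) ∂lam)
    (hx₀ : 0 < lam.real {x₀})
    (hK : ∀ (J : ℕ) (y : ℝ), ∑ j ∈ Finset.range J, D (y - j * x₀) ≤ K) :
    limsup D atTop ≤ 0 := by
  set α := limsup D atTop
  have hbdd : IsBoundedUnder (· ≤ ·) atTop D := isBoundedUnder_of ⟨C, fun y => (abs_le.1 (hDC y)).2⟩
  have hcobdd : IsCoboundedUnder (· ≤ ·) atTop D :=
    (isBoundedUnder_of ⟨-C, fun y => (abs_le.1 (hDC y)).1⟩).isCoboundedUnder_le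
  have hDα : ∀ ε > 0, ∀ᶠ y in atTop, D y < α + ε := fun ε hε =>
    eventually_lt_of_limsup_lt (lt_add_of_pos_right _ hε) hbdd
  have hcluster : MapClusterPt α atTop D := (isGreatest_mapClusterPt_limsup hcobdd hbdd).1
  have : NeBot (atTop ⊓ comap D (𝓝 α)) := neBot_inf_comap_iff_map.2 (inf_comm (𝓝 α) _ ▸ hcluster)
  have hsum : ∀ J : ℕ, J * α ≤ K := fun J => by
    have := tendsto_finsetSum (Finset.range J) fun j _ =>
      tendsto_comp_sub_mul_atom hDm hDC he hD hx₀ hDα inf_le_left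
        (tendsto_comap.mono_left inf_le_right) j
    simpa using le_of_tendsto' this (hK J)
  by_contra! hpos
  obtain ⟨J, hJ⟩ := exists_nat_gt (K / α)
  linarith [(div_lt_iff₀ hpos).1 hJ, hsum J]

theorem tendsto_zero_of_abs_sum_le (hDm : Measurable D) (hDC : ∀ y, |D y| ≤ C)
    (he : Tendsto e atTop (𝓝 0)) (hD : ∀ y, D y = e y + ∫ x, D (y - x) ∂lam)
    (hx₀ : 0 < lam.real {x₀})
    (hK : ∀ (J : ℕ) (y : ℝ), |∑ j ∈ Finset.range J, D (y - j * x₀)| ≤ K) :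
    Tendsto D atTop (𝓝 0) := by
  have hupper := limsup_nonpos_of_sum_le hDm hDC he hD hx₀ fun J y => (abs_le.1 (hK J y)).2
  have hlower := limsup_nonpos_of_sum_le (D := fun y => -D y) (e := fun y => -e y) hDm.neg
    (fun y => (abs_neg (D y)).trans_le (hDC y)) (by simpa using he.neg)
    (fun y => by rw [integral_neg, hD y, neg_add]) hx₀ (K := K) fun J y => by
      rw [Finset.sum_neg_distrib]
      exact neg_le.1 (abs_le.1 (hK J y)).1
  refine Metric.tendsto_nhds.2 fun ε hε => ?_
  filter_upwards [eventually_lt_of_limsup_lt (hupper.trans_lt hε)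
      (isBoundedUnder_of ⟨C, fun y => (abs_le.1 (hDC y)).2⟩),
    eventually_lt_of_limsup_lt (hlower.trans_lt hε)
      (isBoundedUnder_of ⟨C, fun y => neg_le.1 (abs_le.1 (hDC y)).1⟩)] with y h₁ h₂
  rw [Real.dist_0_eq_abs]
  exact abs_lt.2 ⟨by linarith, h₁⟩

end ConvolutionEquation

section RenewalEquation

open MeasureTheory Topology

/-- The forcing term `y ↦ e^{-ρy} 1_{y ≥ 0}` of the renewal equation below. -/
def expTail (ρ y : ℝ) : ℝ := (Set.Ici 0).indicator (fun y => Real.exp (-(ρ * y))) y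

/-- `h` is the solution of the renewal equation `h = expTail ρ + h * lam`, for a step law `lam` on
the positive half-line, that counts something with exponential growth rate `ρ`: `e^{ρy} h(y)` is a
monotone function vanishing for `y < 0`. -/
structure IsExpRenewal (lam : Measure ℝ) (ρ : ℝ) (h : ℝ → ℝ) : Prop where
  rate_pos : 0 < ρ
  ae_pos : ∀ᵐ x ∂lam, 0 < x
  eq_zero_of_neg : ∀ y < 0, h y = 0
  monotone_exp_mul : Monotone fun y => Real.exp (ρ * y) * h y
  eq_expTail_add_integral : ∀ y, h y = expTail ρ y + ∫ x, h (y - x) ∂lam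

variable {lam : Measure ℝ} {ρ C x₀ L : ℝ} {h : ℝ → ℝ}

lemma expTail_of_nonneg {y : ℝ} (hy : 0 ≤ y) : expTail ρ y = Real.exp (-(ρ * y)) :=
  Set.indicator_of_mem (Set.mem_Ici.2 hy) _

lemma expTail_of_neg {y : ℝ} (hy : y < 0) : expTail ρ y = 0 :=
  Set.indicator_of_notMem (by simpa using hy) _

lemma expTail_add {y δ : ℝ} (hy : 0 ≤ y) (hδ : 0 ≤ δ) :
    expTail ρ (y + δ) = Real.exp (-(ρ * δ)) * expTail ρ y := by
  rw [expTail_of_nonneg (add_nonneg hy hδ), expTail_of_nonneg hy, ← Real.exp_add, mul_add,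
    neg_add_rev]

lemma tendsto_exp_neg_mul_atTop (hρ : 0 < ρ) :
    Tendsto (fun y : ℝ => Real.exp (-(ρ * y))) atTop (𝓝 0) :=
  Real.tendsto_exp_atBot.comp (tendsto_neg_atTop_atBot.comp (tendsto_id.const_mul_atTop hρ))

lemma tendsto_expTail_atTop (hρ : 0 < ρ) : Tendsto (expTail ρ) atTop (𝓝 0) := by
  refine (tendsto_exp_neg_mul_atTop hρ).congr' ?_
  filter_upwards [eventually_ge_atTop 0] with y hy
  exact (expTail_of_nonneg hy).symm

lemma integral_exp_neg_mul (hρ : ρ ≠ 0) (L : ℝ) :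
    ∫ y in (0 : ℝ)..L, Real.exp (-(ρ * y)) = (1 - Real.exp (-(ρ * L))) / ρ := by
  simp_rw [← neg_mul]
  rw [intervalIntegral.integral_comp_mul_left (fun u => Real.exp u) (neg_ne_zero.2 hρ),
    integral_exp, mul_zero, Real.exp_zero, smul_eq_mul]
  field_simp
  ring

lemma pos_of_atom [IsFiniteMeasure lam] (hpos : ∀ᵐ x ∂lam, 0 < x) (hx₀ : 0 < lam.real {x₀}) :
    0 < x₀ := by
  by_contra! hle
  have hnull : lam {x₀} = 0 := measure_mono_null (Set.singleton_subset_iff.2 hle.not_gt) hpos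
  simp [Measure.real, hnull] at hx₀

lemma integral_id_pos [IsProbabilityMeasure lam] (hpos : ∀ᵐ x ∂lam, 0 < x)
    (hint : Integrable (fun x => x) lam) : 0 < ∫ x, x ∂lam := by
  refine lt_of_le_of_ne (integral_nonneg_of_ae (hpos.mono fun x hx => hx.le)) fun hzero => ?_
  have hae := (integral_eq_zero_iff_of_nonneg_ae (hpos.mono fun x hx => hx.le) hint).1 hzero.symm
  obtain ⟨x, hx, hx'⟩ := (hpos.and hae).exists
  exact hx.ne' hx'

namespace IsExpRenewal

lemma le_exp_mul (H : IsExpRenewal lam ρ h) {y z : ℝ} (hyz : y ≤ z) :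
    h y ≤ Real.exp (ρ * (z - y)) * h z := by
  refine le_of_mul_le_mul_left ?_ (Real.exp_pos (ρ * y))
  calc Real.exp (ρ * y) * h y ≤ Real.exp (ρ * z) * h z := H.monotone_exp_mul hyz
    _ = _ := by rw [← mul_assoc, ← Real.exp_add]; ring_nf

lemma nonneg (H : IsExpRenewal lam ρ h) (y : ℝ) : 0 ≤ h y := by
  have hlt : min y 0 - 1 < 0 := by linarith [min_le_right y 0]
  have hle : min y 0 - 1 ≤ y := by linarith [min_le_left y 0]
  have hexp := H.le_exp_mul hle
  rw [H.eq_zero_of_neg _ hlt] at hexp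
  exact nonneg_of_mul_nonneg_right hexp (Real.exp_pos _)

lemma eq_exp_neg_mul (h : ℝ → ℝ) (ρ : ℝ) :
    h = fun y => Real.exp (-(ρ * y)) * (Real.exp (ρ * y) * h y) := by
  ext y
  rw [← mul_assoc, ← Real.exp_add, neg_add_cancel, Real.exp_zero, one_mul]

lemma measurable (H : IsExpRenewal lam ρ h) : Measurable h := by
  rw [eq_exp_neg_mul h ρ]
  exact Measurable.mul (by fun_prop) H.monotone_exp_mul.measurable

lemma intervalIntegrable (H : IsExpRenewal lam ρ h) (a b : ℝ) :
    IntervalIntegrable h volume a b := by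
  rw [eq_exp_neg_mul h ρ]
  exact H.monotone_exp_mul.intervalIntegrable.continuousOn_mul (by fun_prop)

lemma abs_le_of_le (H : IsExpRenewal lam ρ h) {y : ℝ} (hyL : y ≤ L) :
    |h y| ≤ Real.exp (ρ * L) * h L := by
  rw [abs_of_nonneg (H.nonneg y)]
  rcases lt_or_ge y 0 with hy | hy
  · rw [H.eq_zero_of_neg y hy]
    exact mul_nonneg (Real.exp_pos _).le (H.nonneg L)
  · refine (H.le_exp_mul hyL).trans (mul_le_mul_of_nonneg_right ?_ (H.nonneg L))
    exact Real.exp_le_exp.2 (mul_le_mul_of_nonneg_left (by linarith) H.rate_pos.le)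

lemma integrable_comp_sub_prod [IsFiniteMeasure lam] (H : IsExpRenewal lam ρ h) (L : ℝ) :
    Integrable (fun z : ℝ × ℝ => h (z.1 - z.2)) ((volume.restrict (Set.Ioc 0 L)).prod lam) := by
  have hle : ∀ᵐ z ∂(volume.restrict (Set.Ioc 0 L)).prod lam, z.1 ≤ L :=
    Measure.quasiMeasurePreserving_fst.ae
      ((ae_restrict_mem measurableSet_Ioc).mono fun _ hy => hy.2)
  have hpos : ∀ᵐ z ∂(volume.restrict (Set.Ioc 0 L)).prod lam, 0 < z.2 :=
    Measure.quasiMeasurePreserving_snd.ae H.ae_pos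
  refine .of_bound (H.measurable.comp (by fun_prop)).aestronglyMeasurable
    (Real.exp (ρ * L) * h L) ?_
  filter_upwards [hle, hpos] with z hz hz'
  exact H.abs_le_of_le (by linarith)

lemma integral_comp_const_sub_eq (H : IsExpRenewal lam ρ h) (L : ℝ) {x : ℝ} (hx : 0 < x) :
    ∫ u in (0 : ℝ)..x, h (L - u) = (∫ y in (0 : ℝ)..L, h y) - ∫ y in (0 : ℝ)..L, h (y - x) := by
  have hneg : ∫ u in (-x)..0, h u = 0 :=
    intervalIntegral.integral_zero_ae <| by
      filter_upwards [Measure.ae_ne volume 0] with u hu hmem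
      rw [Set.uIoc_of_le (by linarith)] at hmem
      exact H.eq_zero_of_neg u (lt_of_le_of_ne hmem.2 hu)
  rw [intervalIntegral.integral_comp_sub_left, intervalIntegral.integral_comp_sub_right, sub_zero,
    zero_sub, ← intervalIntegral.integral_add_adjacent_intervals (H.intervalIntegrable (-x) 0)
      (H.intervalIntegrable 0 (L - x)), hneg, zero_add,
    intervalIntegral.integral_interval_sub_left (H.intervalIntegrable _ _)
      (H.intervalIntegrable _ _)]

lemma integrable_integral_comp_const_sub [IsFiniteMeasure lam] (H : IsExpRenewal lam ρ h)
    (hL : 0 ≤ L) : Integrable (fun x => ∫ u in (0 : ℝ)..x, h (L - u)) lam := by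
  have hint := (H.integrable_comp_sub_prod L).integral_prod_right
  simp_rw [← intervalIntegral.integral_of_le hL] at hint
  refine ((integrable_const (∫ y in (0 : ℝ)..L, h y)).sub hint).congr ?_
  filter_upwards [H.ae_pos] with x hx
  exact (H.integral_comp_const_sub_eq L hx).symm

/- Integrating the renewal equation over `[0, L]` and exchanging the integrals. -/
theorem integral_integral_comp_const_sub [IsProbabilityMeasure lam] (H : IsExpRenewal lam ρ h)
    (hL : 0 ≤ L) :
    ∫ x, (∫ u in (0 : ℝ)..x, h (L - u)) ∂lam = (1 - Real.exp (-(ρ * L))) / ρ := by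
  have hprod := H.integrable_comp_sub_prod L
  have hswap : ∫ x, (∫ y in (0 : ℝ)..L, h (y - x)) ∂lam =
      ∫ y in (0 : ℝ)..L, ∫ x, h (y - x) ∂lam := by
    simp_rw [intervalIntegral.integral_of_le hL]
    exact (integral_integral_swap hprod).symm
  have hright := hprod.integral_prod_right
  simp_rw [← intervalIntegral.integral_of_le hL] at hright
  calc ∫ x, (∫ u in (0 : ℝ)..x, h (L - u)) ∂lam
      = ∫ x, ((∫ y in (0 : ℝ)..L, h y) - ∫ y in (0 : ℝ)..L, h (y - x)) ∂lam := by
        refine integral_congr_ae ?_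
        filter_upwards [H.ae_pos] with x hx using H.integral_comp_const_sub_eq L hx
    _ = (∫ y in (0 : ℝ)..L, h y) - ∫ y in (0 : ℝ)..L, ∫ x, h (y - x) ∂lam := by
        rw [integral_sub (integrable_const _) hright, hswap]
        simp
    _ = ∫ y in (0 : ℝ)..L, (h y - ∫ x, h (y - x) ∂lam) := by
        refine (intervalIntegral.integral_sub (H.intervalIntegrable 0 L) ?_).symm
        rw [intervalIntegrable_iff_integrableOn_Ioc_of_le hL]
        exact hprod.integral_prod_left
    _ = ∫ y in (0 : ℝ)..L, Real.exp (-(ρ * y)) := by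
        refine intervalIntegral.integral_congr fun y hy => ?_
        rw [Set.uIcc_of_le hL] at hy
        rw [← expTail_of_nonneg hy.1, sub_eq_iff_eq_add]
        exact H.eq_expTail_add_integral y
    _ = _ := integral_exp_neg_mul H.rate_pos.ne' L

theorem exists_le [IsProbabilityMeasure lam] (H : IsExpRenewal lam ρ h)
    (hx₀ : 0 < lam.real {x₀}) : ∃ C, ∀ y, h y ≤ C := by
  have hρ := H.rate_pos
  have hx₀_pos := pos_of_atom H.ae_pos hx₀
  refine ⟨Real.exp (ρ * x₀) * (1 / ρ / lam.real {x₀} / x₀), fun y => ?_⟩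
  rcases lt_or_ge y 0 with hy | hy
  · rw [H.eq_zero_of_neg y hy]; positivity
  have hlower : x₀ * (Real.exp (-(ρ * x₀)) * h y) ≤ ∫ u in (0 : ℝ)..x₀, h (y + x₀ - u) := by
    have hint : IntervalIntegrable (fun u => h (y + x₀ - u)) volume 0 x₀ := by
      simpa using (H.intervalIntegrable (y + x₀) y).comp_sub_left (y + x₀)
    have hle : ∀ u ∈ Set.Icc 0 x₀, Real.exp (-(ρ * x₀)) * h y ≤ h (y + x₀ - u) := fun u hu => by
      rw [Real.exp_neg, inv_mul_le_iff₀ (Real.exp_pos _)]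
      refine (H.le_exp_mul (by linarith [hu.2] : y ≤ y + x₀ - u)).trans
        (mul_le_mul_of_nonneg_right (Real.exp_le_exp.2 ?_) (H.nonneg _))
      exact mul_le_mul_of_nonneg_left (by linarith [hu.1]) hρ.le
    simpa only [intervalIntegral.integral_const, sub_zero, smul_eq_mul] using
      intervalIntegral.integral_mono_on hx₀_pos.le intervalIntegrable_const hint hle
  have hupper : lam.real {x₀} * ∫ u in (0 : ℝ)..x₀, h (y + x₀ - u) ≤ 1 / ρ := by
    have hatom := setIntegral_le_integral (s := {x₀})
      (H.integrable_integral_comp_const_sub (add_nonneg hy hx₀_pos.le))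
      (H.ae_pos.mono fun x hx => intervalIntegral.integral_nonneg hx.le fun u _ => H.nonneg _)
    rw [integral_singleton, smul_eq_mul,
      H.integral_integral_comp_const_sub (add_nonneg hy hx₀_pos.le)] at hatom
    exact hatom.trans (div_le_div_of_nonneg_right (by linarith [Real.exp_pos (-(ρ * (y + x₀)))])
      hρ.le)
  rw [← inv_mul_le_iff₀ (Real.exp_pos _), ← Real.exp_neg, le_div_iff₀' hx₀_pos, le_div_iff₀' hx₀]
  exact (mul_le_mul_of_nonneg_left hlower hx₀.le).trans hupper

end IsExpRenewal

end RenewalEquation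

section Increments

open MeasureTheory Topology

/-- The group of periods of the renewal theorem, generated by the atoms of the step law. -/
def atomGroup (lam : Measure ℝ) : AddSubgroup ℝ := AddSubgroup.closure {x | 0 < lam.real {x}}

variable {lam : Measure ℝ} [IsProbabilityMeasure lam] {ρ x₀ : ℝ} {h : ℝ → ℝ}

namespace IsExpRenewal

lemma tendsto_increment_atom (H : IsExpRenewal lam ρ h) (hx₀ : 0 < lam.real {x₀}) :
    Tendsto (fun y => h (y - x₀) - h y) atTop (𝓝 0) := by
  obtain ⟨C, hC⟩ := H.exists_le hx₀
  have hm := H.measurable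
  have habs : ∀ y, |h y| ≤ C := fun y => (abs_of_nonneg (H.nonneg y)).trans_le (hC y)
  have hdiff : ∀ y z, |h y - h z| ≤ C := fun y z =>
    abs_sub_le_iff.2 ⟨by linarith [hC y, H.nonneg z], by linarith [hC z, H.nonneg y]⟩
  have htail : Tendsto (fun y => expTail ρ (y - x₀) - expTail ρ y) atTop (𝓝 0) := by
    simpa using ((tendsto_expTail_atTop H.rate_pos).comp (tendsto_sub_const_atTop x₀)).sub
      (tendsto_expTail_atTop H.rate_pos)
  refine tendsto_zero_of_abs_sum_le (by fun_prop) (fun y => hdiff _ _) htail (fun y => ?_) hx₀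
    (K := C) fun J y => ?_
  · simp_rw [sub_right_comm y _ x₀]
    rw [integral_sub (integrable_comp_const_sub hm habs _) (integrable_comp_const_sub hm habs _),
      H.eq_expTail_add_integral (y - x₀), H.eq_expTail_add_integral y]
    ring
  · have htelescope := Finset.sum_range_sub (fun j : ℕ => h (y - j * x₀)) J
    simp_rw [Nat.cast_succ, add_one_mul, ← sub_sub] at htelescope
    rw [htelescope]
    exact hdiff _ _

lemma tendsto_increment_of_mem_atomGroup (H : IsExpRenewal lam ρ h) {x : ℝ}
    (hx : x ∈ atomGroup lam) : Tendsto (fun y => h (y - x) - h y) atTop (𝓝 0) := by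
  induction hx using AddSubgroup.closure_induction with
  | mem x hx => exact H.tendsto_increment_atom hx
  | zero => simp
  | add a b _ _ ha hb =>
    simpa [Function.comp_def, sub_sub] using (hb.comp (tendsto_sub_const_atTop a)).add ha
  | neg a _ ha => simpa [Function.comp_def] using (ha.comp (tendsto_sub_const_atTop (-a))).neg

omit [IsProbabilityMeasure lam] in
lemma exists_sub_le_comp_sub {C : ℝ} (H : IsExpRenewal lam ρ h) (hC : ∀ y, h y ≤ C) {ε : ℝ}
    (hε : 0 < ε) : ∃ δ > 0, ∀ y, ∀ t ∈ Set.Icc 0 δ, h (y - t) - ε ≤ h y := by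
  have hcont : Tendsto (fun δ : ℝ => (Real.exp (ρ * δ) - 1) * C) (𝓝[>] 0) (𝓝 0) := by
    have : Continuous fun δ : ℝ => (Real.exp (ρ * δ) - 1) * C := by fun_prop
    simpa using (this.tendsto 0).mono_left nhdsWithin_le_nhds
  obtain ⟨δ, hδ, hδ_pos⟩ := ((hcont.eventually_lt_const hε).and self_mem_nhdsWithin).exists
  refine ⟨δ, hδ_pos, fun y t ht => ?_⟩
  have hle := H.le_exp_mul (sub_le_self y ht.1)
  rw [sub_sub_cancel] at hle
  have hexp : Real.exp (ρ * t) ≤ Real.exp (ρ * δ) :=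
    Real.exp_le_exp.2 (mul_le_mul_of_nonneg_left ht.2 H.rate_pos.le)
  have hone : 1 ≤ Real.exp (ρ * δ) :=
    Real.one_le_exp (mul_nonneg H.rate_pos.le (Set.mem_Ioi.1 hδ_pos).le)
  nlinarith [mul_le_mul_of_nonneg_right hexp (H.nonneg y),
    mul_le_mul_of_nonneg_left (hC y) (sub_nonneg.2 hone)]

lemma tendsto_increment_of_dense (H : IsExpRenewal lam ρ h) (hx₀ : 0 < lam.real {x₀})
    (hd : Dense (atomGroup lam : Set ℝ)) (u : ℝ) :
    Tendsto (fun y => h (y - u) - h y) atTop (𝓝 0) := by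
  obtain ⟨C, hC⟩ := H.exists_le hx₀
  refine Metric.tendsto_nhds.2 fun ε hε => ?_
  obtain ⟨δ, hδ, hmod⟩ := H.exists_sub_le_comp_sub hC (half_pos hε)
  obtain ⟨a, ha, hua⟩ := hd.exists_between (show u < u + δ by linarith)
  obtain ⟨b, hb, hub⟩ := hd.exists_between (show u - δ < u by linarith)
  filter_upwards [Metric.tendsto_nhds.1 (H.tendsto_increment_of_mem_atomGroup ha) _ (half_pos hε),
    Metric.tendsto_nhds.1 (H.tendsto_increment_of_mem_atomGroup hb) _ (half_pos hε)] with y hya hyb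
  rw [Real.dist_0_eq_abs, abs_lt] at *
  have hlower := hmod (y - u) (a - u) ⟨by linarith [hua.1], by linarith [hua.2]⟩
  have hupper := hmod (y - b) (u - b) ⟨by linarith [hub.2], by linarith [hub.1]⟩
  rw [sub_sub, add_sub_cancel] at hlower hupper
  constructor <;> linarith

end IsExpRenewal

end Increments

section RenewalTheorem

open MeasureTheory Topology

variable {lam : Measure ℝ} {ρ x₀ : ℝ} {h : ℝ → ℝ}

lemma intervalIntegrable_of_abs_le {f : ℝ → ℝ} {M : ℝ} (hf : Measurable f) (hM : ∀ u, |f u| ≤ M)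
    (a b : ℝ) : IntervalIntegrable f volume a b :=
  (intervalIntegrable_const (c := M)).mono_fun hf.aestronglyMeasurable
    (.of_forall fun u => (hM u).trans (le_abs_self M))

lemma norm_primitive_le {f : ℝ → ℝ} {M : ℝ} (hM : ∀ u, |f u| ≤ M) (x : ℝ) :
    ‖∫ u in (0 : ℝ)..x, f u‖ ≤ M * |x| := by
  simpa using intervalIntegral.norm_integral_le_of_norm_le_const (a := 0) (b := x) (f := f)
    fun u _ => hM u

lemma aestronglyMeasurable_primitive {f : ℝ → ℝ} {M : ℝ} (hf : Measurable f)
    (hM : ∀ u, |f u| ≤ M) : AEStronglyMeasurable (fun x => ∫ u in (0 : ℝ)..x, f u) lam :=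
  (intervalIntegral.continuous_primitive
    (intervalIntegrable_of_abs_le hf hM) 0).aestronglyMeasurable

lemma integrable_primitive {f : ℝ → ℝ} {M : ℝ} (hint : Integrable (fun x => x) lam)
    (hf : Measurable f) (hM : ∀ u, |f u| ≤ M) :
    Integrable (fun x => ∫ u in (0 : ℝ)..x, f u) lam :=
  (hint.abs.const_mul M).mono' (aestronglyMeasurable_primitive hf hM)
    (.of_forall (norm_primitive_le hM))

lemma tendsto_integral_primitive_zero {ι : Type*} {l : Filter ι} [l.IsCountablyGenerated]
    {F : ι → ℝ → ℝ} {M : ℝ} (hint : Integrable (fun x => x) lam) (hF : ∀ i, Measurable (F i))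
    (hM : ∀ i u, |F i u| ≤ M) (hlim : ∀ u, Tendsto (fun i => F i u) l (𝓝 0)) :
    Tendsto (fun i => ∫ x, (∫ u in (0 : ℝ)..x, F i u) ∂lam) l (𝓝 0) := by
  have hprimitive : ∀ x, Tendsto (fun i => ∫ u in (0 : ℝ)..x, F i u) l (𝓝 0) := fun x => by
    simpa using intervalIntegral.tendsto_integral_filter_of_dominated_convergence
      (μ := volume) (a := 0) (b := x) (f := fun _ => (0 : ℝ)) (fun _ => M)
      (.of_forall fun i => (hF i).aestronglyMeasurable)
      (.of_forall fun i => .of_forall fun u _ => hM i u) (by simp)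
      (.of_forall fun u _ => hlim u)
  simpa using tendsto_integral_filter_of_dominated_convergence (μ := lam)
    (f := fun _ => (0 : ℝ)) (fun x => M * |x|)
    (.of_forall fun i => aestronglyMeasurable_primitive (hF i) (hM i))
    (.of_forall fun i => .of_forall (norm_primitive_le (hM i))) (hint.abs.const_mul M)
    (.of_forall hprimitive)

lemma integral_primitive_pos [IsProbabilityMeasure lam] {w : ℝ → ℝ} {w₀ : ℝ}
    (hpos : ∀ᵐ x ∂lam, 0 < x) (hint : Integrable (fun x => x) lam) (hw : Measurable w)
    (hw₀ : 0 < w₀) (hmem : ∀ u, w u ∈ Set.Icc w₀ 1) :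
    0 < ∫ x, (∫ u in (0 : ℝ)..x, w u) ∂lam := by
  have habs : ∀ u, |w u| ≤ 1 := fun u => by
    rw [abs_of_pos (hw₀.trans_le (hmem u).1)]
    exact (hmem u).2
  calc 0 < w₀ * ∫ x, x ∂lam := mul_pos hw₀ (integral_id_pos hpos hint)
    _ = ∫ x, w₀ * x ∂lam := (integral_const_mul _ _).symm
    _ ≤ _ := by
      refine integral_mono_ae (hint.const_mul w₀) (integrable_primitive hint hw habs) ?_
      filter_upwards [hpos] with x hx
      simpa [mul_comm] using intervalIntegral.integral_mono_on hx.le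
        (intervalIntegrable_const (c := w₀)) (intervalIntegrable_of_abs_le hw habs 0 x)
        fun u _ => (hmem u).1

namespace IsExpRenewal

/- Replacing `h (L - u)` by `w u * h L` in `integral_integral_comp_const_sub` leaves
`h L * ∫∫ w → 1 / ρ`. -/
theorem exists_pos_tendsto [IsProbabilityMeasure lam] (H : IsExpRenewal lam ρ h)
    (hx₀ : 0 < lam.real {x₀}) (hint : Integrable (fun x => x) lam) {l : Filter ℝ}
    [l.IsCountablyGenerated] (hl : l ≤ atTop) {w : ℝ → ℝ} {w₀ : ℝ} (hw : Measurable w)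
    (hw₀ : 0 < w₀) (hmem : ∀ u, w u ∈ Set.Icc w₀ 1)
    (hlim : ∀ u, Tendsto (fun L => h (L - u) - w u * h L) l (𝓝 0)) :
    ∃ c > 0, Tendsto h l (𝓝 c) := by
  obtain ⟨C, hC⟩ := H.exists_le hx₀
  have hm := H.measurable
  have hw_abs : ∀ u, |w u| ≤ 1 := fun u => by
    rw [abs_of_pos (hw₀.trans_le (hmem u).1)]
    exact (hmem u).2
  have hdiff : ∀ L u, |h (L - u) - w u * h L| ≤ C := fun L u => by
    have hle : w u * h L ≤ C := (mul_le_of_le_one_left (H.nonneg L) (hmem u).2).trans (hC L)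
    have hnonneg : 0 ≤ w u * h L := mul_nonneg (hw₀.le.trans (hmem u).1) (H.nonneg L)
    exact abs_sub_le_iff.2 ⟨by linarith [hC (L - u)], by linarith [H.nonneg (L - u)]⟩
  set I := ∫ x, (∫ u in (0 : ℝ)..x, w u) ∂lam
  have hI : 0 < I := integral_primitive_pos H.ae_pos hint hw hw₀ hmem
  have hzero : Tendsto (fun L => ∫ x, (∫ u in (0 : ℝ)..x, (h (L - u) - w u * h L)) ∂lam) l (𝓝 0) :=
    tendsto_integral_primitive_zero hint (fun L => by fun_prop) hdiff hlim
  have hsplit : ∀ᶠ L in l, ∫ x, (∫ u in (0 : ℝ)..x, (h (L - u) - w u * h L)) ∂lam =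
      (1 - Real.exp (-(ρ * L))) / ρ - I * h L := by
    filter_upwards [hl (eventually_ge_atTop 0)] with L hL
    have hinner : ∀ x, ∫ u in (0 : ℝ)..x, (h (L - u) - w u * h L) =
        (∫ u in (0 : ℝ)..x, h (L - u)) - (∫ u in (0 : ℝ)..x, w u) * h L := fun x => by
      rw [intervalIntegral.integral_sub _
        ((intervalIntegrable_of_abs_le hw hw_abs 0 x).mul_const _),
        intervalIntegral.integral_mul_const]
      simpa using (H.intervalIntegrable L (L - x)).comp_sub_left L
    simp_rw [hinner]
    rw [integral_sub (H.integrable_integral_comp_const_sub hL)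
      ((integrable_primitive hint hw hw_abs).mul_const _), H.integral_integral_comp_const_sub hL,
      integral_mul_const]
  have hidentity : Tendsto (fun L => (1 - Real.exp (-(ρ * L))) / ρ) l (𝓝 (1 / ρ)) := by
    simpa using (((tendsto_exp_neg_mul_atTop H.rate_pos).const_sub 1).div_const ρ).mono_left hl
  refine ⟨1 / ρ / I, div_pos (one_div_pos.2 H.rate_pos) hI, ?_⟩
  rw [← sub_zero (1 / ρ)]
  refine ((hidentity.sub hzero).div_const I).congr' ?_
  filter_upwards [hsplit] with L hL
  rw [hL, sub_sub_cancel, mul_div_cancel_left₀ _ hI.ne']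

/- Both sides solve the same renewal equation on the lattice `d ℤ` and vanish on its negative
elements. -/
lemma apply_zsmul_add (H : IsExpRenewal lam ρ h) {d δ : ℝ} (hδ : δ ∈ Set.Ico 0 d)
    (hlattice : ∀ᵐ x ∂lam, x ∈ AddSubgroup.zmultiples d) (n : ℤ) :
    h (n • d + δ) = Real.exp (-(ρ * δ)) * h (n • d) := by
  have hd : 0 < d := hδ.1.trans_lt hδ.2
  suffices ∀ (m : ℕ) (n : ℤ), n < m → h (n • d + δ) = Real.exp (-(ρ * δ)) * h (n • d) from
    this (n.toNat + 1) n (by omega)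
  intro m
  induction m with
  | zero =>
    intro n hn
    have hle : (n : ℝ) * d ≤ -d := by
      have : (n : ℝ) ≤ -1 := by exact_mod_cast Int.le_sub_one_of_lt hn
      nlinarith
    rw [zsmul_eq_mul, H.eq_zero_of_neg _ (by linarith [hδ.2]),
      H.eq_zero_of_neg _ (by linarith), mul_zero]
  | succ m ih =>
    intro n hn
    rcases lt_or_ge n m with hnm | hnm
    · exact ih n hnm
    have hnd : 0 ≤ n • d := zsmul_nonneg hd.le (by omega)
    have hint : ∫ x, h (n • d + δ - x) ∂lam = ∫ x, Real.exp (-(ρ * δ)) * h (n • d - x) ∂lam := by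
      refine integral_congr_ae ?_
      filter_upwards [H.ae_pos, hlattice] with x hx hmem
      obtain ⟨k, rfl⟩ := AddSubgroup.mem_zmultiples_iff.1 hmem
      have hk : (0 : ℝ) < k := pos_of_mul_pos_left (by rwa [zsmul_eq_mul] at hx) hd.le
      rw [← sub_add_eq_add_sub, ← sub_smul]
      exact ih (n - k) (by have : 0 < k := by exact_mod_cast hk
                           omega)
    rw [H.eq_expTail_add_integral, H.eq_expTail_add_integral (n • d), hint, integral_const_mul,
      expTail_add hnd hδ.1, mul_add]

end IsExpRenewal

end RenewalTheorem

section RenewalTheorem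

open MeasureTheory Topology

/-- The conclusion of the renewal theorem: `h` is asymptotic to `c`, which is bounded away from `0`
and `∞` and is invariant under the translations by the atoms of the step law. -/
structure IsPeriodicLimit (lam : Measure ℝ) (h c : ℝ → ℝ) : Prop where
  measurable : Measurable c
  exists_mem_Icc : ∃ c₀ > 0, ∃ c₁, ∀ y, c y ∈ Set.Icc c₀ c₁
  periodic : ∀ x ∈ atomGroup lam, Function.Periodic c x
  tendsto_sub : Tendsto (fun y => h y - c y) atTop (𝓝 0)

variable {lam : Measure ℝ} {ρ x₀ : ℝ} {h : ℝ → ℝ}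

lemma exp_neg_mul_toIcoMod_mem (hρ : 0 < ρ) {d : ℝ} (hd : 0 < d) (y : ℝ) :
    Real.exp (-(ρ * toIcoMod hd 0 y)) ∈ Set.Icc (Real.exp (-(ρ * d))) 1 := by
  obtain ⟨h₀, hd'⟩ := toIcoMod_mem_Ico' hd y
  exact ⟨Real.exp_le_exp.2 (neg_le_neg (mul_le_mul_of_nonneg_left hd'.le hρ.le)),
    Real.exp_le_one_iff.2 (neg_nonpos.2 (mul_nonneg hρ.le h₀))⟩

lemma measurable_exp_neg_mul_toIcoMod {d : ℝ} (hd : 0 < d) :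
    Measurable fun y => Real.exp (-(ρ * toIcoMod hd 0 y)) := by
  simp_rw [toIcoMod_eq_fract_mul]
  fun_prop

lemma tendsto_zsmul_atTop {d : ℝ} (hd : 0 < d) : Tendsto (fun k : ℤ => k • d) atTop atTop := by
  simpa only [zsmul_eq_mul] using tendsto_intCast_atTop_atTop.atTop_mul_const hd

namespace IsExpRenewal

lemma apply_eq_exp_neg_mul_toIcoMod (H : IsExpRenewal lam ρ h) {d : ℝ} (hd : 0 < d)
    (hlattice : ∀ᵐ x ∂lam, x ∈ AddSubgroup.zmultiples d) (y : ℝ) :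
    h y = Real.exp (-(ρ * toIcoMod hd 0 y)) * h (toIcoDiv hd 0 y • d) := by
  rw [← H.apply_zsmul_add (toIcoMod_mem_Ico' hd y) hlattice, add_comm, toIcoMod_add_toIcoDiv_zsmul]

lemma exists_pos_tendsto_zsmul [IsProbabilityMeasure lam] (H : IsExpRenewal lam ρ h)
    (hx₀ : 0 < lam.real {x₀}) (hint : Integrable (fun x => x) lam) {d : ℝ} (hd : 0 < d)
    (hlattice : ∀ᵐ x ∂lam, x ∈ AddSubgroup.zmultiples d) (hgroup : d ∈ atomGroup lam) :
    ∃ c > 0, Tendsto (fun k : ℤ => h (k • d)) atTop (𝓝 c) := by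
  suffices ∀ u, Tendsto (fun k : ℤ => h (k • d - u) -
      Real.exp (-(ρ * toIcoMod hd 0 (-u))) * h (k • d)) atTop (𝓝 0) by
    obtain ⟨c, hc, hlim⟩ := H.exists_pos_tendsto hx₀ hint (tendsto_zsmul_atTop hd)
      (w := fun u => Real.exp (-(ρ * toIcoMod hd 0 (-u))))
      ((measurable_exp_neg_mul_toIcoMod hd).comp measurable_neg) (Real.exp_pos _)
      (fun u => exp_neg_mul_toIcoMod_mem H.rate_pos hd _) fun u => tendsto_map'_iff.2 (this u)
    exact ⟨c, hc, tendsto_map'_iff.1 hlim⟩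
  intro u
  have hincrement := ((H.tendsto_increment_of_mem_atomGroup
    (zsmul_mem hgroup (-toIcoDiv hd 0 (-u)))).comp (tendsto_zsmul_atTop hd)).const_mul
      (Real.exp (-(ρ * toIcoMod hd 0 (-u))))
  rw [mul_zero] at hincrement
  refine hincrement.congr fun k => ?_
  have hphase := H.apply_eq_exp_neg_mul_toIcoMod hd hlattice (-u + k • d)
  rw [toIcoMod_add_zsmul, toIcoDiv_add_zsmul] at hphase
  rw [Function.comp_apply, sub_eq_neg_add _ u, hphase, mul_sub, ← sub_smul, sub_neg_eq_add,
    add_comm k]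

theorem exists_isPeriodicLimit_of_lattice [IsProbabilityMeasure lam] (H : IsExpRenewal lam ρ h)
    (hatom : ∀ᵐ x ∂lam, 0 < lam.real {x}) (hint : Integrable (fun x => x) lam) {d : ℝ} (hd : 0 < d)
    (hgroup : atomGroup lam = AddSubgroup.zmultiples d) : ∃ c, IsPeriodicLimit lam h c := by
  obtain ⟨x₀, hx₀⟩ := hatom.exists
  have hρ := H.rate_pos
  have hlattice : ∀ᵐ x ∂lam, x ∈ AddSubgroup.zmultiples d :=
    hatom.mono fun x hx => hgroup ▸ AddSubgroup.subset_closure hx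
  obtain ⟨c, hc, hlim⟩ := H.exists_pos_tendsto_zsmul hx₀ hint hd hlattice
    (hgroup ▸ AddSubgroup.mem_zmultiples d)
  refine ⟨fun y => Real.exp (-(ρ * toIcoMod hd 0 y)) * c,
    (measurable_exp_neg_mul_toIcoMod hd).mul_const c,
    ⟨Real.exp (-(ρ * d)) * c, by positivity, 1 * c, fun y => ?_⟩, fun x hx y => ?_, ?_⟩
  · obtain ⟨hlower, hupper⟩ := exp_neg_mul_toIcoMod_mem hρ hd y
    exact ⟨mul_le_mul_of_nonneg_right hlower hc.le, mul_le_mul_of_nonneg_right hupper hc.le⟩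
  · rw [hgroup] at hx
    obtain ⟨k, rfl⟩ := AddSubgroup.mem_zmultiples_iff.1 hx
    simp only [toIcoMod_add_zsmul]
  · have hfloor : Tendsto (fun y => toIcoDiv hd 0 y) atTop atTop := by
      simp_rw [toIcoDiv_eq_floor, sub_zero]
      exact tendsto_floor_atTop.comp (tendsto_id.atTop_div_const hd)
    have hlim_floor : Tendsto (fun y => ‖h (toIcoDiv hd 0 y • d) - c‖) atTop (𝓝 0) := by
      simpa using ((hlim.comp hfloor).sub_const c).norm
    refine squeeze_zero_norm (fun y => ?_) hlim_floor
    rw [H.apply_eq_exp_neg_mul_toIcoMod hd hlattice y, ← mul_sub, norm_mul,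
      Real.norm_of_nonneg (Real.exp_pos _).le]
    exact mul_le_of_le_one_left (norm_nonneg _) (exp_neg_mul_toIcoMod_mem hρ hd y).2

/- If the atoms generate a dense group the limit is a constant; if they generate `d ℤ`, then `h`
decays like `e^{-ρy}` between consecutive lattice points. -/
theorem exists_isPeriodicLimit [IsProbabilityMeasure lam] (H : IsExpRenewal lam ρ h)
    (hatom : ∀ᵐ x ∂lam, 0 < lam.real {x}) (hint : Integrable (fun x => x) lam) :
    ∃ c, IsPeriodicLimit lam h c := by
  obtain ⟨x₀, hx₀⟩ := hatom.exists
  rcases (atomGroup lam).dense_or_cyclic with hdense | ⟨a, ha⟩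
  · obtain ⟨c, hc, hlim⟩ := H.exists_pos_tendsto hx₀ hint le_rfl (w := fun _ => 1)
      measurable_const one_pos (fun _ => ⟨le_rfl, le_rfl⟩)
      (by simpa using H.tendsto_increment_of_dense hx₀ hdense)
    exact ⟨fun _ => c, measurable_const, ⟨c, hc, c, fun _ => ⟨le_rfl, le_rfl⟩⟩,
      fun _ _ _ => rfl, by simpa using hlim.sub_const c⟩
  · rw [← AddSubgroup.zmultiples_eq_closure, ← zmultiples_abs] at ha
    refine H.exists_isPeriodicLimit_of_lattice hatom hint (abs_pos.2 ?_) ha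
    rintro rfl
    have hzero : x₀ ∈ atomGroup lam := AddSubgroup.subset_closure hx₀
    rw [ha, abs_zero, AddSubgroup.zmultiples_zero_eq_bot, AddSubgroup.mem_bot] at hzero
    exact (pos_of_atom H.ae_pos hx₀).ne' hzero

end IsExpRenewal

end RenewalTheorem

section IidSums

open MeasureTheory ProbabilityTheory Topology

variable {Ω : Type*} [MeasurableSpace Ω] {Q : Measure Ω} {lam : Measure ℝ}
  {X : ℕ → Ω → ℝ}

lemma ae_sum_mem_atomGroup (hlaw : ∀ i, HasLaw (X i) lam Q)
    (hatom : ∀ᵐ x ∂lam, 0 < lam.real {x}) (k : ℕ) :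
    ∀ᵐ ω ∂Q, ∑ i ∈ Finset.range k, X i ω ∈ atomGroup lam := by
  have hmem : ∀ᵐ ω ∂Q, ∀ i, X i ω ∈ atomGroup lam := ae_all_iff.2 fun i => by
    rw [← (hlaw i).map_eq] at hatom
    filter_upwards [ae_of_ae_map (hlaw i).aemeasurable hatom] with ω hω
    exact AddSubgroup.subset_closure ((hlaw i).map_eq ▸ hω)
  exact hmem.mono fun ω hω => sum_mem fun i _ => hω i

lemma integral_indicator_Ici_comp_sub {h c : ℝ → ℝ} (hc : IsPeriodicLimit lam h c) {S : Ω → ℝ}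
    (hS : Measurable S) (hmem : ∀ᵐ ω ∂Q, S ω ∈ atomGroup lam) (L : ℝ) :
    ∫ ω, (Set.Ici 0).indicator c (L - S ω) ∂Q = c L * Q.real {ω | 0 ≤ L - S ω} := by
  have hperiodic : ∀ᵐ ω ∂Q, (Set.Ici 0).indicator c (L - S ω) =
      {ω | 0 ≤ L - S ω}.indicator (fun _ => c L) ω := by
    filter_upwards [hmem] with ω hω
    rw [Set.indicator, Set.indicator, (hc.periodic _ hω).sub_eq]
    rfl
  rw [integral_congr_ae hperiodic,
    integral_indicator_const _ (measurableSet_le measurable_const (by fun_prop)), smul_eq_mul,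
    mul_comm]

lemma tendsto_div_of_tendsto_sub_mul_zero {ι : Type*} {l : Filter ι} {e d c p : ι → ℝ} {c₀ G : ℝ}
    (hc₀ : 0 < c₀) (hc : ∀ i, c₀ ≤ c i) (he : Tendsto (fun i => e i - c i * p i) l (𝓝 0))
    (hd : Tendsto (fun i => d i - c i) l (𝓝 0)) (hp : Tendsto p l (𝓝 G)) :
    Tendsto (fun i => e i / d i) l (𝓝 G) := by
  have hdiv {f : ι → ℝ} (hf : Tendsto f l (𝓝 0)) : Tendsto (fun i => f i / c i) l (𝓝 0) := by
    refine squeeze_zero_norm (fun i => ?_) (by simpa using hf.norm.div_const c₀)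
    rw [norm_div, Real.norm_of_nonneg (hc₀.le.trans (hc i))]
    exact div_le_div_of_nonneg_left (norm_nonneg _) hc₀ (hc i)
  have hratio := ((hdiv he).add hp).div ((hdiv hd).add_const 1) (by simp)
  simp only [zero_add, div_one] at hratio
  refine hratio.congr fun i => ?_
  have hci : c i ≠ 0 := (hc₀.trans_le (hc i)).ne'
  rw [Pi.div_apply, div_add' _ _ _ hci, div_add_one hci, div_div_div_cancel_right₀ hci]
  ring_nf

variable [IsProbabilityMeasure Q]

lemma tendsto_measureReal_le {Z : ℕ → Ω → ℝ} {ν : Measure ℝ} [IsProbabilityMeasure ν]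
    [NullSingletonClass ν] (hZ : TendstoInDistribution Z atTop id (fun _ => Q) ν) {τ : ℕ → ℝ}
    {τ₀ : ℝ} (hτ : Tendsto τ atTop (𝓝 τ₀)) :
    Tendsto (fun N => Q.real {ω | Z N ω ≤ τ N}) atTop (𝓝 (ν.real (Set.Iic τ₀))) := by
  have hshift := hZ.add_of_tendstoInMeasure_const (Y := fun N _ => -τ N) (c := -τ₀)
    (tendstoInMeasure_of_tendsto_ae (fun N => by fun_prop) (Eventually.of_forall fun _ => hτ.neg))
    (fun N => by fun_prop)
  have hpreimage (s : Set ℝ) (hs : MeasurableSet s) :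
      ν.map (fun z => id z + -τ₀) s = ν ((fun z => z - τ₀) ⁻¹' s) :=
    Measure.map_apply (by fun_prop) hs
  have hfrontier : ν.map (fun z => id z + -τ₀) (frontier (Set.Iic 0)) = 0 := by
    rw [frontier_Iic, hpreimage _ (measurableSet_singleton 0),
      show (fun z => z - τ₀) ⁻¹' {0} = {τ₀} by ext; simp [sub_eq_zero], measure_singleton]
  have hlim := (ENNReal.tendsto_toReal (measure_ne_top (ν.map fun z => id z + -τ₀) _)).comp
    (ProbabilityMeasure.tendsto_measure_of_null_frontier_of_tendsto' hshift.tendsto hfrontier)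
  simp only [ProbabilityMeasure.coe_mk, hpreimage _ measurableSet_Iic] at hlim
  convert hlim using 2 with N
  · rw [Function.comp_apply, Measure.map_apply_of_aemeasurable (hshift.forall_aemeasurable N)
      measurableSet_Iic, measureReal_def]
    simp [Set.preimage]
  · simp [measureReal_def]

lemma abs_integral_comp_le {φ : ℝ → ℝ} {C : ℝ} (hC : ∀ y, |φ y| ≤ C) (hneg : ∀ y < 0, φ y = 0)
    {Y ε : ℝ} (hY : 0 ≤ Y) (hfar : ∀ y ≥ Y, |φ y| ≤ ε) {U : Ω → ℝ} (hU : Measurable U) :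
    |∫ ω, φ (U ω) ∂Q| ≤ ε + C * (Q.real {ω | 0 ≤ U ω} - Q.real {ω | Y ≤ U ω}) := by
  have hmeas (y : ℝ) : MeasurableSet {ω | y ≤ U ω} := measurableSet_le measurable_const hU
  have hsubset : {ω | Y ≤ U ω} ⊆ {ω | 0 ≤ U ω} := fun _ => hY.trans
  set band : Set Ω := {ω | 0 ≤ U ω} \ {ω | Y ≤ U ω} with hband
  have hbandm : MeasurableSet band := (hmeas 0).diff (hmeas Y)
  have hε : 0 ≤ ε := (abs_nonneg _).trans (hfar Y le_rfl)
  have hbound (ω : Ω) : ‖φ (U ω)‖ ≤ ε + band.indicator (fun _ => C) ω := by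
    rw [Real.norm_eq_abs]
    by_cases hω : ω ∈ band
    · rw [Set.indicator_of_mem hω]
      exact (hC _).trans (le_add_of_nonneg_left hε)
    · rw [Set.indicator_of_notMem hω, add_zero]
      rcases lt_or_ge (U ω) 0 with h | h
      · rwa [hneg _ h, abs_zero]
      · exact hfar _ (not_lt.1 fun hlt => hω ⟨h, not_le.2 hlt⟩)
  calc |∫ ω, φ (U ω) ∂Q| ≤ ∫ ω, (ε + band.indicator (fun _ => C) ω) ∂Q :=
        norm_integral_le_of_norm_le
          ((integrable_const _).add ((integrable_const C).indicator hbandm)) (ae_of_all Q hbound)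
    _ = ε + C * (Q.real {ω | 0 ≤ U ω} - Q.real {ω | Y ≤ U ω}) := by
        rw [integral_add (integrable_const _) ((integrable_const C).indicator hbandm),
          integral_indicator_const _ hbandm, integral_const, probReal_univ, one_smul, smul_eq_mul,
          mul_comm, hband, measureReal_sdiff hsubset (hmeas Y)]

lemma tendsto_integral_comp_zero {φ : ℝ → ℝ} {C : ℝ} (hC : ∀ y, |φ y| ≤ C)
    (hneg : ∀ y < 0, φ y = 0) (hlim : Tendsto φ atTop (𝓝 0)) {U : ℕ → Ω → ℝ}
    (hU : ∀ N, Measurable (U N)) {G : ℝ}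
    (hG : ∀ Y, Tendsto (fun N => Q.real {ω | Y ≤ U N ω}) atTop (𝓝 G)) :
    Tendsto (fun N => ∫ ω, φ (U N ω) ∂Q) atTop (𝓝 0) := by
  rw [Metric.tendsto_nhds]
  intro ε hε
  obtain ⟨Y, hY⟩ := eventually_atTop.1 (Metric.tendsto_nhds.1 hlim (ε / 2) (half_pos hε))
  have hfar (y : ℝ) (hy : max Y 0 ≤ y) : |φ y| ≤ ε / 2 :=
    (Real.dist_0_eq_abs (φ y) ▸ hY y ((le_max_left _ _).trans hy)).le
  have hband := ((hG 0).sub (hG (max Y 0))).const_mul C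
  rw [sub_self, mul_zero] at hband
  filter_upwards [hband.eventually_lt_const (half_pos hε)] with N hN
  rw [Real.dist_0_eq_abs]
  linarith [abs_integral_comp_le (Q := Q) hC hneg (le_max_right Y 0) hfar (hU N)]

lemma integral_comp_sub_sum_succ [IsProbabilityMeasure lam] (hX : ∀ i, Measurable (X i))
    (hlaw : ∀ i, HasLaw (X i) lam Q) (hindep : iIndepFun X Q) {f : ℝ → ℝ} (hf : Measurable f)
    {C : ℝ} (hC : ∀ y, |f y| ≤ C) (k : ℕ) (y : ℝ) :
    ∫ ω, f (y - ∑ i ∈ Finset.range (k + 1), X i ω) ∂Q =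
      ∫ x, ∫ ω, f (y - x - ∑ i ∈ Finset.range k, X i ω) ∂Q ∂lam := by
  set S : Ω → ℝ := ∑ i ∈ Finset.range k, X i with hS
  have hSm : Measurable S := by fun_prop
  have := Measure.isProbabilityMeasure_map (μ := Q) hSm.aemeasurable
  have hjoint : HasLaw (fun ω => (S ω, X k ω)) ((Q.map S).prod lam) Q :=
    IndepFun.hasLaw_prod ⟨hSm.aemeasurable, rfl⟩ (hlaw k) (hindep.indepFun_sum_range_succ hX k)
  have hfm : Measurable fun z : ℝ × ℝ => f (y - z.2 - z.1) := by fun_prop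
  calc ∫ ω, f (y - ∑ i ∈ Finset.range (k + 1), X i ω) ∂Q
      = ∫ z, f (y - z.2 - z.1) ∂(Q.map S).prod lam := by
        rw [← hjoint.integral_comp hfm.aestronglyMeasurable]
        congr 1 with ω
        simp [hS, Finset.sum_range_succ, sub_sub, add_comm]
    _ = ∫ x, ∫ s, f (y - x - s) ∂Q.map S ∂lam :=
        integral_prod_symm _
          (Integrable.of_bound hfm.aestronglyMeasurable C (ae_of_all _ fun _ => hC _))
    _ = ∫ x, ∫ ω, f (y - x - ∑ i ∈ Finset.range k, X i ω) ∂Q ∂lam := by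
        congr 1 with x
        rw [integral_map hSm.aemeasurable (Measurable.aestronglyMeasurable (by fun_prop))]
        simp [hS]

lemma tendsto_measureReal_le_sub_sum (hlaw : ∀ i, HasLaw (X i) lam Q) (hindep : iIndepFun X Q)
    (hLp : MemLp id 2 lam) (hvar : 0 < Var[id; lam]) {k : ℕ → ℕ} (hk : Tendsto k atTop atTop)
    {L : ℕ → ℝ} {τ₀ : ℝ}
    (hτ : Tendsto (fun N => (√(k N))⁻¹ * (L N - k N * ∫ x, x ∂lam)) atTop (𝓝 τ₀)) (Y : ℝ) :
    Tendsto (fun N => Q.real {ω | Y ≤ L N - ∑ i ∈ Finset.range (k N), X i ω}) atTop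
      (𝓝 ((gaussianReal 0 Var[id; lam].toNNReal).real (Set.Iic τ₀))) := by
  have hident (i : ℕ) : IdentDistrib (X i) (X 0) Q Q := (hlaw i).identDistrib (hlaw 0)
  have := nullSingletonClass_gaussianReal (μ := 0) (Real.toNNReal_pos.2 hvar).ne'
  have hmean : Q[X 0] = ∫ x, x ∂lam := (hlaw 0).integral_eq
  have hLp₀ : MemLp (X 0) 2 Q := ((hlaw 0).identDistrib HasLaw.id).memLp_iff.2 hLp
  have hclt := tendstoInDistribution_inv_sqrt_mul_sum_sub (Y := id)
    (P' := gaussianReal 0 Var[id; lam].toNNReal) ((hlaw 0).variance_eq ▸ HasLaw.id) hLp₀ hindep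
    hident
  have hclt_k : TendstoInDistribution (fun N ω => (√(k N))⁻¹ *
      (∑ i ∈ Finset.range (k N), X i ω - k N * Q[X 0])) atTop id (fun _ => Q)
      (gaussianReal 0 Var[id; lam].toNNReal) :=
    ⟨fun N => hclt.forall_aemeasurable (k N), by fun_prop, hclt.tendsto.comp hk⟩
  have hsqrt : Tendsto (fun N => (√(k N))⁻¹) atTop (𝓝 0) :=
    tendsto_inv_atTop_zero.comp (Real.tendsto_sqrt_atTop.comp (tendsto_natCast_atTop_atTop.comp hk))
  have hτY := hτ.sub (hsqrt.mul_const Y)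
  rw [zero_mul, sub_zero] at hτY
  refine (tendsto_measureReal_le hclt_k hτY).congr' ?_
  filter_upwards [hk.eventually_gt_atTop 0] with N hN
  have hpos : 0 < (√(k N))⁻¹ := inv_pos.2 (Real.sqrt_pos.2 (Nat.cast_pos.2 hN))
  congr 1 with ω
  rw [Set.mem_ofPred_eq, Set.mem_ofPred_eq, ← mul_sub, mul_le_mul_iff_right₀ hpos, hmean]
  constructor <;> intro h <;> linarith

/- With `U = L - S`, the quantity `h U` vanishes for `U < 0` and is close to `c U = c L` for large
`U`; the intermediate range is negligible because the law of `S` spreads out. -/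
theorem IsExpRenewal.tendsto_integral_div {ρ C : ℝ} {h c : ℝ → ℝ} (H : IsExpRenewal lam ρ h)
    (hC : ∀ y, h y ≤ C) (hc : IsPeriodicLimit lam h c) {S : ℕ → Ω → ℝ} (hS : ∀ N, Measurable (S N))
    (hmem : ∀ N, ∀ᵐ ω ∂Q, S N ω ∈ atomGroup lam) {L : ℕ → ℝ} (hL : Tendsto L atTop atTop) {G : ℝ}
    (hG : ∀ Y, Tendsto (fun N => Q.real {ω | Y ≤ L N - S N ω}) atTop (𝓝 G)) :
    Tendsto (fun N => (∫ ω, h (L N - S N ω) ∂Q) / h (L N)) atTop (𝓝 G) := by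
  obtain ⟨c₀, hc₀, c₁, hcmem⟩ := hc.exists_mem_Icc
  set φ : ℝ → ℝ := fun y => h y - (Set.Ici 0).indicator c y with hφ
  have hφneg (y : ℝ) (hy : y < 0) : φ y = 0 := by
    simp only [hφ, H.eq_zero_of_neg y hy, Set.indicator_of_notMem (mt Set.mem_Ici.1 hy.not_ge),
      sub_zero]
  have hφnonneg (y : ℝ) (hy : 0 ≤ y) : φ y = h y - c y := by
    simp only [hφ, Set.indicator_of_mem (Set.mem_Ici.2 hy)]
  have hφle (y : ℝ) : |φ y| ≤ C + c₁ := by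
    rcases lt_or_ge y 0 with hy | hy
    · rw [hφneg y hy, abs_zero]
      linarith [H.nonneg 0, hC 0, (hcmem 0).1, (hcmem 0).2]
    · rw [hφnonneg y hy, abs_le]
      constructor <;> linarith [H.nonneg y, hC y, (hcmem y).1, (hcmem y).2]
  have hφlim : Tendsto φ atTop (𝓝 0) := hc.tendsto_sub.congr' <|
    (eventually_ge_atTop 0).mono fun y hy => (hφnonneg y hy).symm
  have hU (N : ℕ) : Measurable fun ω => L N - S N ω := by fun_prop
  refine tendsto_div_of_tendsto_sub_mul_zero hc₀ (fun N => (hcmem (L N)).1) ?_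
    (hc.tendsto_sub.comp hL) (hG 0)
  refine (tendsto_integral_comp_zero hφle hφneg hφlim hU hG).congr fun N => ?_
  have hint_h : Integrable (fun ω => h (L N - S N ω)) Q :=
    Integrable.of_bound (H.measurable.comp (hU N)).aestronglyMeasurable C
      (ae_of_all _ fun ω => (Real.norm_of_nonneg (H.nonneg _)).trans_le (hC _))
  have hint_c : Integrable (fun ω => (Set.Ici 0).indicator c (L N - S N ω)) Q :=
    Integrable.of_bound
      ((hc.measurable.indicator measurableSet_Ici).comp (hU N)).aestronglyMeasurable c₁
      (ae_of_all _ fun ω => (norm_indicator_le_norm_self _ _).trans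
        ((Real.norm_of_nonneg (hc₀.le.trans (hcmem _).1)).trans_le (hcmem _).2))
  rw [hφ, integral_sub hint_h hint_c, integral_indicator_Ici_comp_sub hc (hS N) (hmem N)]

end IidSums

section Counting

open ArithmeticFunction

variable {P : Set ℕ} {k m n M : ℕ}

open Classical in
/-- The indicator function of `P` as an arithmetic function. Its `m`-th power for Dirichlet
convolution counts the ordered factorizations with `m` factors in `P`. -/
def setIndicator (P : Set ℕ) : ArithmeticFunction ℕ where
  toFun n := if n ∈ P ∧ n ≠ 0 then 1 else 0
  map_zero' := by simp

lemma setIndicator_apply [DecidablePred (· ∈ P)] (hn : n ≠ 0) :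
    setIndicator P n = if n ∈ P then 1 else 0 := by
  simp [setIndicator, hn]

lemma finite_orderedFactorizations (P : Set ℕ) (m : ℕ) (hn : n ≠ 0) :
    Finite {t : Fin m → ℕ // (∀ i, t i ∈ P) ∧ ∏ i, t i = n} := by
  have hsub : {t : Fin m → ℕ | (∀ i, t i ∈ P) ∧ ∏ i, t i = n} ⊆ Set.Iic fun _ => n := by
    rintro t ⟨-, rfl⟩ i
    exact Nat.le_of_dvd (Nat.pos_of_ne_zero hn) (Finset.dvd_prod_of_mem t (Finset.mem_univ i))
  exact ((Set.finite_Iic _).subset hsub).to_subtype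

lemma af_zero (P : Set ℕ) (n : ℕ) : af P 0 n = if n = 1 then 1 else 0 := by
  by_cases hn : n = 1
  · simp [af, hn]
  · simp [af, hn, Ne.symm hn]

open Classical in
/-- Split off the first factor. -/
def orderedFactorizationsSuccEquiv (P : Set ℕ) (m : ℕ) (hn : n ≠ 0) :
    {t : Fin (m + 1) → ℕ // (∀ i, t i ∈ P) ∧ ∏ i, t i = n} ≃
      Σ d : {d // d ∈ n.divisorsAntidiagonal.filter (·.1 ∈ P)},
        {t : Fin m → ℕ // (∀ i, t i ∈ P) ∧ ∏ i, t i = d.1.2} where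
  toFun t := ⟨⟨(t.1 0, ∏ i, Fin.tail t.1 i), by
      simpa [hn, Fin.tail, ← Fin.prod_univ_succ, t.2.2] using t.2.1 0⟩,
    ⟨Fin.tail t.1, fun i => t.2.1 i.succ, rfl⟩⟩
  invFun s := ⟨Fin.cons s.1.1.1 s.2.1, by
    obtain ⟨hd, hdP⟩ := Finset.mem_filter.1 s.1.2
    refine ⟨Fin.cases hdP s.2.2.1, ?_⟩
    simpa [Fin.prod_univ_succ, s.2.2.2] using (Nat.mem_divisorsAntidiagonal.1 hd).1⟩
  left_inv t := Subtype.ext (Fin.cons_self_tail t.1)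
  right_inv := by
    rintro ⟨⟨⟨p, q⟩, hpq⟩, t, ht, htq⟩
    change ∏ i, t i = q at htq
    subst htq
    rfl

lemma af_eq_setIndicator_pow (P : Set ℕ) (m : ℕ) (hn : n ≠ 0) :
    af P m n = (setIndicator P ^ m) n := by
  classical
  induction m generalizing n with
  | zero => rw [af_zero, pow_zero, one_apply]
  | succ m ih =>
    have hfin (d : {d // d ∈ n.divisorsAntidiagonal.filter (·.1 ∈ P)}) :=
      finite_orderedFactorizations P m
        (Nat.ne_zero_of_mem_divisorsAntidiagonal (Finset.mem_of_mem_filter _ d.2)).2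
    calc af P (m + 1) n
        = ∑ d ∈ n.divisorsAntidiagonal with d.1 ∈ P, af P m d.2 := by
          rw [af, Nat.card_congr (orderedFactorizationsSuccEquiv P m hn), Nat.card_sigma]
          exact Finset.sum_coe_sort _ fun d : ℕ × ℕ => af P m d.2
      _ = (setIndicator P ^ (m + 1)) n := by
          rw [pow_succ', mul_apply, Finset.sum_filter]
          refine Finset.sum_congr rfl fun d hd => ?_
          have hd0 := Nat.ne_zero_of_mem_divisorsAntidiagonal hd
          rw [ih hd0.2, setIndicator_apply hd0.1, ite_mul, one_mul, zero_mul]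

/-- The number of ordered factorizations with `m` factors in `P` of the positive integers up to
`M`. -/
def factorizationCount (P : Set ℕ) (m M : ℕ) : ℕ := ∑ n ∈ Finset.Icc 1 M, af P m n

lemma factorizationCount_eq_sum_pow (P : Set ℕ) (m M : ℕ) :
    factorizationCount P m M = ∑ n ∈ Finset.Ioc 0 M, (setIndicator P ^ m) n :=
  Finset.sum_congr rfl fun _ hn =>
    af_eq_setIndicator_pow P m (Nat.one_le_iff_ne_zero.1 (Finset.mem_Icc.1 hn).1)

lemma factorizationCount_zero_left (P : Set ℕ) (M : ℕ) :
    factorizationCount P 0 M = if 1 ≤ M then 1 else 0 := by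
  simp [factorizationCount, af_zero]

lemma factorizationCount_zero_right (P : Set ℕ) (m : ℕ) : factorizationCount P m 0 = 0 := by
  simp [factorizationCount]

lemma factorizationCount_mono (P : Set ℕ) (m : ℕ) : Monotone (factorizationCount P m) :=
  fun _ _ hab => Finset.sum_le_sum_of_subset (Finset.Icc_subset_Icc_right hab)

open Classical in
lemma factorizationCount_succ (P : Set ℕ) (m M : ℕ) :
    factorizationCount P (m + 1) M =
      ∑ p ∈ Finset.Ioc 0 M with p ∈ P, factorizationCount P m (M / p) := by
  simp only [factorizationCount_eq_sum_pow, pow_succ', sum_Ioc_mul_eq_sum_sum, Finset.sum_filter]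
  refine Finset.sum_congr rfl fun p hp => ?_
  rw [setIndicator_apply (Finset.mem_Ioc.1 hp).1.ne', ite_mul, one_mul, zero_mul]

lemma factorizationCount_eq_zero_of_le (hP : ∀ n ∈ P, 2 ≤ n) (h : M ≤ m) :
    factorizationCount P m M = 0 := by
  classical
  induction m generalizing M with
  | zero => rw [Nat.le_zero.1 h, factorizationCount_zero_right]
  | succ m ih =>
    rw [factorizationCount_succ]
    refine Finset.sum_eq_zero fun p hp => ih ?_
    obtain ⟨hpM, hpP⟩ := Finset.mem_filter.1 hp
    obtain ⟨hp0, hpM⟩ := Finset.mem_Ioc.1 hpM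
    have hlt : M / p < M := Nat.div_lt_self (hp0.trans_le hpM) (hP p hpP)
    omega

/-- The number of ordered factorizations with at least `k` factors in `P` of the positive integers
up to `M`. -/
def tailCount (P : Set ℕ) (k M : ℕ) : ℝ := ∑' m : ℕ, (factorizationCount P (m + k) M : ℝ)

lemma summable_factorizationCount (hP : ∀ n ∈ P, 2 ≤ n) (k M : ℕ) :
    Summable fun m : ℕ => (factorizationCount P (m + k) M : ℝ) :=
  summable_of_ne_finset_zero (s := Finset.range M) fun m hm => by
    rw [Finset.mem_range, not_lt] at hm
    rw [factorizationCount_eq_zero_of_le hP (hm.trans (Nat.le_add_right m k)), Nat.cast_zero]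

lemma tailCount_zero_right (P : Set ℕ) (k : ℕ) : tailCount P k 0 = 0 := by
  simp [tailCount, factorizationCount_zero_right]

lemma tailCount_nonneg (P : Set ℕ) (k M : ℕ) : 0 ≤ tailCount P k M :=
  tsum_nonneg fun _ => Nat.cast_nonneg _

lemma tailCount_mono (hP : ∀ n ∈ P, 2 ≤ n) (k : ℕ) : Monotone (tailCount P k) :=
  fun a b hab => (summable_factorizationCount hP k a).tsum_le_tsum
    (fun _ => Nat.cast_le.2 (factorizationCount_mono P _ hab)) (summable_factorizationCount hP k b)

lemma sum_factorizationCount_add_tailCount (hP : ∀ n ∈ P, 2 ≤ n) (k M : ℕ) :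
    ∑ m ∈ Finset.range k, (factorizationCount P m M : ℝ) + tailCount P k M = tailCount P 0 M := by
  simpa only [tailCount, add_zero] using
    (summable_factorizationCount hP 0 M).sum_add_tsum_nat_add k

lemma tailCount_zero_left_pos (hP : ∀ n ∈ P, 2 ≤ n) (hM : 1 ≤ M) : 0 < tailCount P 0 M := by
  rw [← sum_factorizationCount_add_tailCount hP 1, Finset.sum_range_one,
    factorizationCount_zero_left, if_pos hM, Nat.cast_one]
  exact add_pos_of_pos_of_nonneg one_pos (tailCount_nonneg P 1 M)

open Classical in
lemma tailCount_succ (hP : ∀ n ∈ P, 2 ≤ n) (k M : ℕ) :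
    tailCount P (k + 1) M = ∑ p ∈ Finset.Ioc 0 M with p ∈ P, tailCount P k (M / p) := by
  simp only [tailCount]
  rw [← Summable.tsum_finsetSum fun p _ => summable_factorizationCount hP k (M / p)]
  refine tsum_congr fun m => ?_
  rw [← add_assoc, factorizationCount_succ, Nat.cast_sum]

lemma tailCount_succ_eq_tsum (hP : ∀ n ∈ P, 2 ≤ n) (k M : ℕ) :
    tailCount P (k + 1) M = ∑' p : P, tailCount P k (M / p) := by
  classical
  rw [tailCount_succ hP, Finset.sum_filter, tsum_subtype P fun p => tailCount P k (M / p),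
    tsum_eq_sum (s := Finset.Ioc 0 M)]
  · refine Finset.sum_congr rfl fun p _ => ?_
    rw [Set.indicator_apply]
  · intro p hp
    have hdiv : M / p = 0 := by
      rcases Nat.eq_zero_or_pos p with rfl | hp0
      · exact Nat.div_zero M
      · exact Nat.div_eq_of_lt (not_le.1 fun h => hp (Finset.mem_Ioc.2 ⟨hp0, h⟩))
    rw [Set.indicator_apply, hdiv, tailCount_zero_right, ite_self]

lemma Acum_eq_tailCount (hP : ∀ n ∈ P, 2 ≤ n) (N : ℕ) : Acum P N = tailCount P 0 N := by
  simp only [Acum, aTot, tailCount, factorizationCount, add_zero, Nat.cast_sum]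
  refine (Summable.tsum_finsetSum fun n hn => ?_).symm
  refine (summable_factorizationCount hP 0 N).of_nonneg_of_le (fun _ => Nat.cast_nonneg _)
    fun m => ?_
  exact Nat.cast_le.2 (Finset.single_le_sum (f := af P m) (fun _ _ => Nat.zero_le _) hn)

lemma tsum_ite_le_factorizationCount (hP : ∀ n ∈ P, 2 ≤ n) {B : ℝ} (hB : 0 ≤ B) (N : ℕ) :
    ∑' m : ℕ, (if (m : ℝ) ≤ B then (factorizationCount P m N : ℝ) else 0) =
      tailCount P 0 N - tailCount P (⌊B⌋₊ + 1) N := by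
  rw [← sum_factorizationCount_add_tailCount hP (⌊B⌋₊ + 1) N, add_sub_cancel_right,
    tsum_eq_sum (s := Finset.range (⌊B⌋₊ + 1))]
  · refine Finset.sum_congr rfl fun m hm => if_pos ?_
    exact (Nat.le_floor_iff hB).1 (Finset.mem_range_succ_iff.1 hm)
  · intro m hm
    refine if_neg fun h => hm (Finset.mem_range_succ_iff.2 (Nat.le_floor h))

end Counting

section StepLaw

open MeasureTheory ProbabilityTheory Topology

lemma variance_pos_of_atoms {lam : Measure ℝ} [IsProbabilityMeasure lam] (hLp : MemLp id 2 lam)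
    {a b : ℝ} (ha : 0 < lam.real {a}) (hb : 0 < lam.real {b}) (hab : a ≠ b) :
    0 < Var[id; lam] := by
  refine (variance_nonneg _ _).lt_of_ne fun hzero => hab ?_
  have hae := ae_eq_integral_of_variance_eq_zero hLp hzero.symm
  have heq {x : ℝ} (hx : 0 < lam.real {x}) : x = lam[id] := by
    by_contra hne
    exact hx.ne' (measureReal_eq_zero_iff (measure_ne_top lam _) |>.2
      (measure_mono_null (Set.singleton_subset_iff.2 hne) hae))
  exact (heq ha).trans (heq hb).symm

/-- The law of `log p` for a random element `p` of `P` chosen with probability `p^{-ρ}`. -/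
def stepLaw (P : Set ℕ) (ρ : ℝ) : Measure ℝ :=
  Measure.sum fun p : P => ENNReal.ofReal ((p : ℕ) ^ (-ρ)) • Measure.dirac (Real.log (p : ℕ))

variable {P : Set ℕ} {ρ : ℝ} {p : ℕ}

lemma integral_stepLaw (f : ℝ → ℝ) :
    ∫ x, f x ∂stepLaw P ρ = ∑' p : P, ((p : ℕ) : ℝ) ^ (-ρ) * f (Real.log (p : ℕ)) := by
  rw [stepLaw, integral_sum_dirac fun _ => ENNReal.ofReal_ne_top]
  refine tsum_congr fun p => ?_
  rw [ENNReal.toReal_ofReal (by positivity), smul_eq_mul]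

lemma integrable_stepLaw_iff {f : ℝ → ℝ} :
    Integrable f (stepLaw P ρ) ↔
      Summable fun p : P => ((p : ℕ) : ℝ) ^ (-ρ) * |f (Real.log (p : ℕ))| := by
  rw [stepLaw, integrable_sum_dirac_iff fun _ => ENNReal.ofReal_ne_top]
  refine summable_congr fun p => ?_
  rw [ENNReal.toReal_ofReal (by positivity), Real.norm_eq_abs]

lemma isProbabilityMeasure_stepLaw (h : Pval P ρ = 1) : IsProbabilityMeasure (stepLaw P ρ) := by
  have hsum : Summable fun p : P => ((p : ℕ) : ℝ) ^ (-ρ) := by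
    by_contra hdiv
    exact zero_ne_one ((tsum_eq_zero_of_not_summable hdiv).symm.trans h)
  constructor
  simp only [stepLaw, Measure.sum_apply _ MeasurableSet.univ, Measure.smul_apply, measure_univ,
    smul_eq_mul, mul_one]
  rw [← ENNReal.ofReal_tsum_of_nonneg (fun p => by positivity) hsum, ← Pval, h, ENNReal.ofReal_one]

lemma ae_stepLaw {q : ℝ → Prop} (h : ∀ p ∈ P, q (Real.log p)) : ∀ᵐ x ∂stepLaw P ρ, q x := by
  rw [stepLaw, Measure.ae_sum_iff]
  intro p
  refine Measure.ae_smul_measure ?_ _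
  rw [ae_dirac_eq]
  exact h p p.2

lemma ae_stepLaw_pos (hP : ∀ n ∈ P, 2 ≤ n) : ∀ᵐ x ∂stepLaw P ρ, 0 < x :=
  ae_stepLaw fun p hp => Real.log_pos (Nat.one_lt_cast.2 (hP p hp))

lemma stepLaw_real_singleton_pos [IsFiniteMeasure (stepLaw P ρ)] (hp : p ∈ P) (hp0 : p ≠ 0) :
    0 < (stepLaw P ρ).real {Real.log p} := by
  refine ENNReal.toReal_pos (ne_of_gt ?_) (measure_ne_top _ _)
  refine lt_of_lt_of_le ?_ (Measure.le_sum _ (⟨p, hp⟩ : P) _)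
  simp only [Measure.smul_apply, Measure.dirac_apply_of_mem (Set.mem_singleton _), smul_eq_mul,
    mul_one, ENNReal.ofReal_pos]
  exact Real.rpow_pos_of_pos (Nat.cast_pos.2 (Nat.pos_of_ne_zero hp0)) _

lemma ae_stepLaw_real_singleton_pos [IsFiniteMeasure (stepLaw P ρ)] (hP : ∀ n ∈ P, 2 ≤ n) :
    ∀ᵐ x ∂stepLaw P ρ, 0 < (stepLaw P ρ).real {x} :=
  ae_stepLaw fun p hp => stepLaw_real_singleton_pos hp (by have := hP p hp; omega)

lemma memLp_id_stepLaw
    (hlog : Summable fun p : P => ((p : ℕ) : ℝ) ^ (-ρ) * Real.log (p : ℕ) ^ 2) :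
    MemLp id 2 (stepLaw P ρ) := by
  rw [memLp_two_iff_integrable_sq measurable_id.aestronglyMeasurable, integrable_stepLaw_iff]
  simpa using hlog

lemma integral_id_stepLaw : ∫ x, x ∂stepLaw P ρ = -Pderiv1 P ρ := by
  rw [integral_stepLaw fun x => x, Pderiv1, neg_neg]

lemma variance_id_stepLaw [IsProbabilityMeasure (stepLaw P ρ)]
    (hLp : MemLp id 2 (stepLaw P ρ)) :
    Var[id; stepLaw P ρ] = Pderiv2 P ρ - Pderiv1 P ρ ^ 2 := by
  rw [variance_eq_sub hLp]
  congr 1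
  · exact integral_stepLaw fun x => x ^ 2
  · exact (congrArg (· ^ 2) integral_id_stepLaw).trans (neg_sq _)

lemma variance_id_stepLaw_pos [IsProbabilityMeasure (stepLaw P ρ)] (hP : ∀ n ∈ P, 2 ≤ n)
    (hP2 : P.Nontrivial) (hLp : MemLp id 2 (stepLaw P ρ)) : 0 < Var[id; stepLaw P ρ] := by
  obtain ⟨a, ha, b, hb, hab⟩ := hP2
  have ha2 := hP a ha
  have hb2 := hP b hb
  refine variance_pos_of_atoms hLp (stepLaw_real_singleton_pos ha (by omega))
    (stepLaw_real_singleton_pos hb (by omega)) fun hlog => hab ?_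
  exact Nat.cast_injective (Real.log_injOn_pos (Set.mem_Ioi.2 (by positivity))
    (Set.mem_Ioi.2 (by positivity)) hlog)

end StepLaw

section NormalizedTail

open MeasureTheory ProbabilityTheory Topology

variable {P : Set ℕ} {ρ : ℝ} {p : ℕ}

lemma floor_exp_sub_log (y : ℝ) (hp : p ≠ 0) :
    ⌊Real.exp (y - Real.log p)⌋₊ = ⌊Real.exp y⌋₊ / p := by
  rw [Real.exp_sub, Real.exp_log (Nat.cast_pos.2 (Nat.pos_of_ne_zero hp)), Nat.floor_div_natCast]

/-- `tailCount` as a function of the logarithm of its upper limit, with the exponential growth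
`e^{ρy}` removed. -/
def normalizedTail (P : Set ℕ) (ρ : ℝ) (k : ℕ) (y : ℝ) : ℝ :=
  Real.exp (-(ρ * y)) * tailCount P k ⌊Real.exp y⌋₊

lemma normalizedTail_log {N : ℕ} (hN : N ≠ 0) (k : ℕ) :
    normalizedTail P ρ k (Real.log N) = Real.exp (-(ρ * Real.log N)) * tailCount P k N := by
  rw [normalizedTail, Real.exp_log (Nat.cast_pos.2 (Nat.pos_of_ne_zero hN)), Nat.floor_natCast]

lemma normalizedTail_of_neg (k : ℕ) {y : ℝ} (hy : y < 0) : normalizedTail P ρ k y = 0 := by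
  rw [normalizedTail, Nat.floor_eq_zero.2 (Real.exp_lt_one_iff.2 hy), tailCount_zero_right,
    mul_zero]

lemma normalizedTail_succ (hP : ∀ n ∈ P, 2 ≤ n) (k : ℕ) (y : ℝ) :
    normalizedTail P ρ (k + 1) y = ∫ x, normalizedTail P ρ k (y - x) ∂stepLaw P ρ := by
  rw [integral_stepLaw fun x => normalizedTail P ρ k (y - x), normalizedTail,
    tailCount_succ_eq_tsum hP, ← tsum_mul_left]
  refine tsum_congr fun p => ?_
  have hp : (p : ℕ) ≠ 0 := by have := hP p p.2; omega
  have hp0 : (0 : ℝ) < (p : ℕ) := Nat.cast_pos.2 (Nat.pos_of_ne_zero hp)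
  rw [normalizedTail, floor_exp_sub_log y hp, ← mul_assoc, Real.rpow_def_of_pos hp0,
    ← Real.exp_add]
  congr 2
  ring

lemma isExpRenewal_normalizedTail (hP : ∀ n ∈ P, 2 ≤ n) (hρ : 0 < ρ) :
    IsExpRenewal (stepLaw P ρ) ρ (normalizedTail P ρ 0) where
  rate_pos := hρ
  ae_pos := ae_stepLaw_pos hP
  eq_zero_of_neg _ hy := normalizedTail_of_neg 0 hy
  monotone_exp_mul := by
    have heq (y : ℝ) :
        Real.exp (ρ * y) * normalizedTail P ρ 0 y = tailCount P 0 ⌊Real.exp y⌋₊ := by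
      rw [normalizedTail, ← mul_assoc, ← Real.exp_add, add_neg_cancel, Real.exp_zero, one_mul]
    simp only [heq]
    exact (tailCount_mono hP 0).comp (Nat.floor_mono.comp Real.exp_monotone)
  eq_expTail_add_integral y := by
    rw [← normalizedTail_succ hP 0 y, normalizedTail, normalizedTail,
      ← sum_factorizationCount_add_tailCount hP 1, mul_add, Finset.sum_range_one,
      factorizationCount_zero_left]
    congr 1
    rcases lt_or_ge y 0 with hy | hy
    · simp [expTail_of_neg hy, hy]
    · simp [expTail_of_nonneg hy, hy]

end NormalizedTail

section Threshold

open MeasureTheory ProbabilityTheory Topology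

lemma one_sub_gaussianReal_Iic {v : ℝ} (hv : 0 < v) (x : ℝ) :
    1 - (gaussianReal 0 v.toNNReal).real (Set.Iic (-(√v * x))) =
      (√(2 * Real.pi))⁻¹ * ∫ t in Set.Iic x, Real.exp (-(t ^ 2) / 2) := by
  have hscale : gaussianReal 0 v.toNNReal = (gaussianReal 0 1).map (-√v * ·) := by
    rw [gaussianReal_map_const_mul, mul_zero, mul_one]
    congr 1
    ext
    simp [hv.le]
  have hpre : (-√v * ·) ⁻¹' Set.Iic (-(√v * x)) = Set.Ici x := by
    ext t
    simp [mul_le_mul_iff_right₀ (Real.sqrt_pos.2 hv)]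
  have := nullSingletonClass_gaussianReal (μ := 0) (v := 1) one_ne_zero
  rw [hscale, map_measureReal_apply (by fun_prop) measurableSet_Iic, hpre,
    ← probReal_compl_eq_one_sub measurableSet_Ici, Set.compl_Ici,
    measureReal_congr (Iio_ae_eq_Iic (a := x)), measureReal_def,
    gaussianReal_apply_eq_integral _ one_ne_zero,
    ENNReal.toReal_ofReal (integral_nonneg fun t => gaussianPDFReal_nonneg _ _ _),
    ← integral_const_mul]
  simp [gaussianPDFReal_def]

variable {α : Type*} {l : Filter α} {L k : α → ℝ} {μ a : ℝ}

lemma tendsto_mul_add_mul_sqrt (hμ : 0 < μ) (a : ℝ) (hL : Tendsto L l atTop) :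
    Tendsto (fun i => μ * L i + a * √(L i)) l atTop := by
  have hsqrt := Real.tendsto_sqrt_atTop.comp hL
  refine (hsqrt.atTop_mul_atTop₀
    (tendsto_atTop_add_const_right _ a (hsqrt.const_mul_atTop hμ))).congr' ?_
  filter_upwards [hL.eventually_ge_atTop 0] with i hi
  simp only [Function.comp_apply]
  linear_combination μ * Real.mul_self_sqrt hi

lemma tendsto_floor_add_one_sub_div_sqrt (hμ : 0 < μ) (a : ℝ) (hL : Tendsto L l atTop) :
    Tendsto (fun i => ((⌊μ * L i + a * √(L i)⌋₊ + 1 : ℕ) - μ * L i) / √(L i)) l (𝓝 a) := by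
  have hsqrt := Real.tendsto_sqrt_atTop.comp hL
  have hround : Tendsto (fun i => ((⌊μ * L i + a * √(L i)⌋₊ + 1 : ℕ) -
      (μ * L i + a * √(L i))) / √(L i)) l (𝓝 0) := by
    refine squeeze_zero_norm' ?_ (tendsto_inv_atTop_zero.comp hsqrt)
    filter_upwards [(tendsto_mul_add_mul_sqrt hμ a hL).eventually_ge_atTop 0] with i hi
    have hle := Nat.floor_le hi
    have hlt := Nat.lt_floor_add_one (μ * L i + a * √(L i))
    rw [norm_div, Real.norm_of_nonneg (Real.sqrt_nonneg _), div_eq_mul_inv]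
    refine mul_le_of_le_one_left (by positivity) (abs_le.2 ⟨?_, ?_⟩) <;> push_cast <;> linarith
  have hlim := hround.const_add a
  rw [add_zero] at hlim
  refine hlim.congr' ?_
  filter_upwards [hL.eventually_gt_atTop 0] with i hi
  have := (Real.sqrt_pos.2 hi).ne'
  field_simp
  ring

lemma tendsto_inv_sqrt_mul_sub_mul_inv (hμ : 0 < μ) (hL : Tendsto L l atTop)
    (hk : Tendsto (fun i => (k i - μ * L i) / √(L i)) l (𝓝 a)) :
    Tendsto (fun i => (√(k i))⁻¹ * (L i - k i * μ⁻¹)) l (𝓝 (-(a / (μ * √μ)))) := by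
  have hsqrt := Real.tendsto_sqrt_atTop.comp hL
  have hratio : Tendsto (fun i => k i / L i) l (𝓝 μ) := by
    have hlim := (hk.div_atTop hsqrt).const_add μ
    rw [add_zero] at hlim
    refine hlim.congr' ?_
    filter_upwards [hL.eventually_gt_atTop 0] with i hi
    rw [Function.comp_apply, div_div, Real.mul_self_sqrt hi.le]
    field_simp
    ring
  have hlim := ((hratio.sqrt.inv₀ (Real.sqrt_pos.2 hμ).ne').mul hk).mul_const (-μ⁻¹)
  rw [show (√μ)⁻¹ * a * -μ⁻¹ = -(a / (μ * √μ)) by rw [div_eq_mul_inv, mul_inv]; ring] at hlim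
  refine hlim.congr' ?_
  filter_upwards [hL.eventually_gt_atTop 0] with i hi
  have := (Real.sqrt_pos.2 hi).ne'
  rw [Real.sqrt_div' _ hi.le]
  field_simp
  ring

lemma eq_mul_sqrt_mul_sqrt {σ v : ℝ} (hμ : 0 ≤ μ) (hσ0 : 0 ≤ σ) (hv : 0 ≤ v)
    (hσ : σ ^ 2 = μ ^ 3 * v) : σ = μ * √μ * √v := by
  rw [← sq_eq_sq₀ hσ0 (by positivity), hσ, mul_pow, mul_pow, Real.sq_sqrt hμ, Real.sq_sqrt hv]
  ring

end Threshold

section TailAsymptotics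

open MeasureTheory ProbabilityTheory Topology

/-- The iterates of the renewal operator are `h_k(y) = 𝔼 h(y - S_k)` for a random walk `S` with step
law `lam`. As `h` is asymptotically constant on the cosets of a group containing the steps, their
ratio to `h` is governed by the probability of `S_k ≤ y`. -/
theorem IsExpRenewal.tendsto_iterate_div {lam : Measure ℝ} [IsProbabilityMeasure lam] {ρ : ℝ}
    {h : ℕ → ℝ → ℝ} (H : IsExpRenewal lam ρ (h 0))
    (hsucc : ∀ k y, h (k + 1) y = ∫ x, h k (y - x) ∂lam)
    (hatom : ∀ᵐ x ∂lam, 0 < lam.real {x}) (hLp : MemLp id 2 lam) (hvar : 0 < Var[id; lam])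
    {k : ℕ → ℕ} (hk : Tendsto k atTop atTop) {L : ℕ → ℝ} (hL : Tendsto L atTop atTop) {τ : ℝ}
    (hτ : Tendsto (fun N => (√(k N))⁻¹ * (L N - k N * ∫ x, x ∂lam)) atTop (𝓝 τ)) :
    Tendsto (fun N => h (k N) (L N) / h 0 (L N)) atTop
      (𝓝 ((gaussianReal 0 Var[id; lam].toNNReal).real (Set.Iic τ))) := by
  obtain ⟨Ω, _, Q, X, hX, hlaw, hindep, _⟩ := exists_iid ℕ lam
  obtain ⟨x₀, hx₀⟩ := hatom.exists
  obtain ⟨C, hC⟩ := H.exists_le hx₀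
  obtain ⟨c, hc⟩ := H.exists_isPeriodicLimit hatom (hLp.integrable one_le_two)
  have hrep (k : ℕ) (y : ℝ) : h k y = ∫ ω, h 0 (y - ∑ i ∈ Finset.range k, X i ω) ∂Q := by
    induction k generalizing y with
    | zero => simp
    | succ k ih =>
      rw [hsucc, integral_comp_sub_sum_succ hX hlaw hindep H.measurable
        fun y => (abs_of_nonneg (H.nonneg y)).trans_le (hC y)]
      simp only [ih]
  simp only [hrep (k _)]
  exact H.tendsto_integral_div hC hc (fun N => by fun_prop)
    (fun N => ae_sum_mem_atomGroup hlaw hatom (k N)) hL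
    fun Y => tendsto_measureReal_le_sub_sum hlaw hindep hLp hvar hk hτ Y

lemma tendsto_tailCount_div {P : Set ℕ} {ρ : ℝ} (hP : ∀ n ∈ P, 2 ≤ n) (hP2 : P.Nontrivial)
    (hρ0 : 0 < ρ) (hρ1 : Pval P ρ = 1)
    (hlog : Summable fun n : P => ((n : ℕ) : ℝ) ^ (-ρ) * Real.log (n : ℕ) ^ 2)
    {k : ℕ → ℕ} (hk : Tendsto k atTop atTop) {τ : ℝ}
    (hτ : Tendsto (fun N : ℕ => (√(k N))⁻¹ * (Real.log N - k N * -Pderiv1 P ρ)) atTop (𝓝 τ)) :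
    Tendsto (fun N => tailCount P (k N) N / tailCount P 0 N) atTop
      (𝓝 ((gaussianReal 0 Var[id; stepLaw P ρ].toNNReal).real (Set.Iic τ))) := by
  have := isProbabilityMeasure_stepLaw hρ1
  have hLp := memLp_id_stepLaw hlog
  refine ((isExpRenewal_normalizedTail hP hρ0).tendsto_iterate_div (normalizedTail_succ hP)
    (ae_stepLaw_real_singleton_pos hP) hLp (variance_id_stepLaw_pos hP hP2 hLp) hk
    (Real.tendsto_log_atTop.comp tendsto_natCast_atTop_atTop)
    (by simpa only [integral_id_stepLaw, Function.comp_apply] using hτ)).congr' ?_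
  filter_upwards [eventually_ne_atTop 0] with N hN
  simp only [Function.comp_apply]
  rw [normalizedTail_log hN, normalizedTail_log hN, mul_div_mul_left _ _ (Real.exp_ne_zero _)]

lemma tendsto_tailCount_floor_div {P : Set ℕ} {ρ μ : ℝ} (hP : ∀ n ∈ P, 2 ≤ n) (hP2 : P.Nontrivial)
    (hρ0 : 0 < ρ) (hρ1 : Pval P ρ = 1)
    (hlog : Summable fun n : P => ((n : ℕ) : ℝ) ^ (-ρ) * Real.log (n : ℕ) ^ 2)
    (hμ0 : 0 < μ) (hmean : -Pderiv1 P ρ = μ⁻¹) (a : ℝ) :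
    Tendsto (fun N : ℕ =>
        tailCount P (⌊μ * Real.log N + a * √(Real.log N)⌋₊ + 1) N / tailCount P 0 N) atTop
      (𝓝 ((gaussianReal 0 Var[id; stepLaw P ρ].toNNReal).real (Set.Iic (-(a / (μ * √μ)))))) := by
  have hL : Tendsto (fun N : ℕ => Real.log N) atTop atTop :=
    Real.tendsto_log_atTop.comp tendsto_natCast_atTop_atTop
  refine tendsto_tailCount_div hP hP2 hρ0 hρ1 hlog
    ((tendsto_add_atTop_nat 1).comp
      (tendsto_nat_floor_atTop.comp (tendsto_mul_add_mul_sqrt hμ0 a hL))) ?_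
  rw [hmean]
  exact tendsto_inv_sqrt_mul_sub_mul_inv hμ0 hL (tendsto_floor_add_one_sub_div_sqrt hμ0 a hL)

end TailAsymptotics

lemma summable_rpow_neg_mul_log_sq {P : Set ℕ} (hP : ∀ n ∈ P, 2 ≤ n) {ρ : ℝ}
    (hρκ : kappa P < ρ) :
    Summable fun n : P => ((n : ℕ) : ℝ) ^ (-ρ) * Real.log (n : ℕ) ^ 2 := by
  obtain ⟨_, ⟨r, rfl, hr⟩, hrρ⟩ := sInf_lt_iff.1 hρκ
  rw [EReal.coe_lt_coe_iff] at hrρ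
  set ε := (ρ - r) / 2 with hε
  have hε0 : 0 < ε := half_pos (sub_pos.2 hrρ)
  refine (hr.mul_left (ε ^ 2)⁻¹).of_nonneg_of_le (fun n => by positivity) fun n => ?_
  have hn : (1 : ℝ) < (n : ℕ) := Nat.one_lt_cast.2 (hP n n.2)
  have hn0 : (0 : ℝ) < (n : ℕ) := one_pos.trans hn
  calc ((n : ℕ) : ℝ) ^ (-ρ) * Real.log (n : ℕ) ^ 2
      ≤ ((n : ℕ) : ℝ) ^ (-ρ) * (((n : ℕ) : ℝ) ^ ε / ε) ^ 2 :=
        mul_le_mul_of_nonneg_left (pow_le_pow_left₀ (Real.log_pos hn).le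
          (Real.log_le_rpow_div hn0.le hε0) 2) (by positivity)
    _ = (ε ^ 2)⁻¹ * (((n : ℕ) : ℝ) ^ (-ρ) * (((n : ℕ) : ℝ) ^ ε * ((n : ℕ) : ℝ) ^ ε)) := by
      field_simp
    _ = (ε ^ 2)⁻¹ * ((n : ℕ) : ℝ) ^ (-r) := by
      rw [← Real.rpow_add hn0, ← Real.rpow_add hn0, hε]
      ring_nf

theorem ordered_factorizations_asymptotically_normal_general
    (P : Set ℕ) (hP : ∀ n ∈ P, 2 ≤ n) (hP2 : P.Nontrivial)
    (ρ : ℝ) (hρ0 : 0 < ρ) (hρ1 : Pval P ρ = 1)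
    (hlog : Summable fun n : P => ((n : ℕ) : ℝ) ^ (-ρ) * Real.log (n : ℕ) ^ 2)
    (μ σ : ℝ) (hμ : μ = -1 / Pderiv1 P ρ)
    (hσ0 : 0 ≤ σ) (hσ : σ ^ 2 = μ ^ 3 * Pderiv2 P ρ - μ) :
    ∀ x : ℝ,
      Tendsto (fun N : ℕ =>
          (∑' m : ℕ,
            if (m : ℝ) ≤ μ * Real.log N + x * (σ * Real.sqrt (Real.log N)) then
              (∑ n ∈ Finset.Icc 1 N, (af P m n : ℝ)) else 0) / Acum P N)
        atTop
        (nhds ((Real.sqrt (2 * Real.pi))⁻¹ * ∫ t in Set.Iic x, Real.exp (-(t ^ 2) / 2))) := by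
  intro x
  have hprob := isProbabilityMeasure_stepLaw hρ1
  have hLp := memLp_id_stepLaw hlog
  have hvar := variance_id_stepLaw_pos hP hP2 hLp
  have hmean : -Pderiv1 P ρ = μ⁻¹ := by rw [hμ, neg_div, one_div, inv_neg, inv_inv]
  have hμ0 : 0 < μ := inv_pos.1 <| by
    rw [← hmean, ← integral_id_stepLaw]
    exact integral_id_pos (ae_stepLaw_pos hP) (hLp.integrable one_le_two)
  have hσv := eq_mul_sqrt_mul_sqrt hμ0.le hσ0 hvar.le <| by
    rw [hσ, variance_id_stepLaw hLp, ← neg_sq (Pderiv1 P ρ), hmean]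
    field_simp
  have hlim := (tendsto_tailCount_floor_div hP hP2 hρ0 hρ1 hlog hμ0 hmean (x * σ)).const_sub 1
  rw [show x * σ / (μ * √μ) = √(ProbabilityTheory.variance id (stepLaw P ρ)) * x by
    rw [hσv]; field_simp, one_sub_gaussianReal_Iic hvar] at hlim
  refine hlim.congr' ?_
  have hL := Real.tendsto_log_atTop.comp (tendsto_natCast_atTop_atTop (R := ℝ))
  filter_upwards [(tendsto_mul_add_mul_sqrt hμ0 (x * σ) hL).eventually_ge_atTop 0,
    eventually_ge_atTop 1] with N hB hN
  have hnum := tsum_ite_le_factorizationCount hP hB N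
  simp only [factorizationCount, Nat.cast_sum, Function.comp_apply] at hnum
  rw [Acum_eq_tailCount hP, ← mul_assoc, hnum, sub_div,
    div_self (tailCount_zero_left_pos hP hN).ne']

/-- **Asymptotic normality of the number of factors in random ordered factorizations.**
Under the assumptions of the theorem, for every real `x`,
`P(Y_N ≤ μ log N + x σ √(log N)) → (1/√(2π)) ∫_{-∞}^x e^{-t²/2} dt` as `N → ∞`. -/
theorem ordered_factorizations_asymptotically_normal
    (P : Set ℕ) (hP : ∀ n ∈ P, 2 ≤ n) (hP2 : P.Nontrivial)
    (hκ : 1 < PvalE P (kappa P))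
    (ρ : ℝ) (hρ0 : 0 < ρ) (hρκ : kappa P < (ρ : EReal)) (hρ1 : Pval P ρ = 1)
    (μ σ : ℝ) (hμ : μ = -1 / Pderiv1 P ρ)
    (hσ0 : 0 ≤ σ) (hσ : σ ^ 2 = μ ^ 3 * Pderiv2 P ρ - μ) :
    ∀ x : ℝ,
      Tendsto (fun N : ℕ =>
          (∑' m : ℕ,
            if (m : ℝ) ≤ μ * Real.log N + x * (σ * Real.sqrt (Real.log N)) then
              (∑ n ∈ Finset.Icc 1 N, (af P m n : ℝ)) else 0) / Acum P N)
        atTop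
        (nhds ((Real.sqrt (2 * Real.pi))⁻¹ * ∫ t in Set.Iic x, Real.exp (-(t ^ 2) / 2))) :=
  ordered_factorizations_asymptotically_normal_general P hP hP2 ρ hρ0 hρ1
    (summable_rpow_neg_mul_log_sq hP hρκ) μ σ hμ hσ0 hσ
end
end

section
/- Under the stated assumptions, for every integer k ≥ 0, the k-th normalized central moment E((Y_N − μ log N)/(σ √(log N)))^k = (1/A(N)) Σ_{1≤n≤N} Σ_{m≥0} a_m(n) ((m − μ log N)/(σ √(log N)))^k converges, as N → ∞, to k!/((k/2)! 2^{k/2}) if k is even and to 0 if k is odd. -/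
open scoped BigOperators ENNReal
open Filter Asymptotics

noncomputable section

/-!
By the method of moments it suffices that the moment generating function of the normalized `Y_N`
converges to `exp (t ^ 2 / 2)` at every real `t`. The moment generating function of `Y_N` at `u` is
`F(exp u, N) / F(1, N)`, where `F(z, N)` is the sum over `m` of `z ^ m` times the number of
`m`-tuples from `𝒫` with product at most `N`.

If `𝒫(s) = exp (-u)`, then `exp (-s x) F(exp u, exp x)` solves a renewal equation whose step law
puts mass `n ^ (-s) / 𝒫(s)` at `log n`. Its ratio to the same function at `s = ρ` tends to `1` as
`s → ρ` and `x → ∞` jointly: along ultrafilters, translates converge to bounded harmonic functions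
of the step law at `ρ`, which by the Choquet–Deny argument are invariant under the group generated
by the `log n`. Whether or not this group is a lattice, both limits are thereby determined up to
one common shape, and their scale is fixed by the integrated renewal equation, whose total mass is
`1 / ρ`.

Hence the moment generating function of `Y_N` at `u` is asymptotic to `N ^ (s(u) - ρ)` as `u → 0`.
Since `log 𝒫(s)` is a cumulant generating function, `s(u) = ρ + μ u + σ² u² / 2 + o(u²)`, and `u =
t / (σ √(log N))` gives the Gaussian limit.
-/

open MeasureTheory ProbabilityTheory Topology

section MethodOfMoments

theorem abs_exp_sub_one_sub_id_le_sq_mul_exp (x : ℝ) :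
    |Real.exp x - 1 - x| ≤ x ^ 2 * Real.exp |x| := by
  have h := Complex.norm_exp_sub_sum_le_norm_mul_exp (x : ℂ) 2
  rw [Complex.norm_real, Real.norm_eq_abs, sq_abs] at h
  convert h using 1
  rw [← Real.norm_eq_abs, ← Complex.norm_real]
  simp [Finset.sum_range_succ, sub_sub]

theorem abs_exp_sub_one_le_abs_mul_exp (x : ℝ) : |Real.exp x - 1| ≤ |x| * Real.exp |x| := by
  have h := Complex.norm_exp_sub_sum_le_norm_mul_exp (x : ℂ) 1
  rw [Complex.norm_real, Real.norm_eq_abs, pow_one] at h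
  convert h using 1
  rw [← Real.norm_eq_abs, ← Complex.norm_real]
  simp

theorem abs_exp_quotient_sub_le {h : ℝ} (h0 : 0 < h) (h1 : h ≤ 1) (x : ℝ) :
    |(Real.exp (h * x) - 1) / h - x| ≤ h * |x| ^ 2 * Real.exp |x| := by
  have hhx : |h * x| ≤ |x| := by
    rw [abs_mul, abs_of_pos h0]; exact mul_le_of_le_one_left (abs_nonneg x) h1
  rw [show (Real.exp (h * x) - 1) / h - x = (Real.exp (h * x) - 1 - h * x) / h by field_simp,
    abs_div, abs_of_pos h0, div_le_iff₀ h0]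
  calc |Real.exp (h * x) - 1 - h * x| ≤ (h * x) ^ 2 * Real.exp |h * x| :=
        abs_exp_sub_one_sub_id_le_sq_mul_exp _
    _ ≤ (h * x) ^ 2 * Real.exp |x| := by gcongr
    _ = h * |x| ^ 2 * Real.exp |x| * h := by rw [sq_abs]; ring

theorem abs_exp_quotient_le {h : ℝ} (h0 : 0 < h) (h1 : h ≤ 1) (x : ℝ) :
    |(Real.exp (h * x) - 1) / h| ≤ |x| * Real.exp |x| := by
  have hhx : |h * x| ≤ |x| := by
    rw [abs_mul, abs_of_pos h0]; exact mul_le_of_le_one_left (abs_nonneg x) h1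
  rw [abs_div, abs_of_pos h0, div_le_iff₀ h0]
  calc |Real.exp (h * x) - 1| ≤ |h * x| * Real.exp |h * x| := abs_exp_sub_one_le_abs_mul_exp _
    _ ≤ |h * x| * Real.exp |x| := by gcongr
    _ = |x| * Real.exp |x| * h := by rw [abs_mul, abs_of_pos h0]; ring

theorem abs_exp_quotient_pow_sub_pow_le {h : ℝ} (h0 : 0 < h) (h1 : h ≤ 1) (k : ℕ) (x : ℝ) :
    |((Real.exp (h * x) - 1) / h) ^ k - x ^ k| ≤
      h * (k * (k + 1).factorial) * (Real.exp ((k + 1) * x) + Real.exp (-(k + 1) * x)) := by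
  set y := (Real.exp (h * x) - 1) / h
  have hmax : max |y| |x| ≤ |x| * Real.exp |x| := max_le (abs_exp_quotient_le h0 h1 x)
    (le_mul_of_one_le_right (abs_nonneg x) (Real.one_le_exp (abs_nonneg x)))
  have hfact : |x| ^ (k + 1) ≤ (k + 1).factorial * Real.exp |x| := by
    rw [← div_le_iff₀' (by positivity)]
    exact Real.pow_div_factorial_le_exp _ (abs_nonneg x) _
  have hcosh : Real.exp ((k + 1) * |x|) ≤
      Real.exp ((k + 1) * x) + Real.exp (-(k + 1) * x) := by
    have := Real.exp_abs_le ((k + 1) * x)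
    rwa [abs_mul, abs_of_nonneg (by positivity), ← neg_mul] at this
  rcases k.eq_zero_or_pos with rfl | hk
  · simp
  calc |y ^ k - x ^ k| ≤ |y - x| * k * max |y| |x| ^ (k - 1) := abs_pow_sub_pow_le y x k
    _ ≤ h * |x| ^ 2 * Real.exp |x| * k * (|x| * Real.exp |x|) ^ (k - 1) := by
      gcongr; exact abs_exp_quotient_sub_le h0 h1 x
    _ = h * k * |x| ^ (k + 1) * Real.exp |x| ^ k := by
      obtain ⟨j, rfl⟩ := Nat.exists_eq_succ_of_ne_zero hk.ne'
      rw [Nat.succ_eq_add_one, Nat.add_sub_cancel]; ring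
    _ ≤ h * k * ((k + 1).factorial * Real.exp |x|) * Real.exp |x| ^ k := by gcongr
    _ = h * (k * (k + 1).factorial) * Real.exp ((k + 1) * |x|) := by
      rw [add_mul, Real.exp_add, Real.exp_nat_mul, one_mul]; ring
    _ ≤ _ := by gcongr

variable {Ω : Type*} [MeasurableSpace Ω] {X : Ω → ℝ} {m : Measure Ω}

theorem exp_quotient_pow_eq_sum (h x : ℝ) (k : ℕ) :
    ((Real.exp (h * x) - 1) / h) ^ k =
      ∑ j ∈ Finset.range (k + 1), (-1) ^ (k - j) * k.choose j / h ^ k * Real.exp (j * h * x) := by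
  rw [div_pow, sub_eq_add_neg, add_pow, Finset.sum_div]
  refine Finset.sum_congr rfl fun j _ => ?_
  rw [mul_assoc (j : ℝ), Real.exp_nat_mul]
  ring

theorem integrable_exp_quotient_pow (hX : ∀ t, Integrable (fun ω => Real.exp (t * X ω)) m)
    (h : ℝ) (k : ℕ) : Integrable (fun ω => ((Real.exp (h * X ω) - 1) / h) ^ k) m := by
  simp only [exp_quotient_pow_eq_sum]
  exact integrable_finsetSum _ fun j _ => (hX _).const_mul _

theorem integral_exp_quotient_pow (hX : ∀ t, Integrable (fun ω => Real.exp (t * X ω)) m)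
    (h : ℝ) (k : ℕ) : ∫ ω, ((Real.exp (h * X ω) - 1) / h) ^ k ∂m =
      ∑ j ∈ Finset.range (k + 1), (-1) ^ (k - j) * k.choose j / h ^ k * mgf X m (j * h) := by
  simp only [exp_quotient_pow_eq_sum]
  rw [integral_finsetSum _ fun j _ => (hX _).const_mul _]
  simp only [integral_const_mul, mgf]

theorem integrable_pow_of_forall_integrable_exp_mul
    (hX : ∀ t, Integrable (fun ω => Real.exp (t * X ω)) m) (k : ℕ) :
    Integrable (fun ω => X ω ^ k) m :=
  integrable_pow_of_integrable_exp_mul one_ne_zero (by simpa using hX 1) (by simpa using hX (-1)) k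

theorem abs_integral_exp_quotient_pow_sub_le
    (hX : ∀ t, Integrable (fun ω => Real.exp (t * X ω)) m) {h : ℝ} (h0 : 0 < h) (h1 : h ≤ 1)
    (k : ℕ) : |∫ ω, ((Real.exp (h * X ω) - 1) / h) ^ k ∂m - ∫ ω, X ω ^ k ∂m| ≤
      h * (k * (k + 1).factorial) * (mgf X m (k + 1) + mgf X m (-(k + 1))) := by
  rw [← integral_sub (integrable_exp_quotient_pow hX h k)
    (integrable_pow_of_forall_integrable_exp_mul hX k)]
  have hint := ((hX (k + 1)).add (hX (-(k + 1)))).const_mul (h * (k * (k + 1).factorial))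
  rw [← Real.norm_eq_abs, mgf, mgf, ← integral_add (hX _) (hX _), ← integral_const_mul]
  exact norm_integral_le_of_norm_le hint
    (.of_forall fun ω => abs_exp_quotient_pow_sub_pow_le h0 h1 k (X ω))

-- The powers of `(e^{hX} - 1) / h` are combinations of exponentials of `X`, so their expectations
-- converge for fixed `h`; as `h → 0` they approximate the powers of `X` uniformly in `i`.
theorem tendsto_integral_pow_of_tendsto_mgf {ι Ω' : Type*} [MeasurableSpace Ω'] {l : Filter ι}
    {X : ι → Ω → ℝ} {m : ι → Measure Ω} {Y : Ω' → ℝ} {ν : Measure Ω'}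
    (hX : ∀ i t, Integrable (fun ω => Real.exp (t * X i ω)) (m i))
    (hY : ∀ t, Integrable (fun ω => Real.exp (t * Y ω)) ν)
    (hlim : ∀ t, Tendsto (fun i => mgf (X i) (m i) t) l (𝓝 (mgf Y ν t))) (k : ℕ) :
    Tendsto (fun i => ∫ ω, X i ω ^ k ∂m i) l (𝓝 (∫ ω, Y ω ^ k ∂ν)) := by
  set K : ℝ := k * (k + 1).factorial
  set B : ℝ := mgf Y ν (k + 1) + mgf Y ν (-(k + 1)) + 1
  have hsmall : ∀ C : ℝ, Tendsto (fun h => h * K * C) (𝓝[>] 0) (𝓝 0) := fun C => by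
    have : Continuous fun h => h * K * C := by fun_prop
    simpa using (this.tendsto 0).mono_left nhdsWithin_le_nhds
  have hIoc : ∀ᶠ h : ℝ in 𝓝[>] 0, h ∈ Set.Ioc 0 1 := Ioc_mem_nhdsGT one_pos
  have hbound : ∀ᶠ i in l, mgf (X i) (m i) (k + 1) + mgf (X i) (m i) (-(k + 1)) ≤ B :=
    ((hlim _).add (hlim _)).eventually_le_const (lt_add_one _)
  refine TendstoUniformlyOnFilter.tendsto_of_eventually_tendsto (p := 𝓝[>] 0)
    (F := fun h i => ∫ ω, ((Real.exp (h * X i ω) - 1) / h) ^ k ∂m i)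
    (L := fun h => ∫ ω, ((Real.exp (h * Y ω) - 1) / h) ^ k ∂ν) ?_ (.of_forall fun h => ?_) ?_
  · rw [Metric.tendstoUniformlyOnFilter_iff]
    intro ε hε
    filter_upwards [((hsmall B).eventually_lt_const hε).and hIoc |>.prod_mk hbound]
      with ⟨h, i⟩ ⟨⟨hhε, h0, h1⟩, hi⟩
    rw [dist_comm, Real.dist_eq]
    refine (abs_integral_exp_quotient_pow_sub_le (hX i) h0 h1 k).trans_lt (lt_of_le_of_lt ?_ hhε)
    gcongr
  · simp only [integral_exp_quotient_pow (hX _), integral_exp_quotient_pow hY]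
    exact tendsto_finsetSum _ fun j _ => (hlim _).const_mul _
  · refine tendsto_iff_dist_tendsto_zero.mpr (squeeze_zero' (.of_forall fun _ => dist_nonneg) ?_
      (hsmall (mgf Y ν (k + 1) + mgf Y ν (-(k + 1)))))
    filter_upwards [hIoc] with h ⟨h0, h1⟩
    exact abs_integral_exp_quotient_pow_sub_le hY h0 h1 k

end MethodOfMoments

section GaussianMoments

theorem iteratedDeriv_exp_sq_div_two_add_two (n : ℕ) :
    iteratedDeriv (n + 2) (fun t : ℝ => Real.exp (t ^ 2 / 2)) 0 =
      (n + 1) * iteratedDeriv n (fun t : ℝ => Real.exp (t ^ 2 / 2)) 0 := by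
  set g : ℝ → ℝ := fun t => Real.exp (t ^ 2 / 2) with hg
  have hderiv : deriv g = fun t => t * g t := by
    ext t
    rw [hg, _root_.deriv_exp (by fun_prop)]
    simp [mul_comm]
  rw [iteratedDeriv_succ', hderiv, iteratedDeriv_fun_mul (by fun_prop) (by fun_prop)]
  rw [Finset.sum_eq_single 1]
  · simp [iteratedDeriv_fun_id_zero]
  · intro i _ hi
    simp [iteratedDeriv_fun_id_zero, hi]
  · simp

theorem integral_pow_gaussianReal (k : ℕ) :
    ∫ x, x ^ k ∂gaussianReal 0 1 =
      if Even k then (k.factorial : ℝ) / ((k / 2).factorial * 2 ^ (k / 2)) else 0 := by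
  have hmgf : ∫ x, x ^ k ∂gaussianReal 0 1 =
      iteratedDeriv k (fun t : ℝ => Real.exp (t ^ 2 / 2)) 0 := by
    have := iteratedDeriv_mgf_zero (X := id) (μ := gaussianReal 0 1) (by simp) k
    rw [mgf_id_gaussianReal] at this
    simpa using this.symm
  rw [hmgf]
  clear hmgf
  induction k using Nat.twoStepInduction with
  | zero => simp
  | one =>
    rw [iteratedDeriv_one, _root_.deriv_exp (by fun_prop)]
    simp
  | more n ih _ =>
    rw [iteratedDeriv_exp_sq_div_two_add_two, ih]
    simp only [Nat.even_add, even_two, iff_true]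
    split_ifs with h
    · have : n / 2 + 1 = (n + 2) / 2 := by omega
      obtain ⟨j, rfl⟩ := h
      rw [← this, Nat.factorial_succ (j + j + 1), Nat.factorial_succ (j + j), Nat.factorial_succ]
      rw [show (j + j) / 2 = j by omega]
      push_cast
      field_simp
      ring
    · simp

end GaussianMoments

section ChoquetDeny

variable {ι : Type*} {p f : ι → ℝ} {c S : ℝ}

theorem mul_sq_sub_add_sq_le_of_hasSum (hp : ∀ i, 0 ≤ p i) (hp1 : HasSum p 1)
    (hf : HasSum (fun i => p i * f i) c) (hf2 : HasSum (fun i => p i * f i ^ 2) S) (i : ι) :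
    p i * (f i - c) ^ 2 + c ^ 2 ≤ S := by
  have hvar : HasSum (fun j => p j * (f j - c) ^ 2) (S - c ^ 2) := by
    have := (hf2.sub (hf.mul_left (2 * c))).add (hp1.mul_left (c ^ 2))
    rw [show S - 2 * c * c + c ^ 2 * 1 = S - c ^ 2 by ring] at this
    exact this.congr_fun fun j => by ring
  linarith [le_hasSum hvar i fun j _ => mul_nonneg (hp j) (sq_nonneg _)]

theorem sq_le_of_hasSum (hp : ∀ i, 0 ≤ p i) (hp1 : HasSum p 1)
    (hf : HasSum (fun i => p i * f i) c) (hf2 : HasSum (fun i => p i * f i ^ 2) S) :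
    c ^ 2 ≤ S := by
  rcases isEmpty_or_nonempty ι with _ | ⟨⟨i⟩⟩
  · exact absurd (hp1.unique hasSum_empty) one_ne_zero
  · exact (le_add_of_nonneg_left (mul_nonneg (hp i) (sq_nonneg _))).trans
      (mul_sq_sub_add_sq_le_of_hasSum hp hp1 hf hf2 i)

section Harmonic

variable {G : Type*} [AddCommGroup G] {a : ι → G} {h : G → ℝ} {C : ℝ}

-- Iterating Jensen's inequality accumulates one copy of `p i * (h (x - a i) - h x) ^ 2` per step.
theorem natCast_mul_sq_add_sq_le_of_hasSum_mul_apply_sub (hp : ∀ i, 0 ≤ p i) (hp1 : HasSum p 1)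
    (hC : ∀ x, |h x| ≤ C) (hh : ∀ x, HasSum (fun i => p i * h (x - a i)) (h x)) (i : ι) (J : ℕ)
    (x : G) : J * (p i * (h (x - a i) - h x) ^ 2) + h x ^ 2 ≤ C ^ 2 := by
  set D : G → ℝ := fun y => h (y - a i) - h y
  have hD : ∀ y, HasSum (fun j => p j * D (y - a j)) (D y) := fun y => by
    refine ((hh (y - a i)).sub (hh y)).congr_fun fun j => ?_
    rw [← mul_sub, sub_right_comm]
  have hsq : ∀ {r B : ℝ}, |r| ≤ B → r ^ 2 ≤ B ^ 2 := fun hr =>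
    sq_le_sq' (abs_le.mp hr).1 (abs_le.mp hr).2
  have hsummable : ∀ {f : ι → ℝ} {B : ℝ}, (∀ j, |f j| ≤ B) → Summable fun j => p j * f j ^ 2 :=
    fun {f B} hB => (hp1.summable.mul_right (B ^ 2)).of_nonneg_of_le
      (fun j => mul_nonneg (hp j) (sq_nonneg _))
      fun j => mul_le_mul_of_nonneg_left (hsq (hB j)) (hp j)
  have hDbound : ∀ y, |D y| ≤ C + C := fun y => (abs_sub _ _).trans (add_le_add (hC _) (hC _))
  induction J generalizing x with
  | zero => simpa using hsq (hC x)
  | succ J ih =>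
    have hD2 := (hsummable fun j => hDbound (x - a j)).hasSum
    have hh2 := (hsummable fun j => hC (x - a j)).hasSum
    have hJensenD := sq_le_of_hasSum hp hp1 (hD x) hD2
    have hJensenh := mul_sq_sub_add_sq_le_of_hasSum hp hp1 (hh x) hh2 i
    have hmean : J * (p i * ∑' j, p j * D (x - a j) ^ 2) + ∑' j, p j * h (x - a j) ^ 2 ≤
        C ^ 2 := by
      refine hasSum_le (fun j => ?_) (((hD2.mul_left (p i)).mul_left (J : ℝ)).add hh2)
        (by simpa using hp1.mul_right (C ^ 2))
      calc J * (p i * (p j * D (x - a j) ^ 2)) + p j * h (x - a j) ^ 2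
          = p j * (J * (p i * D (x - a j) ^ 2) + h (x - a j) ^ 2) := by ring
        _ ≤ p j * C ^ 2 := mul_le_mul_of_nonneg_left (ih _) (hp j)
    have hstep := mul_le_mul_of_nonneg_left (mul_le_mul_of_nonneg_left hJensenD (hp i))
      J.cast_nonneg
    push_cast
    linarith

theorem apply_sub_eq_of_hasSum_mul_apply_sub (hp : ∀ i, 0 ≤ p i) (hp1 : HasSum p 1)
    (hC : ∀ x, |h x| ≤ C) (hh : ∀ x, HasSum (fun i => p i * h (x - a i)) (h x)) {i : ι}
    (hi : 0 < p i) (x : G) : h (x - a i) = h x := by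
  by_contra hne
  have hpos : 0 < p i * (h (x - a i) - h x) ^ 2 :=
    mul_pos hi (sq_pos_of_ne_zero (sub_ne_zero.mpr hne))
  obtain ⟨J, hJ⟩ := exists_nat_gt (C ^ 2 / (p i * (h (x - a i) - h x) ^ 2))
  rw [div_lt_iff₀ hpos] at hJ
  linarith [natCast_mul_sq_add_sq_le_of_hasSum_mul_apply_sub hp hp1 hC hh i J x, sq_nonneg (h x)]

theorem apply_add_eq_of_mem_closure {β : Type*} {h : G → β} {s : Set G}
    (hs : ∀ a ∈ s, ∀ x, h (x - a) = h x) {g : G} (hg : g ∈ AddSubgroup.closure s) (x : G) :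
    h (x + g) = h x := by
  induction hg using AddSubgroup.closure_induction generalizing x with
  | mem a ha => simpa using (hs a ha (x + a)).symm
  | zero => rw [add_zero]
  | add a b _ _ iha ihb => rw [← add_assoc, ihb, iha]
  | neg a _ ih => simpa using (ih (x + -a)).symm

end Harmonic

end ChoquetDeny

section Counting

/-- The number of ordered `m`-tuples of elements of `P` with product at most `N`, that is, the
summatory function of `af P m`. -/
def tupleCount (P : Set ℕ) (m N : ℕ) : ℕ :=
  Nat.card {t : Fin m → ℕ // (∀ i, t i ∈ P) ∧ ∏ i, t i ≤ N}

/-- The generating polynomial of the number of factors in the ordered `P`-factorizations of the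
integers up to `N`. For `P ⊆ {2, 3, …}` no such factorization has `N` or more factors, whence the
range of summation. -/
def factorGenFun (P : Set ℕ) (z : ℝ) (N : ℕ) : ℝ :=
  ∑ m ∈ Finset.range N, tupleCount P m N * z ^ m

theorem hasSum_natCard_sigma {ι : Type*} {α : ι → Type*} [Finite (Σ i, α i)] :
    HasSum (fun i => (Nat.card (α i) : ℝ)) (Nat.card (Σ i, α i)) := by
  have := Fintype.ofFinite (Σ i, α i)
  have hfiber : ∀ i, Finite (α i) := fun i => .of_injective (Sigma.mk i) sigma_mk_injective
  have htotal : HasSum (fun _ : Σ i, α i => (1 : ℝ)) (Nat.card (Σ i, α i)) := by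
    simpa using hasSum_fintype fun _ : Σ i, α i => (1 : ℝ)
  refine htotal.sigma fun i => ?_
  have := Fintype.ofFinite (α i)
  simpa using hasSum_fintype fun _ : α i => (1 : ℝ)

variable {P : Set ℕ}

theorem two_pow_le_prod (hP : ∀ n ∈ P, 2 ≤ n) {m : ℕ} {t : Fin m → ℕ} (ht : ∀ i, t i ∈ P) :
    2 ^ m ≤ ∏ i, t i := by
  simpa using Finset.pow_card_le_prod Finset.univ t 2 fun i _ => hP _ (ht i)

theorem finite_tuples (hP : ∀ n ∈ P, 2 ≤ n) (m N : ℕ) :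
    Finite {t : Fin m → ℕ // (∀ i, t i ∈ P) ∧ ∏ i, t i ≤ N} := by
  refine Set.Finite.subset (Set.Finite.pi' fun _ => Set.finite_Iic N) ?_
  rintro t ⟨ht, htN⟩ i
  have hprod : 0 < ∏ i, t i := (two_pow_le_prod hP ht).trans_lt' (by positivity)
  exact (Nat.le_of_dvd hprod (Finset.dvd_prod_of_mem t (Finset.mem_univ i))).trans htN

theorem tupleCount_eq_zero_of_le (hP : ∀ n ∈ P, 2 ≤ n) {m N : ℕ} (h : N ≤ m) :
    tupleCount P m N = 0 := by
  have : IsEmpty {t : Fin m → ℕ // (∀ i, t i ∈ P) ∧ ∏ i, t i ≤ N} :=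
    ⟨fun ⟨t, ht, htN⟩ => (h.trans_lt m.lt_two_pow_self).not_ge ((two_pow_le_prod hP ht).trans htN)⟩
  exact Nat.card_of_isEmpty

theorem tupleCount_zero_left {N : ℕ} (hN : 1 ≤ N) : tupleCount P 0 N = 1 := by
  have : Unique {t : Fin 0 → ℕ // (∀ i, t i ∈ P) ∧ ∏ i, t i ≤ N} :=
    ⟨⟨⟨Fin.elim0, by simpa using hN⟩⟩, fun _ => Subsingleton.elim _ _⟩
  exact Nat.card_unique

theorem tupleCount_mono (hP : ∀ n ∈ P, 2 ≤ n) (m : ℕ) : Monotone (tupleCount P m) :=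
  fun _ N h =>
    have := finite_tuples hP m N
    Nat.card_le_card_of_injective _ (Subtype.map_injective (f := id)
      (fun _ ht => ⟨ht.1, ht.2.trans h⟩) Function.injective_id)

theorem tupleCount_eq_sum_af (hP : ∀ n ∈ P, 2 ≤ n) (m N : ℕ) :
    tupleCount P m N = ∑ n ∈ Finset.Icc 1 N, af P m n := by
  have hfin : ∀ n : Finset.Icc 1 N, Finite {t : Fin m → ℕ // (∀ i, t i ∈ P) ∧ ∏ i, t i = n} :=
    fun n => Set.Finite.subset (s := {t : Fin m → ℕ | (∀ i, t i ∈ P) ∧ ∏ i, t i ≤ n})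
      (finite_tuples hP m n) fun _ ht => ⟨ht.1, ht.2.le⟩
  rw [← Finset.sum_coe_sort]
  simp only [af]
  rw [← Nat.card_sigma]
  exact Nat.card_congr
    { toFun := fun t => ⟨⟨∏ i, t.1 i, Finset.mem_Icc.mpr
        ⟨(two_pow_le_prod hP t.2.1).trans' Nat.one_le_two_pow, t.2.2⟩⟩, t.1, t.2.1, rfl⟩
      invFun := fun t => ⟨t.2.1, t.2.2.1, t.2.2.2.trans_le (Finset.mem_Icc.mp t.1.2).2⟩
      left_inv := fun _ => rfl
      right_inv := by rintro ⟨⟨n, -⟩, t, -, h : ∏ i, t i = n⟩; subst h; rfl }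

theorem hasSum_tupleCount_div (hP : ∀ n ∈ P, 2 ≤ n) (m N : ℕ) :
    HasSum (fun n : P => (tupleCount P m (N / n) : ℝ)) (tupleCount P (m + 1) N) := by
  have e : {t : Fin (m + 1) → ℕ // (∀ i, t i ∈ P) ∧ ∏ i, t i ≤ N} ≃
      Σ n : P, {t : Fin m → ℕ // (∀ i, t i ∈ P) ∧ ∏ i, t i ≤ N / n} :=
    { toFun := fun t => ⟨⟨t.1 0, t.2.1 0⟩, Fin.tail t.1, fun i => t.2.1 i.succ,
        (Nat.le_div_iff_mul_le (two_pos.trans_le (hP _ (t.2.1 0)))).mpr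
          ((mul_comm _ _).trans_le ((Fin.prod_univ_succ t.1).symm.trans_le t.2.2))⟩
      invFun := fun t => ⟨Fin.cons t.1 t.2.1, Fin.cases t.1.2 t.2.2.1, by
        rw [Fin.prod_cons, mul_comm]
        exact (Nat.le_div_iff_mul_le (two_pos.trans_le (hP _ t.1.2))).mp t.2.2.2⟩
      left_inv := fun t => Subtype.ext (Fin.cons_self_tail t.1)
      right_inv := fun _ => rfl }
  have := finite_tuples hP (m + 1) N
  have := Finite.of_equiv _ e
  rw [tupleCount, Nat.card_congr e]
  exact hasSum_natCard_sigma

theorem factorGenFun_eq_sum_range (hP : ∀ n ∈ P, 2 ≤ n) (z : ℝ) {N M : ℕ} (h : N ≤ M) :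
    factorGenFun P z N = ∑ m ∈ Finset.range M, tupleCount P m N * z ^ m := by
  refine Finset.sum_subset (Finset.range_subset_range.mpr h) fun m _ hm => ?_
  rw [tupleCount_eq_zero_of_le hP (by simpa using hm), Nat.cast_zero, zero_mul]

theorem hasSum_factorGenFun_div (hP : ∀ n ∈ P, 2 ≤ n) (z : ℝ) {N : ℕ} (hN : 1 ≤ N) :
    HasSum (fun n : P => z * factorGenFun P z (N / n)) (factorGenFun P z N - 1) := by
  have hsum := hasSum_sum fun m (_ : m ∈ Finset.range N) =>
    (hasSum_tupleCount_div hP m N).mul_right (z ^ (m + 1))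
  rw [factorGenFun_eq_sum_range hP z N.le_succ, Finset.sum_range_succ', tupleCount_zero_left hN,
    pow_zero, Nat.cast_one, one_mul, add_sub_cancel_right]
  refine hsum.congr_fun fun n => ?_
  rw [factorGenFun_eq_sum_range hP z (Nat.div_le_self N n), Finset.mul_sum]
  exact Finset.sum_congr rfl fun m _ => by ring

theorem factorGenFun_mono (hP : ∀ n ∈ P, 2 ≤ n) {z : ℝ} (hz : 0 ≤ z) :
    Monotone (factorGenFun P z) := fun N M h => by
  rw [factorGenFun_eq_sum_range hP z h, factorGenFun]
  gcongr with m
  exact tupleCount_mono hP m h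

theorem sum_tsum_af_mul (hP : ∀ n ∈ P, 2 ≤ n) (g : ℕ → ℝ) (N : ℕ) :
    ∑ n ∈ Finset.Icc 1 N, ∑' m, (af P m n : ℝ) * g m =
      ∑ m ∈ Finset.range N, tupleCount P m N * g m := by
  simp only [tupleCount_eq_sum_af hP, Nat.cast_sum, Finset.sum_mul]
  rw [Finset.sum_comm]
  refine Finset.sum_congr rfl fun n hn => tsum_eq_sum fun m hm => ?_
  have hle := Finset.single_le_sum (f := fun n => af P m n) (fun _ _ => Nat.zero_le _) hn
  rw [← tupleCount_eq_sum_af hP, tupleCount_eq_zero_of_le hP (by simpa using hm)] at hle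
  rw [Nat.le_zero.mp hle, Nat.cast_zero, zero_mul]

theorem Acum_eq_factorGenFun_one (hP : ∀ n ∈ P, 2 ≤ n) (N : ℕ) :
    Acum P N = factorGenFun P 1 N := by
  simpa [Acum, aTot, factorGenFun] using sum_tsum_af_mul hP (fun _ => 1) N

theorem tupleCount_floor_exp_congr (hP : ∀ n ∈ P, 2 ≤ n) {a : ℝ} (ha : 0 < a)
    (hPa : ∀ n ∈ P, Real.log n ∈ AddSubgroup.zmultiples a) (m : ℕ) {x y : ℝ}
    (hxy : ⌊x / a⌋ = ⌊y / a⌋) :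
    tupleCount P m ⌊Real.exp x⌋₊ = tupleCount P m ⌊Real.exp y⌋₊ := by
  have hprod : ∀ t : Fin m → ℕ, (∀ i, t i ∈ P) → ∀ u : ℝ,
      (∏ i, t i ≤ ⌊Real.exp u⌋₊ ↔ Real.log (∏ i, t i : ℕ) / a ≤ u / a) := fun t ht u => by
    have hpos : 0 < ∏ i, t i := (two_pow_le_prod hP ht).trans_lt' (by positivity)
    rw [Nat.le_floor_iff (Real.exp_pos u).le, div_le_div_iff_of_pos_right ha,
      Real.log_le_iff_le_exp (by exact_mod_cast hpos)]
  have hmem : ∀ t : Fin m → ℕ, (∀ i, t i ∈ P) → ∃ j : ℤ, Real.log (∏ i, t i : ℕ) / a = j :=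
    fun t ht => by
    have : Real.log (∏ i, t i : ℕ) ∈ AddSubgroup.zmultiples a := by
      rw [Nat.cast_prod, Real.log_prod fun i _ => by have := hP _ (ht i); positivity]
      exact sum_mem fun i _ => hPa _ (ht i)
    obtain ⟨j, hj⟩ := AddSubgroup.mem_zmultiples_iff.mp this
    exact ⟨j, by rw [← hj, zsmul_eq_mul, mul_div_cancel_right₀ _ ha.ne']⟩
  refine Nat.card_congr (Equiv.subtypeEquivRight fun t => and_congr_right fun ht => ?_)
  obtain ⟨j, hj⟩ := hmem t ht
  rw [hprod t ht, hprod t ht, hj, ← Int.le_floor, ← Int.le_floor, hxy]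

end Counting

section DirichletSeries

variable {P : Set ℕ} {s ρ : ℝ}

theorem rpow_neg_eq_exp_neg_mul_log {n : ℕ} (hn : 0 < n) (s : ℝ) :
    (n : ℝ) ^ (-s) = Real.exp (-s * Real.log n) := by
  rw [Real.rpow_def_of_pos (Nat.cast_pos.mpr hn), mul_comm]

theorem exists_lt_summable_of_kappa_lt (h : kappa P < (s : EReal)) :
    ∃ r < s, Summable fun n : P => ((n : ℕ) : ℝ) ^ (-r) := by
  obtain ⟨_, ⟨r, rfl, hr⟩, hrs⟩ := sInf_lt_iff.mp h
  exact ⟨r, EReal.coe_lt_coe_iff.mp hrs, hr⟩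

theorem summable_of_kappa_lt (hP : ∀ n ∈ P, 2 ≤ n) (h : kappa P < (s : EReal)) :
    Summable fun n : P => ((n : ℕ) : ℝ) ^ (-s) := by
  obtain ⟨r, hrs, hr⟩ := exists_lt_summable_of_kappa_lt h
  exact hr.of_nonneg_of_le (fun n => by positivity) fun n =>
    Real.rpow_le_rpow_of_exponent_le (Nat.one_le_cast.mpr (two_pos.trans_le (hP n n.2)))
      (neg_le_neg hrs.le)

theorem eventually_kappa_lt (h : kappa P < (ρ : EReal)) :
    ∀ᶠ s : ℝ in 𝓝 ρ, kappa P < (s : EReal) :=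
  (continuous_coe_real_ereal.tendsto ρ).eventually_const_lt h

theorem Pval_pos (hP : ∀ n ∈ P, 2 ≤ n) (hne : P.Nonempty) (h : kappa P < (s : EReal)) :
    0 < Pval P s := by
  obtain ⟨n, hn⟩ := hne
  have := two_pos.trans_le (hP n hn)
  exact (summable_of_kappa_lt hP h).tsum_pos (fun _ => by positivity) ⟨n, hn⟩ (by positivity)

theorem exists_summable_bound_rpow_neg (hP : ∀ n ∈ P, 2 ≤ n) (h : kappa P < (ρ : EReal)) :
    ∃ b : P → ℝ, Summable b ∧
      ∀ᶠ s in 𝓝 ρ, ∀ n : P, ((n : ℕ) : ℝ) ^ (-s) * (1 + Real.log (n : ℕ)) ≤ b n := by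
  obtain ⟨r, hrρ, hr⟩ := exists_lt_summable_of_kappa_lt h
  obtain ⟨q, hrq, hqρ⟩ := exists_between hrρ
  refine ⟨fun n => ((n : ℕ) : ℝ) ^ (-r) * (1 + 1 / (q - r)), hr.mul_right _, ?_⟩
  filter_upwards [lt_mem_nhds hqρ] with s hs n
  have hpos : 0 < (n : ℕ) := two_pos.trans_le (hP n n.2)
  have hn : (0 : ℝ) < (n : ℕ) := Nat.cast_pos.mpr hpos
  have := Real.log_natCast_nonneg (n : ℕ)
  have hlogle := Real.log_le_rpow_div hn.le (sub_pos.mpr hrq)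
  calc ((n : ℕ) : ℝ) ^ (-s) * (1 + Real.log (n : ℕ))
      ≤ ((n : ℕ) : ℝ) ^ (-q) * (1 + Real.log (n : ℕ)) := by
        gcongr; exact Nat.one_le_cast.mpr hpos
    _ ≤ ((n : ℕ) : ℝ) ^ (-q) * 1 + ((n : ℕ) : ℝ) ^ (-q) * (((n : ℕ) : ℝ) ^ (q - r) / (q - r)) := by
        rw [mul_add]; gcongr
    _ = ((n : ℕ) : ℝ) ^ (-q) + ((n : ℕ) : ℝ) ^ (-r) / (q - r) := by
        rw [mul_one, ← mul_div_assoc, ← Real.rpow_add hn]; ring_nf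
    _ ≤ ((n : ℕ) : ℝ) ^ (-r) + ((n : ℕ) : ℝ) ^ (-r) / (q - r) := by
        gcongr; exact Nat.one_le_cast.mpr hpos
    _ = ((n : ℕ) : ℝ) ^ (-r) * (1 + 1 / (q - r)) := by ring

theorem continuousAt_Pval (hP : ∀ n ∈ P, 2 ≤ n) (h : kappa P < (ρ : EReal)) :
    ContinuousAt (Pval P) ρ := by
  obtain ⟨b, hb, hbound⟩ := exists_summable_bound_rpow_neg hP h
  refine tendsto_tsum_of_dominated_convergence hb (fun n => ?_) ?_
  · have := two_pos.trans_le (hP n n.2)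
    exact ContinuousAt.rpow continuousAt_const continuousAt_id.neg (.inl (by positivity))
  · filter_upwards [hbound] with s hs n
    have hpos := Real.rpow_nonneg (Nat.cast_nonneg (α := ℝ) (n : ℕ)) (-s)
    rw [Real.norm_of_nonneg hpos]
    exact (le_mul_of_one_le_right hpos (by simpa using Real.log_natCast_nonneg n)).trans (hs n)

/-- The probability weights `n^{-s} / 𝒫(s)` on `P`, the step distribution of the renewal process
of the sums `log n₁ + ⋯ + log n_m`. -/
def tiltedWeight (P : Set ℕ) (s : ℝ) (n : P) : ℝ := ((n : ℕ) : ℝ) ^ (-s) / Pval P s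

theorem hasSum_tiltedWeight (hP : ∀ n ∈ P, 2 ≤ n) (hne : P.Nonempty)
    (h : kappa P < (s : EReal)) : HasSum (tiltedWeight P s) 1 := by
  have := (summable_of_kappa_lt hP h).hasSum.div_const (Pval P s)
  rwa [← Pval, div_self (Pval_pos hP hne h).ne'] at this

theorem tiltedWeight_pos (hP : ∀ n ∈ P, 2 ≤ n) (h : kappa P < (s : EReal)) (n : P) :
    0 < tiltedWeight P s n :=
  div_pos (Real.rpow_pos_of_pos (Nat.cast_pos.mpr (two_pos.trans_le (hP n n.2))) _)
    (Pval_pos hP ⟨n, n.2⟩ h)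

theorem tendsto_tiltedWeight (hP : ∀ n ∈ P, 2 ≤ n) (h : kappa P < (ρ : EReal)) (n : P) :
    Tendsto (fun s => tiltedWeight P s n) (𝓝 ρ) (𝓝 (tiltedWeight P ρ n)) := by
  have := two_pos.trans_le (hP n n.2)
  exact (ContinuousAt.rpow continuousAt_const continuousAt_id.neg (.inl (by positivity))).div
    (continuousAt_Pval hP h) (Pval_pos hP ⟨n, n.2⟩ h).ne'

theorem exists_summable_bound_tiltedWeight (hP : ∀ n ∈ P, 2 ≤ n) (hne : P.Nonempty)
    (h : kappa P < (ρ : EReal)) :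
    ∃ b : P → ℝ, Summable b ∧
      ∀ᶠ s in 𝓝 ρ, ∀ n : P, tiltedWeight P s n * (1 + Real.log (n : ℕ)) ≤ b n := by
  obtain ⟨b, hb, hbound⟩ := exists_summable_bound_rpow_neg hP h
  have hpos := Pval_pos hP hne h
  refine ⟨fun n => b n / (Pval P ρ / 2), hb.div_const _, ?_⟩
  filter_upwards [hbound, (continuousAt_Pval hP h).eventually_const_lt (half_lt_self hpos)]
    with s hs hPs n
  have hnonneg : 0 ≤ ((n : ℕ) : ℝ) ^ (-s) * (1 + Real.log (n : ℕ)) := by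
    have := Real.log_natCast_nonneg n
    positivity
  rw [tiltedWeight, div_mul_eq_mul_div]
  exact div_le_div₀ (hnonneg.trans (hs n)) (hs n) (half_pos hpos) hPs.le

end DirichletSeries

section Renewal

/-- The exponentially normalized summatory function of the ordered factorizations weighted by
`𝒫(s)⁻¹` per factor, on a logarithmic scale: the renewal measure of `tiltedWeight P s`, tilted
back by `e^{-sx}`. -/
def renewalFun (P : Set ℕ) (s x : ℝ) : ℝ :=
  Real.exp (-s * x) * factorGenFun P (Pval P s)⁻¹ ⌊Real.exp x⌋₊

variable {P : Set ℕ} {s x : ℝ}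

theorem renewalFun_of_neg (s : ℝ) (hx : x < 0) : renewalFun P s x = 0 := by
  rw [renewalFun, Nat.floor_eq_zero.mpr (Real.exp_lt_one_iff.mpr hx), factorGenFun,
    Finset.range_zero, Finset.sum_empty, mul_zero]

theorem one_le_floor_exp (hx : 0 ≤ x) : 1 ≤ ⌊Real.exp x⌋₊ :=
  (Nat.one_le_floor_iff _).mpr (Real.one_le_exp hx)

theorem Pval_inv_nonneg (P : Set ℕ) (s : ℝ) : 0 ≤ (Pval P s)⁻¹ :=
  inv_nonneg.mpr (tsum_nonneg fun _ => Real.rpow_nonneg (Nat.cast_nonneg _) _)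

theorem renewalFun_nonneg (P : Set ℕ) (s x : ℝ) : 0 ≤ renewalFun P s x :=
  mul_nonneg (Real.exp_pos _).le (Finset.sum_nonneg fun _ _ =>
    mul_nonneg (Nat.cast_nonneg _) (pow_nonneg (Pval_inv_nonneg P s) _))

theorem monotone_factorGenFun_floor_exp (hP : ∀ n ∈ P, 2 ≤ n) (s : ℝ) :
    Monotone fun x : ℝ => factorGenFun P (Pval P s)⁻¹ ⌊Real.exp x⌋₊ := fun _ _ h =>
  factorGenFun_mono hP (Pval_inv_nonneg P s) (Nat.floor_mono (Real.exp_le_exp.mpr h))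

theorem renewalFun_le_exp_mul_renewalFun (hP : ∀ n ∈ P, 2 ≤ n) (s : ℝ) {u v : ℝ} (h : u ≤ v) :
    renewalFun P s u ≤ Real.exp (s * (v - u)) * renewalFun P s v := by
  rw [renewalFun, renewalFun, ← mul_assoc, ← Real.exp_add,
    show s * (v - u) + -s * v = -s * u by ring]
  exact mul_le_mul_of_nonneg_left (monotone_factorGenFun_floor_exp hP s h) (Real.exp_pos _).le

theorem intervalIntegrable_renewalFun (hP : ∀ n ∈ P, 2 ≤ n) (s a b : ℝ) :
    IntervalIntegrable (renewalFun P s) volume a b :=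
  (monotone_factorGenFun_floor_exp hP s).intervalIntegrable.continuousOn_mul
    (Continuous.continuousOn (by fun_prop))

theorem measurable_renewalFun (hP : ∀ n ∈ P, 2 ≤ n) (s : ℝ) : Measurable (renewalFun P s) :=
  Measurable.mul (by fun_prop) (monotone_factorGenFun_floor_exp hP s).measurable

theorem hasSum_tiltedWeight_mul_renewalFun_sub (hP : ∀ n ∈ P, 2 ≤ n) (s x : ℝ) :
    HasSum (fun n : P => tiltedWeight P s n * renewalFun P s (x - Real.log (n : ℕ)))
      (renewalFun P s x - (Set.Ici 0).indicator (fun u => Real.exp (-s * u)) x) := by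
  have hlog : ∀ n : P, 0 ≤ Real.log (n : ℕ) := fun n => Real.log_natCast_nonneg n
  rcases lt_or_ge x 0 with hx | hx
  · rw [renewalFun_of_neg s hx, Set.indicator_of_notMem (by simpa using hx), sub_zero]
    refine hasSum_zero.congr_fun fun n => ?_
    rw [renewalFun_of_neg s (by linarith [hlog n]), mul_zero]
  · have h := (hasSum_factorGenFun_div hP (Pval P s)⁻¹ (one_le_floor_exp hx)).mul_left
      (Real.exp (-s * x))
    rw [mul_sub, mul_one] at h
    rw [Set.indicator_of_mem (Set.mem_Ici.mpr hx)]
    refine h.congr_fun fun n => ?_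
    have hn : 0 < (n : ℕ) := two_pos.trans_le (hP n n.2)
    have hfloor : ⌊Real.exp (x - Real.log (n : ℕ))⌋₊ = ⌊Real.exp x⌋₊ / n := by
      rw [Real.exp_sub, Real.exp_log (Nat.cast_pos.mpr hn), Nat.floor_div_natCast]
    have hexp : ((n : ℕ) : ℝ) ^ (-s) * Real.exp (-s * (x - Real.log (n : ℕ))) =
        Real.exp (-s * x) := by
      rw [rpow_neg_eq_exp_neg_mul_log hn, ← Real.exp_add]; ring_nf
    rw [renewalFun, hfloor, tiltedWeight, ← hexp]
    ring

theorem integral_renewalFun_sub_log (hP : ∀ n ∈ P, 2 ≤ n) (s x : ℝ) {L : ℝ} (hL : 0 ≤ L) :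
    ∫ u in 0..x, renewalFun P s (u - L) =
      (∫ u in 0..x, renewalFun P s u) - ∫ y in 0..L, renewalFun P s (x - y) := by
  have hint := intervalIntegrable_renewalFun hP s
  have hneg : ∫ u in -L..0, renewalFun P s u = 0 := by
    rw [intervalIntegral.integral_of_le (by linarith), ← integral_Ico_eq_integral_Ioc]
    exact setIntegral_eq_zero_of_forall_eq_zero fun u hu => renewalFun_of_neg s hu.2
  rw [intervalIntegral.integral_comp_sub_right (renewalFun P s),
    intervalIntegral.integral_comp_sub_left (renewalFun P s), sub_zero, zero_sub,
    ← intervalIntegral.integral_add_adjacent_intervals (hint _ 0) (hint 0 _), hneg, zero_add,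
    ← intervalIntegral.integral_add_adjacent_intervals (hint 0 (x - L)) (hint _ x),
    add_sub_cancel_right]

theorem hasSum_tiltedWeight_mul_integral_renewalFun (hP : ∀ n ∈ P, 2 ≤ n) (hne : P.Nonempty)
    (h : kappa P < (s : EReal)) (hs : 0 < s) (hx : 0 ≤ x) :
    HasSum (fun n : P => tiltedWeight P s n *
      ∫ y in 0..Real.log (n : ℕ), renewalFun P s (x - y)) ((1 - Real.exp (-s * x)) / s) := by
  have hint := intervalIntegrable_renewalFun hP s
  set w : ℝ → ℝ := (Set.Ici 0).indicator fun u => Real.exp (-s * u)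
  have hw : Set.EqOn w (fun u => Real.exp (-s * u)) (Set.uIcc 0 x) := fun u hu => by
    rw [Set.uIcc_of_le hx] at hu
    exact Set.indicator_of_mem (Set.mem_Ici.mpr hu.1) _
  have hwint : IntervalIntegrable w volume 0 x :=
    ((continuous_const_mul (-s)).rexp.intervalIntegrable 0 x).congr
      (hw.symm.mono Set.uIoc_subset_uIcc)
  have hwval : ∫ u in 0..x, w u = (1 - Real.exp (-s * x)) / s := by
    rw [intervalIntegral.integral_congr hw,
      intervalIntegral.integral_comp_mul_left _ (neg_ne_zero.mpr hs.ne'), integral_exp]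
    simp only [mul_zero, Real.exp_zero, smul_eq_mul]
    field_simp
    ring
  have hrenewal := hasSum_tiltedWeight_mul_renewalFun_sub hP s
  have hswap : HasSum (fun n : P => ∫ u in 0..x,
      tiltedWeight P s n * renewalFun P s (u - Real.log (n : ℕ)))
      (∫ u in 0..x, (renewalFun P s u - w u)) := by
    refine intervalIntegral.hasSum_integral_of_dominated_convergence
      (fun n u => tiltedWeight P s n * renewalFun P s (u - Real.log (n : ℕ)))
      (fun n => ?_) (fun n => ?_) ?_ ?_ ?_
    · exact (((measurable_renewalFun hP s).comp (measurable_id.sub_const _)).const_mul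
        _).aestronglyMeasurable
    · exact .of_forall fun u _ => (Real.norm_of_nonneg (mul_nonneg (tiltedWeight_pos hP h n).le
        (renewalFun_nonneg P s _))).le
    · exact .of_forall fun u _ => (hrenewal u).summable
    · simp only [fun u => (hrenewal u).tsum_eq]
      exact (hint 0 x).sub hwint
    · exact .of_forall fun u _ => hrenewal u
  rw [intervalIntegral.integral_sub (hint 0 x) hwint, hwval] at hswap
  have htotal := (hasSum_tiltedWeight hP hne h).mul_right (∫ u in 0..x, renewalFun P s u)
  have hdiff := htotal.sub hswap
  rw [one_mul, sub_sub_cancel] at hdiff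
  refine hdiff.congr_fun fun n => ?_
  rw [intervalIntegral.integral_const_mul,
    integral_renewalFun_sub_log hP s x (Real.log_natCast_nonneg _)]
  ring

theorem mul_renewalFun_le_integral (hP : ∀ n ∈ P, 2 ≤ n) (hs : 0 < s) {L : ℝ} (hL : 0 ≤ L)
    (x : ℝ) :
    L * (Real.exp (-(s * L)) * renewalFun P s x) ≤ ∫ y in 0..L, renewalFun P s (x + L - y) := by
  have hconst : ∫ _ in 0..L, Real.exp (-(s * L)) * renewalFun P s x =
      L * (Real.exp (-(s * L)) * renewalFun P s x) := by
    rw [intervalIntegral.integral_const, sub_zero, smul_eq_mul]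
  rw [← hconst]
  refine intervalIntegral.integral_mono_on hL intervalIntegrable_const
    (by simpa using (intervalIntegrable_renewalFun hP s (x + L) x).comp_sub_left (x + L))
    fun y hy => ?_
  rw [Real.exp_neg, inv_mul_le_iff₀ (Real.exp_pos _)]
  have hy0 : 0 ≤ y := hy.1
  refine (renewalFun_le_exp_mul_renewalFun hP s (v := x + L - y) (by linarith [hy.2])).trans ?_
  gcongr
  · exact renewalFun_nonneg P s _
  · linarith

theorem renewalFun_le (hP : ∀ n ∈ P, 2 ≤ n) (h : kappa P < (s : EReal)) (hs : 0 < s)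
    (n : P) (x : ℝ) :
    renewalFun P s x ≤
      Real.exp (s * Real.log (n : ℕ)) / (s * Real.log (n : ℕ) * tiltedWeight P s n) := by
  set L := Real.log (n : ℕ)
  have hL : 0 < L := Real.log_pos (Nat.one_lt_cast.mpr (hP n n.2))
  have hp := tiltedWeight_pos hP h n
  rcases lt_or_ge x 0 with hx | hx
  · rw [renewalFun_of_neg s hx]; positivity
  have hsum := hasSum_tiltedWeight_mul_integral_renewalFun hP ⟨n, n.2⟩ h hs (add_nonneg hx hL.le)
  have hterm := le_hasSum hsum n fun m _ => mul_nonneg (tiltedWeight_pos hP h m).le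
    (intervalIntegral.integral_nonneg (Real.log_natCast_nonneg _) fun _ _ =>
      renewalFun_nonneg P s _)
  have hupper : (1 - Real.exp (-s * (x + L))) / s ≤ 1 / s := by
    gcongr; linarith [Real.exp_pos (-s * (x + L))]
  have hkey := (mul_le_mul_of_nonneg_left (mul_renewalFun_le_integral hP hs hL.le x) hp.le).trans
    (hterm.trans hupper)
  rw [le_div_iff₀ hs, Real.exp_neg] at hkey
  rw [le_div_iff₀ (by positivity), ← div_le_one (Real.exp_pos _)]
  calc _ = tiltedWeight P s n * (L * ((Real.exp (s * L))⁻¹ * renewalFun P s x)) * s := by ring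
    _ ≤ 1 := hkey

theorem exists_eventually_forall_renewalFun_le {ρ : ℝ} (hP : ∀ n ∈ P, 2 ≤ n) (hne : P.Nonempty)
    (h : kappa P < (ρ : EReal)) (hρ : 0 < ρ) :
    ∃ C, ∀ᶠ s in 𝓝 ρ, ∀ x, renewalFun P s x ≤ C := by
  obtain ⟨n, hn⟩ := hne
  set L := Real.log (n : ℕ)
  have hL : 0 < L := Real.log_pos (Nat.one_lt_cast.mpr (hP n hn))
  have hp := tiltedWeight_pos hP h ⟨n, hn⟩
  have hlim : Tendsto (fun s => Real.exp (s * L) / (s * L * tiltedWeight P s ⟨n, hn⟩)) (𝓝 ρ)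
      (𝓝 (Real.exp (ρ * L) / (ρ * L * tiltedWeight P ρ ⟨n, hn⟩))) :=
    ((tendsto_id.mul_const L).rexp).div
      ((tendsto_id.mul_const L).mul (tendsto_tiltedWeight hP h _)) (by positivity)
  refine ⟨Real.exp (ρ * L) / (ρ * L * tiltedWeight P ρ ⟨n, hn⟩) + 1, ?_⟩
  filter_upwards [hlim.eventually_le_const (lt_add_one _), eventually_kappa_lt h, lt_mem_nhds hρ]
    with s hs hκ hs0 x
  exact (renewalFun_le hP hκ hs0 ⟨n, hn⟩ x).trans hs

end Renewal

section Limits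

theorem eq_of_monotone_of_continuous_of_eqOn_dense {α β : Type*} [TopologicalSpace α]
    [LinearOrder α] [OrderTopology α] [DenselyOrdered α] [NoMinOrder α] [NoMaxOrder α]
    [TopologicalSpace β] [PartialOrder β] [OrderClosedTopology β] {f g : α → β} {s : Set α}
    (hf : Monotone f) (hg : Continuous g) (hs : Dense s) (hfg : Set.EqOn f g s) : f = g := by
  have hneBot : ∀ {t : Set α} {y : α}, IsOpen t → y ∈ closure t → NeBot (𝓝[t ∩ s] y) :=
    fun ht hy => mem_closure_iff_nhdsWithin_neBot.mp
      (closure_minimal (hs.open_subset_closure_inter ht) isClosed_closure hy)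
  ext y
  have := hneBot (isOpen_Iio (a := y)) (y := y) (by simp)
  have := hneBot (isOpen_Ioi (a := y)) (y := y) (by simp)
  refine le_antisymm (ge_of_tendsto (hg.continuousWithinAt (s := Set.Ioi y ∩ s)) ?_)
    (le_of_tendsto (hg.continuousWithinAt (s := Set.Iio y ∩ s)) ?_)
  · filter_upwards [self_mem_nhdsWithin] with u hu
    exact (hf (le_of_lt hu.1)).trans_eq (hfg hu.2)
  · filter_upwards [self_mem_nhdsWithin] with u hu
    exact (hfg hu.2).symm.trans_le (hf (le_of_lt hu.1))

theorem exists_tendsto_of_eventually_mem_isCompact {α β : Type*} [TopologicalSpace β] {K : Set β}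
    (hK : IsCompact K) {𝒰 : Ultrafilter α} {u : α → β} (hu : ∀ᶠ a in 𝒰, u a ∈ K) :
    ∃ b, Tendsto u 𝒰 (𝓝 b) := by
  obtain ⟨b, -, hb⟩ := hK.ultrafilter_le_nhds (𝒰.map u) (le_principal_iff.mpr hu)
  exact ⟨b, hb⟩

theorem exists_eventually_floor_add_eq {α : Type*} (𝒰 : Ultrafilter α) (u : α → ℝ) (v : ℝ) :
    ∃ j : ℤ, ∀ᶠ a in 𝒰, ⌊u a + v⌋ = ⌊u a + j⌋ := by
  have hcases : ∀ᶠ a in 𝒰, ⌊u a + v⌋ = ⌊u a⌋ + ⌊v⌋ ∨ ⌊u a + v⌋ = ⌊u a⌋ + (⌊v⌋ + 1) :=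
    .of_forall fun a => by
      have := Int.le_floor_add (u a) v
      have := Int.le_floor_add_floor (u a) v
      omega
  simp only [Int.floor_add_intCast]
  exact (Ultrafilter.eventually_or.mp hcases).elim (fun h => ⟨_, h⟩) fun h => ⟨_, h⟩

theorem dense_or_exists_pos_eq_zmultiples {H : AddSubgroup ℝ} (hH : H ≠ ⊥) :
    Dense (H : Set ℝ) ∨ ∃ a > 0, H = AddSubgroup.zmultiples a := by
  refine (AddSubgroup.dense_or_cyclic H).imp_right fun ⟨a, ha⟩ => ⟨|a|, ?_, ?_⟩
  · rw [gt_iff_lt, abs_pos]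
    rintro rfl
    exact hH (ha.trans AddSubgroup.closure_singleton_zero)
  · rw [ha, zmultiples_abs, AddSubgroup.zmultiples_eq_closure]

end Limits

section RenewalLimits

variable {P : Set ℕ} {ρ : ℝ} {α : Type*} {l : Filter α} {s X : α → ℝ}

theorem hasSum_tiltedWeight_mul_of_tendsto [NeBot l] (hP : ∀ n ∈ P, 2 ≤ n) (hne : P.Nonempty)
    (hκ : kappa P < (ρ : EReal)) (hs : Tendsto s l (𝓝 ρ)) {F : α → P → ℝ} {f : P → ℝ}
    (hF : ∀ n, Tendsto (fun a => F a n) l (𝓝 (f n))) {C : ℝ} (hC : 0 ≤ C)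
    (hFC : ∀ᶠ a in l, ∀ n, |F a n| ≤ C * (1 + Real.log (n : ℕ))) {S : α → ℝ} {T : ℝ}
    (hFS : ∀ᶠ a in l, HasSum (fun n => tiltedWeight P (s a) n * F a n) (S a))
    (hST : Tendsto S l (𝓝 T)) : HasSum (fun n => tiltedWeight P ρ n * f n) T := by
  obtain ⟨b, hb, hweight⟩ := exists_summable_bound_tiltedWeight hP hne hκ
  have hterm : ∀ n, Tendsto (fun a => tiltedWeight P (s a) n * F a n) l
      (𝓝 (tiltedWeight P ρ n * f n)) := fun n =>
    ((tendsto_tiltedWeight hP hκ n).comp hs).mul (hF n)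
  have hbound : ∀ᶠ a in l, ∀ n, ‖tiltedWeight P (s a) n * F a n‖ ≤ C * b n := by
    filter_upwards [hs.eventually hweight, hs.eventually (eventually_kappa_lt hκ), hFC]
      with a hba hκa hFa n
    have hp := (tiltedWeight_pos hP hκa n).le
    rw [norm_mul, Real.norm_of_nonneg hp]
    calc tiltedWeight P (s a) n * ‖F a n‖
        ≤ tiltedWeight P (s a) n * (C * (1 + Real.log (n : ℕ))) :=
          mul_le_mul_of_nonneg_left (hFa n) hp
      _ = C * (tiltedWeight P (s a) n * (1 + Real.log (n : ℕ))) := by ring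
      _ ≤ C * b n := mul_le_mul_of_nonneg_left (hba n) hC
  have hsummable : Summable fun n => tiltedWeight P ρ n * f n :=
    (hb.mul_left C).of_norm_bounded fun n =>
      le_of_tendsto (hterm n).norm (hbound.mono fun _ h => h n)
  have htsum : Tendsto S l (𝓝 (∑' n, tiltedWeight P ρ n * f n)) :=
    (tendsto_tsum_of_dominated_convergence (hb.mul_left C) hterm hbound).congr'
      (hFS.mono fun _ h => h.tsum_eq)
  exact tendsto_nhds_unique htsum hST ▸ hsummable.hasSum

theorem exists_tendsto_renewalFun (hP : ∀ n ∈ P, 2 ≤ n) (hne : P.Nonempty)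
    (hκ : kappa P < (ρ : EReal)) (hρ : 0 < ρ) {𝒰 : Ultrafilter α} (hs : Tendsto s 𝒰 (𝓝 ρ))
    (X : α → ℝ) : ∃ b, Tendsto (fun a => renewalFun P (s a) (X a)) 𝒰 (𝓝 b) := by
  obtain ⟨C, hC⟩ := exists_eventually_forall_renewalFun_le hP hne hκ hρ
  exact exists_tendsto_of_eventually_mem_isCompact (isCompact_Icc (a := 0) (b := C))
    ((hs.eventually hC).mono fun _ h => ⟨renewalFun_nonneg P _ _, h _⟩)

theorem hasSum_tiltedWeight_mul_of_tendsto_renewalFun [NeBot l] (hP : ∀ n ∈ P, 2 ≤ n)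
    (hne : P.Nonempty) (hκ : kappa P < (ρ : EReal)) (hρ : 0 < ρ) (hs : Tendsto s l (𝓝 ρ))
    (hX : Tendsto X l atTop) {h : ℝ → ℝ}
    (hh : ∀ y, Tendsto (fun a => renewalFun P (s a) (X a + y)) l (𝓝 (h y))) (y : ℝ) :
    HasSum (fun n : P => tiltedWeight P ρ n * h (y - Real.log (n : ℕ))) (h y) := by
  obtain ⟨C, hC⟩ := exists_eventually_forall_renewalFun_le hP hne hκ hρ
  have hC0 : 0 ≤ C := by
    obtain ⟨t, ht⟩ := hC.exists
    exact (renewalFun_nonneg P t 0).trans (ht 0)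
  have hXy : Tendsto (fun a => X a + y) l atTop := tendsto_atTop_add_const_right _ y hX
  have hboundary : Tendsto (fun a => (Set.Ici 0).indicator (fun u => Real.exp (-s a * u)) (X a + y))
      l (𝓝 0) := by
    have hexp : Tendsto (fun a => Real.exp (-s a * (X a + y))) l (𝓝 0) :=
      Real.tendsto_exp_atBot.comp (hs.neg.neg_mul_atTop (neg_neg_of_pos hρ) hXy)
    refine hexp.congr' ((hXy.eventually_ge_atTop 0).mono fun a ha => ?_)
    simp only [Set.indicator_of_mem (Set.mem_Ici.mpr ha)]
  have hlim := (hh y).sub hboundary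
  rw [sub_zero] at hlim
  refine hasSum_tiltedWeight_mul_of_tendsto hP hne hκ hs
    (F := fun a n => renewalFun P (s a) (X a + y - Real.log (n : ℕ)))
    (fun n => by simpa only [add_sub_assoc] using hh (y - Real.log (n : ℕ))) hC0 ?_
    (.of_forall fun a => hasSum_tiltedWeight_mul_renewalFun_sub hP (s a) (X a + y)) hlim
  filter_upwards [hs.eventually hC] with a ha n
  rw [abs_of_nonneg (renewalFun_nonneg P _ _)]
  exact (ha _).trans (le_mul_of_one_le_right hC0
    (le_add_of_nonneg_right (Real.log_natCast_nonneg _)))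

theorem apply_add_eq_of_tendsto_renewalFun [NeBot l] (hP : ∀ n ∈ P, 2 ≤ n) (hne : P.Nonempty)
    (hκ : kappa P < (ρ : EReal)) (hρ : 0 < ρ) (hs : Tendsto s l (𝓝 ρ)) (hX : Tendsto X l atTop)
    {h : ℝ → ℝ} (hh : ∀ y, Tendsto (fun a => renewalFun P (s a) (X a + y)) l (𝓝 (h y))) {g : ℝ}
    (hg : g ∈ AddSubgroup.closure ((fun n : ℕ => Real.log n) '' P)) (y : ℝ) :
    h (y + g) = h y := by
  obtain ⟨C, hC⟩ := exists_eventually_forall_renewalFun_le hP hne hκ hρ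
  have hbound : ∀ y, |h y| ≤ C := fun y => by
    rw [abs_of_nonneg (ge_of_tendsto' (hh y) fun _ => renewalFun_nonneg P _ _)]
    exact le_of_tendsto (hh y) ((hs.eventually hC).mono fun _ ha => ha _)
  refine apply_add_eq_of_mem_closure ?_ hg y
  rintro _ ⟨n, hn, rfl⟩ x
  exact apply_sub_eq_of_hasSum_mul_apply_sub (fun m => (tiltedWeight_pos hP hκ m).le)
    (hasSum_tiltedWeight hP hne hκ) hbound
    (hasSum_tiltedWeight_mul_of_tendsto_renewalFun hP hne hκ hρ hs hX hh)
    (tiltedWeight_pos hP hκ ⟨n, hn⟩) x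

theorem monotone_exp_mul_of_tendsto_renewalFun [NeBot l] (hP : ∀ n ∈ P, 2 ≤ n)
    (hs : Tendsto s l (𝓝 ρ)) {h : ℝ → ℝ}
    (hh : ∀ y, Tendsto (fun a => renewalFun P (s a) (X a + y)) l (𝓝 (h y))) :
    Monotone fun y => Real.exp (ρ * y) * h y := by
  intro u v huv
  have hle : h u ≤ Real.exp (ρ * (v - u)) * h v :=
    le_of_tendsto_of_tendsto' (hh u) ((hs.mul_const _).rexp.mul (hh v)) fun a => by
      simpa using renewalFun_le_exp_mul_renewalFun hP (s a) (add_le_add_right huv (X a))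
  calc Real.exp (ρ * u) * h u ≤ Real.exp (ρ * u) * (Real.exp (ρ * (v - u)) * h v) := by gcongr
    _ = Real.exp (ρ * v) * h v := by rw [← mul_assoc, ← Real.exp_add]; ring_nf

theorem renewalFun_eq_of_floor_div_eq (hP : ∀ n ∈ P, 2 ≤ n) {a : ℝ} (ha : 0 < a)
    (hPa : ∀ n ∈ P, Real.log n ∈ AddSubgroup.zmultiples a) {x y : ℝ} (hxy : ⌊x / a⌋ = ⌊y / a⌋)
    (s : ℝ) : renewalFun P s x = Real.exp (-s * (x - y)) * renewalFun P s y := by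
  have hcount : factorGenFun P (Pval P s)⁻¹ ⌊Real.exp x⌋₊ =
      factorGenFun P (Pval P s)⁻¹ ⌊Real.exp y⌋₊ := by
    rw [factorGenFun_eq_sum_range hP _ (le_max_left _ ⌊Real.exp y⌋₊),
      factorGenFun_eq_sum_range hP _ (le_max_right ⌊Real.exp x⌋₊ _)]
    simp only [tupleCount_floor_exp_congr hP ha hPa _ hxy]
  rw [renewalFun, renewalFun, hcount, ← mul_assoc, ← Real.exp_add]
  ring_nf

-- The limits need not be known: in the lattice case they depend on the position of `X` modulo the
-- lattice, but the factor `c` is the same for all `s`, so it cancels from the cross products below.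
theorem exists_forall_eq_mul_of_tendsto_renewalFun (hP : ∀ n ∈ P, 2 ≤ n) (hne : P.Nonempty)
    (hκ : kappa P < (ρ : EReal)) (hρ : 0 < ρ) {𝒰 : Ultrafilter α} (hX : Tendsto X 𝒰 atTop)
    (y : ℝ) :
    ∃ c : ℝ, ∀ (s : α → ℝ) (h : ℝ → ℝ), Tendsto s 𝒰 (𝓝 ρ) →
      (∀ y, Tendsto (fun a => renewalFun P (s a) (X a + y)) 𝒰 (𝓝 (h y))) → h y = c * h 0 := by
  set H := AddSubgroup.closure ((fun n : ℕ => Real.log n) '' P)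
  have hlog : ∀ n ∈ P, Real.log n ∈ H := fun n hn => AddSubgroup.subset_closure ⟨n, hn, rfl⟩
  have hH : H ≠ ⊥ := by
    obtain ⟨n, hn⟩ := hne
    exact fun hbot => (Real.log_pos (Nat.one_lt_cast.mpr (hP n hn))).ne'
      (AddSubgroup.mem_bot.mp (hbot ▸ hlog n hn))
  have hperiod : ∀ {s : α → ℝ} {h : ℝ → ℝ}, Tendsto s 𝒰 (𝓝 ρ) →
      (∀ y, Tendsto (fun a => renewalFun P (s a) (X a + y)) 𝒰 (𝓝 (h y))) →
      ∀ g ∈ H, h g = h 0 := fun hs hh g hg => by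
    simpa using apply_add_eq_of_tendsto_renewalFun hP hne hκ hρ hs hX hh hg 0
  rcases dense_or_exists_pos_eq_zmultiples hH with hdense | ⟨a, ha, hHa⟩
  · refine ⟨1, fun s h hs hh => ?_⟩
    have heq := eq_of_monotone_of_continuous_of_eqOn_dense
      (monotone_exp_mul_of_tendsto_renewalFun hP hs hh)
      (g := fun u => Real.exp (ρ * u) * h 0) (by fun_prop) hdense
      fun g hg => by simp only [hperiod hs hh g hg]
    rw [one_mul]
    exact mul_left_cancel₀ (Real.exp_ne_zero _) (congrFun heq y)
  · obtain ⟨j, hj⟩ := exists_eventually_floor_add_eq 𝒰 (fun b => X b / a) (y / a)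
    refine ⟨Real.exp (-ρ * (y - j * a)), fun s h hs hh => ?_⟩
    have hja : j * a ∈ H := hHa ▸ ⟨j, by simp⟩
    refine hperiod hs hh _ hja ▸ tendsto_nhds_unique (hh y)
      (((hs.neg.mul_const _).rexp.mul (hh (j * a))).congr' (hj.mono fun b hb => ?_))
    have hfloor : ⌊(X b + y) / a⌋ = ⌊(X b + j * a) / a⌋ := by
      rwa [add_div, add_div, mul_div_cancel_right₀ _ ha.ne']
    simpa using (renewalFun_eq_of_floor_div_eq hP ha (hHa ▸ hlog) hfloor (s b)).symm

theorem tendsto_renewalFun_mul_sub_mul (hP : ∀ n ∈ P, 2 ≤ n) (hne : P.Nonempty)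
    (hκ : kappa P < (ρ : EReal)) (hρ : 0 < ρ) (y : ℝ) :
    Tendsto (fun q : ℝ × ℝ => renewalFun P ρ q.2 * renewalFun P q.1 (q.2 + y) -
      renewalFun P q.1 q.2 * renewalFun P ρ (q.2 + y)) (𝓝 ρ ×ˢ atTop) (𝓝 0) := by
  refine (tendsto_iff_ultrafilter _ _ _).mpr fun 𝒰 h𝒰 => ?_
  have hs : Tendsto Prod.fst (𝒰 : Filter (ℝ × ℝ)) (𝓝 ρ) := tendsto_fst.mono_left h𝒰
  have hX : Tendsto Prod.snd (𝒰 : Filter (ℝ × ℝ)) atTop := tendsto_snd.mono_left h𝒰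
  choose h hh using fun y => exists_tendsto_renewalFun hP hne hκ hρ hs (fun q => q.2 + y)
  choose g hg using fun y =>
    exists_tendsto_renewalFun hP hne hκ hρ
      (tendsto_const_nhds (f := (𝒰 : Filter (ℝ × ℝ)))) (fun q => q.2 + y)
  obtain ⟨c, hc⟩ := exists_forall_eq_mul_of_tendsto_renewalFun hP hne hκ hρ hX y
  have hlim := ((hg 0).mul (hh y)).sub ((hh 0).mul (hg y))
  rw [hc _ _ hs hh, hc _ _ tendsto_const_nhds hg,
    show g 0 * (c * h 0) - h 0 * (c * g 0) = 0 by ring] at hlim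
  simpa using hlim

theorem tendsto_renewalFun_mul_integral_sub (hP : ∀ n ∈ P, 2 ≤ n) (hne : P.Nonempty)
    (hκ : kappa P < (ρ : EReal)) (hρ : 0 < ρ) (L : ℝ) :
    Tendsto (fun q : ℝ × ℝ =>
      renewalFun P ρ q.2 * (∫ y in 0..L, renewalFun P q.1 (q.2 - y)) -
        renewalFun P q.1 q.2 * ∫ y in 0..L, renewalFun P ρ (q.2 - y)) (𝓝 ρ ×ˢ atTop) (𝓝 0) := by
  obtain ⟨C, hC⟩ := exists_eventually_forall_renewalFun_le hP hne hκ hρ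
  have hCρ := hC.self_of_nhds
  have hmeas : ∀ s x : ℝ, Measurable fun y => renewalFun P s (x - y) := fun s x =>
    (measurable_renewalFun hP s).comp (measurable_const.sub measurable_id)
  have hint : ∀ s x : ℝ, IntervalIntegrable (fun y => renewalFun P s (x - y)) volume 0 L :=
    fun s x => by simpa using (intervalIntegrable_renewalFun hP s x (x - L)).comp_sub_left x
  have hlim := intervalIntegral.tendsto_integral_filter_of_dominated_convergence
    (μ := volume) (a := 0) (b := L) (l := 𝓝 ρ ×ˢ atTop) (f := fun _ => 0)
    (F := fun (q : ℝ × ℝ) y => renewalFun P ρ q.2 * renewalFun P q.1 (q.2 - y) -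
      renewalFun P q.1 q.2 * renewalFun P ρ (q.2 - y)) (fun _ => C * C + C * C)
    (.of_forall fun q => (((hmeas _ _).const_mul _).sub
      ((hmeas _ _).const_mul _)).aestronglyMeasurable) ?_ intervalIntegrable_const
    (.of_forall fun y _ => by
      simpa only [sub_eq_add_neg] using tendsto_renewalFun_mul_sub_mul hP hne hκ hρ (-y))
  · simp only [intervalIntegral.integral_zero] at hlim
    refine hlim.congr fun q => ?_
    rw [intervalIntegral.integral_sub ((hint _ _).const_mul _) ((hint _ _).const_mul _),
      intervalIntegral.integral_const_mul, intervalIntegral.integral_const_mul]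
  · filter_upwards [tendsto_fst.eventually hC] with q hq
    have hq0 : 0 ≤ C := (renewalFun_nonneg P _ _).trans (hq 0)
    have hnonneg : ∀ s x s' x', 0 ≤ renewalFun P s x * renewalFun P s' x' := fun _ _ _ _ =>
      mul_nonneg (renewalFun_nonneg P _ _) (renewalFun_nonneg P _ _)
    refine .of_forall fun y _ => (norm_sub_le _ _).trans (add_le_add ?_ ?_)
    · rw [Real.norm_of_nonneg (hnonneg _ _ _ _)]
      exact mul_le_mul (hCρ _) (hq _) (renewalFun_nonneg P _ _) hq0
    · rw [Real.norm_of_nonneg (hnonneg _ _ _ _)]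
      exact mul_le_mul (hq _) (hCρ _) (renewalFun_nonneg P _ _) hq0

theorem integral_renewalFun_le (hP : ∀ n ∈ P, 2 ≤ n) {s : ℝ} (hs : 0 ≤ s) {L : ℝ} (hL : 0 ≤ L)
    (x : ℝ) :
    ∫ y in 0..L, renewalFun P s (x - y) ≤ L * Real.exp (s * L) * renewalFun P s x := by
  have hconst : ∫ _ in 0..L, Real.exp (s * L) * renewalFun P s x =
      L * Real.exp (s * L) * renewalFun P s x := by
    rw [intervalIntegral.integral_const, sub_zero, smul_eq_mul, mul_assoc]
  rw [← hconst]
  refine intervalIntegral.integral_mono_on hL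
    (by simpa using (intervalIntegrable_renewalFun hP s x (x - L)).comp_sub_left x)
    intervalIntegrable_const fun y hy => ?_
  refine (renewalFun_le_exp_mul_renewalFun hP s (sub_le_self x hy.1)).trans ?_
  rw [sub_sub_cancel]
  gcongr
  · exact renewalFun_nonneg P s x
  · exact hy.2

theorem abs_integral_renewalFun_le {s C L : ℝ} (hC : ∀ x, renewalFun P s x ≤ C) (hL : 0 ≤ L)
    (x : ℝ) : |∫ y in 0..L, renewalFun P s (x - y)| ≤ C * L := by
  have h := intervalIntegral.norm_integral_le_of_norm_le_const (a := 0) (b := L) (C := C)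
    (f := fun y => renewalFun P s (x - y)) fun y _ =>
      (Real.norm_of_nonneg (renewalFun_nonneg P s _)).trans_le (hC _)
  rwa [sub_zero, abs_of_nonneg hL] at h

theorem exists_hasSum_tiltedWeight_mul_of_integral_renewalFun (hP : ∀ n ∈ P, 2 ≤ n)
    (hne : P.Nonempty) (hκ : kappa P < (ρ : EReal)) (hρ : 0 < ρ) {𝒰 : Ultrafilter α}
    (hs : Tendsto s 𝒰 (𝓝 ρ)) (hX : Tendsto X 𝒰 atTop) :
    ∃ I : P → ℝ, HasSum (fun n => tiltedWeight P ρ n * I n) (1 / ρ) ∧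
      ∀ n : P, Tendsto (fun a => ∫ y in 0..Real.log (n : ℕ), renewalFun P (s a) (X a - y)) 𝒰
        (𝓝 (I n)) := by
  obtain ⟨C, hC⟩ := exists_eventually_forall_renewalFun_le hP hne hκ hρ
  have hlog : ∀ n : P, 0 ≤ Real.log (n : ℕ) := fun n => Real.log_natCast_nonneg n
  have hC0 : 0 ≤ C := (renewalFun_nonneg P ρ 0).trans (hC.self_of_nhds 0)
  have hbound : ∀ᶠ a in 𝒰, ∀ n : P,
      |∫ y in 0..Real.log (n : ℕ), renewalFun P (s a) (X a - y)| ≤ C * Real.log (n : ℕ) :=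
    (hs.eventually hC).mono fun a ha n => abs_integral_renewalFun_le ha (hlog n) (X a)
  choose I hI using fun n : P => exists_tendsto_of_eventually_mem_isCompact isCompact_Icc
    (hbound.mono fun a ha => abs_le.mp (ha n))
  refine ⟨I, hasSum_tiltedWeight_mul_of_tendsto hP hne hκ hs hI hC0
    (hbound.mono fun a ha n => (ha n).trans (by gcongr; linarith))
    (S := fun a => (1 - Real.exp (-s a * X a)) / s a) ?_ ?_, hI⟩
  · filter_upwards [hs.eventually (eventually_kappa_lt hκ), hs.eventually (lt_mem_nhds hρ),
      hX.eventually_ge_atTop 0] with a hκa hsa hXa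
    exact hasSum_tiltedWeight_mul_integral_renewalFun hP hne hκa hsa hXa
  · have hexp : Tendsto (fun a => Real.exp (-s a * X a)) 𝒰 (𝓝 0) :=
      Real.tendsto_exp_atBot.comp (hs.neg.neg_mul_atTop (neg_neg_of_pos hρ) hX)
    have hlim := (hexp.const_sub 1).div hs hρ.ne'
    rwa [sub_zero] at hlim

theorem tendsto_renewalFun_div_renewalFun (hP : ∀ n ∈ P, 2 ≤ n) (hne : P.Nonempty)
    (hκ : kappa P < (ρ : EReal)) (hρ : 0 < ρ) :
    Tendsto (fun q : ℝ × ℝ => renewalFun P q.1 q.2 / renewalFun P ρ q.2) (𝓝 ρ ×ˢ atTop) (𝓝 1) := by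
  refine (tendsto_iff_ultrafilter _ _ _).mpr fun 𝒰 h𝒰 => ?_
  have hs : Tendsto Prod.fst (𝒰 : Filter (ℝ × ℝ)) (𝓝 ρ) := tendsto_fst.mono_left h𝒰
  have hX : Tendsto Prod.snd (𝒰 : Filter (ℝ × ℝ)) atTop := tendsto_snd.mono_left h𝒰
  have hconst : Tendsto (fun _ => ρ) (𝒰 : Filter (ℝ × ℝ)) (𝓝 ρ) := tendsto_const_nhds
  obtain ⟨α, hα⟩ := exists_tendsto_renewalFun hP hne hκ hρ hs Prod.snd
  obtain ⟨β, hβ⟩ := exists_tendsto_renewalFun hP hne hκ hρ hconst Prod.snd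
  obtain ⟨I, hIsum, hI⟩ := exists_hasSum_tiltedWeight_mul_of_integral_renewalFun hP hne hκ hρ hs hX
  obtain ⟨J, hJsum, hJ⟩ :=
    exists_hasSum_tiltedWeight_mul_of_integral_renewalFun hP hne hκ hρ hconst hX
  have hcross : ∀ n, β * I n = α * J n := fun n =>
    sub_eq_zero.mp (tendsto_nhds_unique ((hβ.mul (hI n)).sub (hα.mul (hJ n)))
      ((tendsto_renewalFun_mul_integral_sub hP hne hκ hρ _).mono_left h𝒰))
  have hβα : β * (1 / ρ) = α * (1 / ρ) :=
    (hIsum.mul_left β).unique ((hJsum.mul_left α).congr_fun fun n => by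
      rw [mul_left_comm, hcross, mul_left_comm])
  have hβ0 : β ≠ 0 := by
    rintro rfl
    have hJ0 : ∀ n, J n ≤ 0 := fun n => le_of_tendsto_of_tendsto' (hJ n)
      (by simpa using hβ.const_mul _)
      fun q => integral_renewalFun_le hP hρ.le (Real.log_natCast_nonneg n) q.2
    exact (hasSum_le (fun n => mul_nonpos_of_nonneg_of_nonpos (tiltedWeight_pos hP hκ n).le (hJ0 n))
      hJsum hasSum_zero).not_gt (by positivity)
  have hlim := hα.div hβ hβ0
  rwa [← mul_right_cancel₀ (by positivity) hβα, div_self hβ0] at hlim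

end RenewalLimits

section LocalInverse

variable {f : ℝ → ℝ}

theorem isLittleO_sub_quadratic_of_contDiffAt {x₀ : ℝ} (hf : ContDiffAt ℝ 2 f x₀) :
    (fun x => f x - (f x₀ + deriv f x₀ * (x - x₀) + iteratedDeriv 2 f x₀ / 2 * (x - x₀) ^ 2))
      =o[𝓝 x₀] fun x => (x - x₀) ^ 2 := by
  obtain ⟨r, hr, hball⟩ := Metric.eventually_nhds_iff_ball.mp (hf.eventually (by simp))
  have hmem : x₀ ∈ Metric.ball x₀ r := Metric.mem_ball_self hr
  have htaylor := taylor_isLittleO (n := 2) (convex_ball x₀ r) hmem fun x hx =>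
    (hball x hx).contDiffWithinAt
  rw [Metric.isOpen_ball.nhdsWithin_eq hmem] at htaylor
  refine htaylor.congr_left fun x => ?_
  rw [taylorWithinEval_succ, taylorWithinEval_succ, taylor_within_zero_eval,
    iteratedDerivWithin_of_isOpen Metric.isOpen_ball hmem,
    iteratedDerivWithin_of_isOpen Metric.isOpen_ball hmem, iteratedDeriv_one]
  simp only [smul_eq_mul]
  norm_num
  ring

theorem exists_rightInverse_isLittleO_sub_quadratic (hf : ContDiffAt ℝ 2 f 0) (h0 : f 0 = 0)
    (h1 : deriv f 0 ≠ 0) :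
    ∃ g : ℝ → ℝ, Tendsto g (𝓝 0) (𝓝 0) ∧ (∀ᶠ w in 𝓝 0, f (g w) = w) ∧
      (fun w => g w - (w / deriv f 0 - iteratedDeriv 2 f 0 / (2 * deriv f 0 ^ 3) * w ^ 2))
        =o[𝓝 0] fun w => w ^ 2 := by
  set a := deriv f 0
  set b := iteratedDeriv 2 f 0
  have hstrict : HasStrictDerivAt f a 0 := hf.hasStrictDerivAt (by norm_num)
  set g := hstrict.localInverse f a 0 h1
  have hg : HasDerivAt g a⁻¹ 0 := h0 ▸ (hstrict.to_localInverse h1).hasDerivAt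
  have hfg : ∀ᶠ w in 𝓝 0, f (g w) = w := h0 ▸ hstrict.eventually_right_inverse h1
  have hg0 : g 0 = 0 := by
    have := (hstrict.eventually_left_inverse h1).self_of_nhds
    rwa [h0] at this
  have hgtendsto : Tendsto g (𝓝 0) (𝓝 0) := by simpa only [hg0] using hg.continuousAt.tendsto
  have hglin : (fun w => g w - w / a) =o[𝓝 0] fun w => w := by
    have := hasDerivAt_iff_isLittleO.mp hg
    simpa only [hg0, sub_zero, smul_eq_mul, ← div_eq_mul_inv] using this
  have hgO : g =O[𝓝 0] fun w => w := by
    simpa only [hg0, sub_zero] using hg.isBigO_sub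
  have hgsq : (fun w => g w ^ 2 - (w / a) ^ 2) =o[𝓝 0] fun w => w ^ 2 := by
    have hsum : (fun w => g w + w / a) =O[𝓝 0] fun w => w :=
      hgO.add ((isBigO_refl _ _).const_mul_left a⁻¹ |>.congr_left fun w => by ring)
    exact (hglin.mul_isBigO hsum).congr (fun w => by ring) fun w => by ring
  have htaylor : (fun w => f (g w) - (a * g w + b / 2 * g w ^ 2)) =o[𝓝 0] fun w => w ^ 2 := by
    have := (isLittleO_sub_quadratic_of_contDiffAt hf).comp_tendsto hgtendsto
    simp only [h0, sub_zero, zero_add] at this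
    exact this.trans_isBigO (hgO.pow 2)
  refine ⟨g, hgtendsto, hfg, ?_⟩
  -- `a (g w - w/a + b/(2a³) w²) = -(w - a g w - b/2 g²) - b/2 (g² - (w/a)²)` since `f (g w) = w`.
  have hcomb := (htaylor.add (hgsq.const_mul_left (b / 2))).const_mul_left (-a⁻¹)
  refine hcomb.congr' ?_ EventuallyEq.rfl
  filter_upwards [hfg] with w hw
  rw [hw]
  field_simp
  ring

end LocalInverse

section DiscreteMeasure

/-- The measure with mass `w i` at the point `i`; it is meant for nonnegative `w`, as
`ENNReal.ofReal` replaces negative masses by `0`. -/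
def discreteMeasure {ι : Type*} [MeasurableSpace ι] (w : ι → ℝ) : Measure ι :=
  Measure.sum fun i => ENNReal.ofReal (w i) • Measure.dirac i

variable {ι : Type*} [Countable ι] [MeasurableSpace ι] [MeasurableSingletonClass ι] {w f : ι → ℝ}

theorem integral_discreteMeasure (hw : ∀ i, 0 ≤ w i) (f : ι → ℝ) :
    ∫ i, f i ∂discreteMeasure w = ∑' i, w i * f i := by
  rw [discreteMeasure, integral_sum_dirac fun _ => ENNReal.ofReal_ne_top]
  simp only [ENNReal.toReal_ofReal (hw _), smul_eq_mul]

theorem integrable_discreteMeasure_iff (hw : ∀ i, 0 ≤ w i) :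
    Integrable f (discreteMeasure w) ↔ Summable fun i => w i * |f i| := by
  rw [discreteMeasure, integrable_sum_dirac_iff fun _ => ENNReal.ofReal_ne_top]
  simp only [ENNReal.toReal_ofReal (hw _), Real.norm_eq_abs]

end DiscreteMeasure

section DirichletMeasure

/-- The measure on `P` with mass `n^{-s}` at `n`: the Dirichlet series of `P`, shifted by `s`, is
the moment generating function of `-log n` under it. -/
def dirichletMeasure (P : Set ℕ) (s : ℝ) : Measure P :=
  discreteMeasure fun n : P => ((n : ℕ) : ℝ) ^ (-s)

variable {P : Set ℕ} {s : ℝ}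

theorem integral_dirichletMeasure (P : Set ℕ) (s : ℝ) (f : P → ℝ) :
    ∫ n, f n ∂dirichletMeasure P s = ∑' n : P, ((n : ℕ) : ℝ) ^ (-s) * f n :=
  integral_discreteMeasure (fun _ => by positivity) f

theorem integrable_dirichletMeasure_iff {f : P → ℝ} :
    Integrable f (dirichletMeasure P s) ↔
      Summable fun n : P => ((n : ℕ) : ℝ) ^ (-s) * |f n| :=
  integrable_discreteMeasure_iff fun _ => by positivity

theorem rpow_neg_mul_exp_mul_neg_log {n : ℕ} (hn : 0 < n) (s t : ℝ) :
    (n : ℝ) ^ (-s) * Real.exp (t * -Real.log n) = (n : ℝ) ^ (-(s + t)) := by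
  rw [rpow_neg_eq_exp_neg_mul_log hn, rpow_neg_eq_exp_neg_mul_log hn, ← Real.exp_add]
  ring_nf

theorem mgf_dirichletMeasure (hP : ∀ n ∈ P, 2 ≤ n) (s t : ℝ) :
    mgf (fun n : P => -Real.log (n : ℕ)) (dirichletMeasure P s) t = Pval P (s + t) := by
  rw [mgf, integral_dirichletMeasure]
  exact tsum_congr fun n => rpow_neg_mul_exp_mul_neg_log (two_pos.trans_le (hP n n.2)) s t

theorem zero_mem_interior_integrableExpSet_dirichletMeasure (hP : ∀ n ∈ P, 2 ≤ n)
    (h : kappa P < (s : EReal)) :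
    0 ∈ interior (integrableExpSet (fun n : P => -Real.log (n : ℕ)) (dirichletMeasure P s)) := by
  have hshift : Tendsto (fun t : ℝ => s + t) (𝓝 0) (𝓝 s) := by
    simpa only [add_zero] using (continuous_const_add s).tendsto 0
  rw [mem_interior_iff_mem_nhds]
  filter_upwards [hshift.eventually (eventually_kappa_lt h)] with t ht
  change Integrable _ _
  rw [integrable_dirichletMeasure_iff]
  refine (summable_of_kappa_lt hP ht).congr fun n => ?_
  rw [Real.abs_exp, rpow_neg_mul_exp_mul_neg_log (two_pos.trans_le (hP n n.2))]

variable {ρ : ℝ}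

theorem deriv_cgf_dirichletMeasure (hP : ∀ n ∈ P, 2 ≤ n) (h : kappa P < (ρ : EReal))
    (h1 : Pval P ρ = 1) :
    deriv (cgf (fun n : P => -Real.log (n : ℕ)) (dirichletMeasure P ρ)) 0 = Pderiv1 P ρ := by
  have hmass : mgf (fun n : P => -Real.log (n : ℕ)) (dirichletMeasure P ρ) 0 = 1 := by
    rw [mgf_dirichletMeasure hP, add_zero, h1]
  rw [deriv_cgf_zero (zero_mem_interior_integrableExpSet_dirichletMeasure hP h), ← mgf_zero',
    hmass, div_one, integral_dirichletMeasure, Pderiv1, ← tsum_neg]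
  simp only [mul_neg]

theorem iteratedDeriv_two_cgf_dirichletMeasure (hP : ∀ n ∈ P, 2 ≤ n)
    (h : kappa P < (ρ : EReal)) (h1 : Pval P ρ = 1) :
    iteratedDeriv 2 (cgf (fun n : P => -Real.log (n : ℕ)) (dirichletMeasure P ρ)) 0 =
      Pderiv2 P ρ - Pderiv1 P ρ ^ 2 := by
  rw [iteratedDeriv_two_cgf (zero_mem_interior_integrableExpSet_dirichletMeasure hP h),
    deriv_cgf_dirichletMeasure hP h h1, mgf_dirichletMeasure hP, add_zero, h1, div_one,
    integral_dirichletMeasure, Pderiv2]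
  simp only [zero_mul, Real.exp_zero, mul_one, neg_sq]

theorem summable_rpow_neg_mul_log_pow (hP : ∀ n ∈ P, 2 ≤ n) (h : kappa P < (s : EReal)) (k : ℕ) :
    Summable fun n : P => ((n : ℕ) : ℝ) ^ (-s) * Real.log (n : ℕ) ^ k := by
  have := integrable_pow_of_mem_interior_integrableExpSet
    (zero_mem_interior_integrableExpSet_dirichletMeasure hP h) k
  refine (integrable_dirichletMeasure_iff.mp this).congr fun n => ?_
  rw [abs_pow, abs_neg, abs_of_nonneg (Real.log_natCast_nonneg n)]

theorem Pderiv1_neg (hP : ∀ n ∈ P, 2 ≤ n) (hne : P.Nonempty) (h : kappa P < (s : EReal)) :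
    Pderiv1 P s < 0 := by
  obtain ⟨n, hn⟩ := hne
  have hsum := summable_rpow_neg_mul_log_pow hP h 1
  simp only [pow_one] at hsum
  refine neg_neg_of_pos (hsum.tsum_pos (fun m => ?_) ⟨n, hn⟩ ?_)
  · exact mul_nonneg (by positivity) (Real.log_natCast_nonneg m)
  · have : (1 : ℝ) < n := by exact_mod_cast hP n hn
    have := Real.log_pos this
    positivity

theorem Pderiv1_sq_lt_Pderiv2 (hP : ∀ n ∈ P, 2 ≤ n) (hP2 : P.Nontrivial)
    (h : kappa P < (ρ : EReal)) (h1 : Pval P ρ = 1) : Pderiv1 P ρ ^ 2 < Pderiv2 P ρ := by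
  have hmean := (summable_rpow_neg_mul_log_pow hP h 1).hasSum
  have hsquare := (summable_rpow_neg_mul_log_pow hP h 2).hasSum
  have hmass := (summable_of_kappa_lt hP h).hasSum
  rw [← Pval, h1] at hmass
  obtain ⟨m, hm, n, hn, hmn⟩ := hP2
  have hpos : ∀ {n}, n ∈ P → (0 : ℝ) < n := fun hn =>
    Nat.cast_pos.mpr (two_pos.trans_le (hP _ hn))
  obtain ⟨q, hq⟩ : ∃ q : P, Real.log (q : ℕ) - -Pderiv1 P ρ ≠ 0 := by
    by_contra! hall
    refine hmn (Nat.cast_injective (R := ℝ) (Real.log_injOn_pos (hpos hm) (hpos hn) ?_))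
    linarith [hall ⟨m, hm⟩, hall ⟨n, hn⟩]
  have hle := mul_sq_sub_add_sq_le_of_hasSum (fun n : P => by positivity) hmass
    (c := -Pderiv1 P ρ) (S := Pderiv2 P ρ) (f := fun n : P => Real.log (n : ℕ))
    (by simpa [Pderiv1] using hmean) (by simpa [Pderiv2] using hsquare) q
  have := mul_pos (Real.rpow_pos_of_pos (hpos q.2) (-ρ)) (sq_pos_of_ne_zero hq)
  nlinarith

theorem pow_three_mul_Pderiv2_sub_pos (hP : ∀ n ∈ P, 2 ≤ n) (hP2 : P.Nontrivial)
    (h : kappa P < (ρ : EReal)) (h1 : Pval P ρ = 1) {μ : ℝ} (hμ : μ = -1 / Pderiv1 P ρ) :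
    0 < μ ^ 3 * Pderiv2 P ρ - μ := by
  have hneg := Pderiv1_neg hP hP2.nonempty h
  have hμpos : 0 < μ := hμ ▸ div_pos_of_neg_of_neg neg_one_lt_zero hneg
  have heq : μ ^ 3 * Pderiv2 P ρ - μ = μ ^ 3 * (Pderiv2 P ρ - Pderiv1 P ρ ^ 2) := by
    rw [hμ]
    field_simp [hneg.ne]
    ring
  rw [heq]
  exact mul_pos (pow_pos hμpos 3) (sub_pos.mpr (Pderiv1_sq_lt_Pderiv2 hP hP2 h h1))

theorem exists_Pval_add_eq_exp_neg (hP : ∀ n ∈ P, 2 ≤ n) (hne : P.Nonempty)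
    (h : kappa P < (ρ : EReal)) (h1 : Pval P ρ = 1) {μ σ : ℝ} (hμ : μ = -1 / Pderiv1 P ρ)
    (hσ : σ ^ 2 = μ ^ 3 * Pderiv2 P ρ - μ) :
    ∃ g : ℝ → ℝ, Tendsto g (𝓝 0) (𝓝 0) ∧ (∀ᶠ u in 𝓝 0, Pval P (ρ + g u) = Real.exp (-u)) ∧
      (fun u => g u - (μ * u + σ ^ 2 / 2 * u ^ 2)) =o[𝓝 0] fun u => u ^ 2 := by
  set Λ := cgf (fun n : P => -Real.log (n : ℕ)) (dirichletMeasure P ρ)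
  have hΛ : ∀ t, Λ t = Real.log (Pval P (ρ + t)) := fun t => by
    rw [← mgf_dirichletMeasure hP]; rfl
  have hne0 := (Pderiv1_neg hP hne h).ne
  have hderiv : deriv (-Λ) 0 = -Pderiv1 P ρ := by
    rw [deriv.neg, deriv_cgf_dirichletMeasure hP h h1]
  have hderiv2 : iteratedDeriv 2 (-Λ) 0 = Pderiv1 P ρ ^ 2 - Pderiv2 P ρ := by
    rw [iteratedDeriv_neg, iteratedDeriv_two_cgf_dirichletMeasure hP h h1, neg_sub]
  have hsmooth : ContDiffAt ℝ 2 (-Λ) 0 :=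
    (analyticAt_cgf (zero_mem_interior_integrableExpSet_dirichletMeasure hP h)).contDiffAt.neg
  have hzero : (-Λ) 0 = 0 := by rw [Pi.neg_apply, hΛ, add_zero, h1, Real.log_one, neg_zero]
  obtain ⟨g, hg, hinv, hlittle⟩ := exists_rightInverse_isLittleO_sub_quadratic hsmooth hzero
    (by rwa [hderiv, neg_ne_zero])
  refine ⟨g, hg, ?_, hlittle.congr_left fun u => ?_⟩
  · have hshift : Tendsto (fun u => ρ + g u) (𝓝 0) (𝓝 ρ) := by
      simpa only [add_zero] using hg.const_add ρ
    filter_upwards [hinv, hshift.eventually (eventually_kappa_lt h)] with u hu hκ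
    rw [Pi.neg_apply, hΛ] at hu
    rw [← neg_eq_iff_eq_neg.mp hu, Real.exp_log (Pval_pos hP hne hκ)]
  · rw [hderiv, hderiv2, hσ, hμ]
    field_simp
    ring

end DirichletMeasure

section NumberOfFactors

/-- The law of `Y_N`, the number of factors in a uniformly random ordered `P`-factorization of an
integer in `[1, N]`. -/
def factorCountLaw (P : Set ℕ) (N : ℕ) : Measure ℕ :=
  discreteMeasure fun m => tupleCount P m N / Acum P N

variable {P : Set ℕ} {ρ μ σ t : ℝ} {N : ℕ}

theorem tupleCount_div_Acum_nonneg (hP : ∀ n ∈ P, 2 ≤ n) (m N : ℕ) :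
    0 ≤ (tupleCount P m N : ℝ) / Acum P N := by
  rw [Acum_eq_factorGenFun_one hP, factorGenFun]
  positivity

theorem integral_factorCountLaw (hP : ∀ n ∈ P, 2 ≤ n) (N : ℕ) (f : ℕ → ℝ) :
    ∫ m, f m ∂factorCountLaw P N =
      (∑ n ∈ Finset.Icc 1 N, ∑' m : ℕ, (af P m n : ℝ) * f m) / Acum P N := by
  rw [factorCountLaw, integral_discreteMeasure fun m => tupleCount_div_Acum_nonneg hP m N,
    sum_tsum_af_mul hP, Finset.sum_div, tsum_eq_sum fun m hm => ?_]
  · exact Finset.sum_congr rfl fun m _ => div_mul_eq_mul_div _ _ _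
  · rw [tupleCount_eq_zero_of_le hP (not_lt.mp (Finset.mem_range.not.mp hm)), Nat.cast_zero,
      zero_div, zero_mul]

theorem integrable_factorCountLaw (hP : ∀ n ∈ P, 2 ≤ n) (N : ℕ) (f : ℕ → ℝ) :
    Integrable f (factorCountLaw P N) := by
  rw [factorCountLaw, integrable_discreteMeasure_iff fun m => tupleCount_div_Acum_nonneg hP m N]
  refine summable_of_ne_finset_zero (s := Finset.range N) fun m hm => ?_
  rw [tupleCount_eq_zero_of_le hP (not_lt.mp (Finset.mem_range.not.mp hm)), Nat.cast_zero,
    zero_div, zero_mul]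

theorem mgf_factorCountLaw (hP : ∀ n ∈ P, 2 ≤ n) (N : ℕ) (t : ℝ) :
    mgf (fun m : ℕ => (m : ℝ)) (factorCountLaw P N) t =
      factorGenFun P (Real.exp t) N / factorGenFun P 1 N := by
  rw [mgf, integral_factorCountLaw hP, sum_tsum_af_mul hP, Acum_eq_factorGenFun_one hP]
  simp only [mul_comm t, Real.exp_nat_mul, factorGenFun]

theorem mgf_sub_div {Ω : Type*} [MeasurableSpace Ω] (X : Ω → ℝ) (m : Measure Ω) (a c t : ℝ) :
    mgf (fun ω => (X ω - a) / c) m t = Real.exp (-(t / c * a)) * mgf X m (t / c) := by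
  rw [mgf, mgf, ← integral_const_mul]
  refine integral_congr_ae (.of_forall fun ω => ?_)
  simp only [← Real.exp_add]
  ring_nf

theorem factorGenFun_eq_exp_mul_renewalFun (P : Set ℕ) (s : ℝ) (hN : 1 ≤ N) :
    factorGenFun P (Pval P s)⁻¹ N = Real.exp (s * Real.log N) * renewalFun P s (Real.log N) := by
  rw [renewalFun, Real.exp_log (Nat.cast_pos.mpr hN), Nat.floor_natCast, ← mul_assoc,
    ← Real.exp_add, ← add_mul, add_neg_cancel, zero_mul, Real.exp_zero, one_mul]

theorem mgf_factorCountLaw_eq_renewalFun (hP : ∀ n ∈ P, 2 ≤ n) (h1 : Pval P ρ = 1) {s u : ℝ}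
    (hs : Pval P s = Real.exp (-u)) (hN : 1 ≤ N) :
    mgf (fun m : ℕ => (m : ℝ)) (factorCountLaw P N) u =
      Real.exp ((s - ρ) * Real.log N) *
        (renewalFun P s (Real.log N) / renewalFun P ρ (Real.log N)) := by
  have hnum := factorGenFun_eq_exp_mul_renewalFun P s hN
  have hden := factorGenFun_eq_exp_mul_renewalFun P ρ hN
  rw [hs, ← Real.exp_neg, neg_neg] at hnum
  rw [h1, inv_one] at hden
  rw [mgf_factorCountLaw hP, hnum, hden, mul_div_mul_comm, ← Real.exp_sub, ← sub_mul]

theorem tendsto_div_mul_sqrt_atTop (t σ : ℝ) :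
    Tendsto (fun x => t / (σ * √x)) atTop (𝓝 0) := by
  simpa only [div_mul_eq_div_div] using Real.tendsto_sqrt_atTop.const_div_atTop (t / σ)

theorem tendsto_mul_of_isLittleO_sub_quadratic {g : ℝ → ℝ}
    (hg : (fun u => g u - (μ * u + σ ^ 2 / 2 * u ^ 2)) =o[𝓝 0] fun u => u ^ 2) (hσ : σ ≠ 0)
    (t : ℝ) :
    Tendsto (fun x => (g (t / (σ * √x)) - μ * (t / (σ * √x))) * x) atTop (𝓝 (t ^ 2 / 2)) := by
  have hsq : ∀ᶠ x : ℝ in atTop, (t / (σ * √x)) ^ 2 * x = (t / σ) ^ 2 := by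
    filter_upwards [eventually_gt_atTop 0] with x hx
    rw [div_pow, mul_pow, Real.sq_sqrt hx.le]
    field_simp
  have hrem : Tendsto (fun x => (g (t / (σ * √x)) -
      (μ * (t / (σ * √x)) + σ ^ 2 / 2 * (t / (σ * √x)) ^ 2)) * x) atTop (𝓝 0) := by
    have hbig : (fun x => (t / (σ * √x)) ^ 2 * x) =O[atTop] fun _ => (1 : ℝ) :=
      (isBigO_const_const _ one_ne_zero _).congr' (EventuallyEq.symm hsq) EventuallyEq.rfl
    exact (isLittleO_one_iff ℝ).mp
      (((hg.comp_tendsto (tendsto_div_mul_sqrt_atTop t σ)).mul_isBigO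
        (isBigO_refl _ _)).trans_isBigO hbig)
  have hmain : t ^ 2 / 2 = 0 + σ ^ 2 / 2 * (t / σ) ^ 2 := by field_simp; ring
  rw [hmain]
  refine (hrem.add tendsto_const_nhds).congr' ?_
  filter_upwards [hsq] with x hx
  rw [← hx]
  ring

theorem tendsto_mgf_factorCountLaw (hP : ∀ n ∈ P, 2 ≤ n) (hne : P.Nonempty) (hρ0 : 0 < ρ)
    (hρκ : kappa P < (ρ : EReal)) (hρ1 : Pval P ρ = 1) (hμ : μ = -1 / Pderiv1 P ρ)
    (hσ0 : σ ≠ 0) (hσ : σ ^ 2 = μ ^ 3 * Pderiv2 P ρ - μ) (t : ℝ) :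
    Tendsto (fun N : ℕ => mgf (fun m : ℕ => (m - μ * Real.log N) / (σ * √(Real.log N)))
      (factorCountLaw P N) t) atTop (𝓝 (Real.exp (t ^ 2 / 2))) := by
  obtain ⟨g, hg0, hgP, hg⟩ := exists_Pval_add_eq_exp_neg hP hne hρκ hρ1 hμ hσ
  have hlog : Tendsto (fun N : ℕ => Real.log N) atTop atTop :=
    Real.tendsto_log_atTop.comp tendsto_natCast_atTop_atTop
  have hu : Tendsto (fun N : ℕ => t / (σ * √(Real.log N))) atTop (𝓝 0) :=
    (tendsto_div_mul_sqrt_atTop t σ).comp hlog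
  have hs : Tendsto (fun N : ℕ => ρ + g (t / (σ * √(Real.log N)))) atTop (𝓝 ρ) := by
    simpa only [add_zero, Function.comp_apply] using (hg0.comp hu).const_add ρ
  have hratio := (tendsto_renewalFun_div_renewalFun hP hne hρκ hρ0).comp (hs.prodMk hlog)
  have hexp := (Real.continuous_exp.tendsto _).comp
    ((tendsto_mul_of_isLittleO_sub_quadratic hg hσ0 t).comp hlog)
  rw [← mul_one (Real.exp (t ^ 2 / 2))]
  refine (hexp.mul hratio).congr' ?_
  filter_upwards [hu.eventually hgP, eventually_ge_atTop 1] with N hN hN1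
  rw [mgf_sub_div, mgf_factorCountLaw_eq_renewalFun hP hρ1 hN hN1, ← mul_assoc, ← Real.exp_add]
  simp only [Function.comp_apply]
  ring_nf

end NumberOfFactors

/-- **Convergence of all normalized central moments.** For every integer `k ≥ 0`, the
`k`-th normalized central moment of `Y_N` converges to the `k`-th moment of the standard
normal distribution: `k!/((k/2)! 2^{k/2})` for even `k` and `0` for odd `k`. -/
theorem ordered_factorizations_central_moments
    (P : Set ℕ) (hP : ∀ n ∈ P, 2 ≤ n) (hP2 : P.Nontrivial)
    (hκ : 1 < PvalE P (kappa P))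
    (ρ : ℝ) (hρ0 : 0 < ρ) (hρκ : kappa P < (ρ : EReal)) (hρ1 : Pval P ρ = 1)
    (μ σ : ℝ) (hμ : μ = -1 / Pderiv1 P ρ)
    (hσ0 : 0 ≤ σ) (hσ : σ ^ 2 = μ ^ 3 * Pderiv2 P ρ - μ)
    (k : ℕ) :
    Tendsto (fun N : ℕ =>
        (∑ n ∈ Finset.Icc 1 N, ∑' m : ℕ, (af P m n : ℝ) *
            (((m : ℝ) - μ * Real.log N) / (σ * Real.sqrt (Real.log N))) ^ k) / Acum P N)
      atTop
      (nhds (if Even k then (Nat.factorial k : ℝ) / (Nat.factorial (k / 2) * 2 ^ (k / 2))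
        else 0)) := by
  have hσne : σ ≠ 0 := pow_ne_zero_iff two_ne_zero |>.mp
    (hσ ▸ (pow_three_mul_Pderiv2_sub_pos hP hP2 hρκ hρ1 hμ).ne')
  have hgauss : ∀ t : ℝ, mgf id (gaussianReal 0 1) t = Real.exp (t ^ 2 / 2) := fun t => by
    simp [mgf_id_gaussianReal]
  simp only [← integral_factorCountLaw hP, ← integral_pow_gaussianReal]
  refine tendsto_integral_pow_of_tendsto_mgf (Y := id)
    (fun N _ => integrable_factorCountLaw hP N _) integrable_exp_mul_gaussianReal (fun t => ?_) k
  rw [hgauss]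
  exact tendsto_mgf_factorCountLaw hP hP2.nonempty hρ0 hρκ hρ1 hμ hσne hσ t
end
end
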